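/- Let G be a finite group acting linearly on the sphere S^n via an orthogonal representation ρ : G → O(n+1), suppose S^n is G-connected and the fixed point set (S^n)^G is the great k-sphere S^k with 0 < k < n. If the orbit space S^n/G (with the quotient topology) is neither contractible nor homotopy equivalent to an odd-dimensional sphere, then TC^G(S^n) = 3. -/

import Mathlib

open Set unitInterval

namespace PaperTC

variable {G X : Type*}

/-- The orbit of `x` under the action `act`. -/
def orbit (act : G → X → X) (x : X) : Set X := {y | ∃ g, act g x = y}

/-- The fixed point set of the action `act`. -/
def fixedSet (act : G → X → X) : Set X := {x | ∀ g, act g x = x}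

/-- The fixed point set of a subset `S` of the acting group. -/
def fixedSetOf (act : G → X → X) (S : Set G) : Set X := {x | ∀ g ∈ S, act g x = x}

/-- `minCover P` is the least `k ≥ 1` satisfying `P k`, as an element of `ℕ∞`
(equal to `∞` if there is no such `k`). -/
noncomputable def minCover (P : ℕ → Prop) : ℕ∞ :=
  sInf {k : ℕ∞ | ∃ m : ℕ, k = m ∧ 1 ≤ m ∧ P m}

section Plain

variable (Y : Type*) [TopologicalSpace Y]

/-- `Y × Y` can be covered by `k` open sets each admitting a motion planner. -/
def TCcover (k : ℕ) : Prop :=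
  ∃ U : Fin k → Set (Y × Y),
    (∀ i, IsOpen (U i)) ∧ (⋃ i, U i) = univ ∧
    ∀ i, ∃ s : Y × Y → C(I, Y),
      ContinuousOn s (U i) ∧ ∀ p ∈ U i, s p 0 = p.1 ∧ s p 1 = p.2

/-- Topological complexity (non-reduced, possibly infinite). -/
noncomputable def TC : ℕ∞ := minCover (TCcover Y)

/-- `Y` can be covered by `k` open sets, each of which can be deformed within `Y`
to a point. -/
def catCover (k : ℕ) : Prop :=
  ∃ U : Fin k → Set Y,
    (∀ i, IsOpen (U i)) ∧ (⋃ i, U i) = univ ∧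
    ∀ i, ∃ H : Y × I → Y,
      ContinuousOn H (U i ×ˢ (univ : Set I)) ∧ (∀ x ∈ U i, H (x, 0) = x) ∧
      ∃ y₀, ∀ x ∈ U i, H (x, 1) = y₀

/-- Non-reduced Lusternik–Schnirelmann category. -/
noncomputable def cat : ℕ∞ := minCover (catCover Y)

end Plain

section Equivariant

variable [TopologicalSpace X] (act : G → X → X)

/-- `X × X` can be covered by `k` invariant open sets each admitting an
equivariant motion planner. -/
def eqTCcover (k : ℕ) : Prop :=
  ∃ U : Fin k → Set (X × X),
    (∀ i, IsOpen (U i)) ∧ (⋃ i, U i) = univ ∧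
    ∀ i, (∀ g p, p ∈ U i → (act g p.1, act g p.2) ∈ U i) ∧
      ∃ s : X × X → C(I, X),
        ContinuousOn s (U i) ∧
        (∀ p ∈ U i, s p 0 = p.1 ∧ s p 1 = p.2) ∧
        (∀ g p, p ∈ U i → ∀ t : I, s (act g p.1, act g p.2) t = act g (s p t))

/-- Equivariant topological complexity `TC_G` of Colman and Grant. -/
noncomputable def eqTC : ℕ∞ := minCover (eqTCcover act)

/-- `X × X` can be covered by `k` `(G × G)`-invariant open sets, each admitting a
`(G × G)`-equivariant section of `π^G : P X ×_{X/G} P X → X × X`; such a section is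
recorded by a pair of paths `s₁ p`, `s₂ p`, with the orbit of the endpoint of the first
equal to the orbit of the starting point of the second. -/
def invTCcover (k : ℕ) : Prop :=
  ∃ U : Fin k → Set (X × X),
    (∀ i, IsOpen (U i)) ∧ (⋃ i, U i) = univ ∧
    ∀ i, (∀ g₁ g₂ : G, ∀ p, p ∈ U i → (act g₁ p.1, act g₂ p.2) ∈ U i) ∧
      ∃ s₁ s₂ : X × X → C(I, X),
        ContinuousOn s₁ (U i) ∧ ContinuousOn s₂ (U i) ∧
        (∀ p ∈ U i, s₁ p 0 = p.1 ∧ s₂ p 1 = p.2 ∧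
          orbit act (s₁ p 1) = orbit act (s₂ p 0)) ∧
        (∀ g₁ g₂ : G, ∀ p, p ∈ U i → ∀ t : I,
          s₁ (act g₁ p.1, act g₂ p.2) t = act g₁ (s₁ p t) ∧
          s₂ (act g₁ p.1, act g₂ p.2) t = act g₂ (s₂ p t))

/-- Invariant topological complexity `TC^G` of Lubawski and Marzantowicz. -/
noncomputable def invTC : ℕ∞ := minCover (invTCcover act)

/-- The invariant open set `U` is `G`-compressible into `A`: the inclusion `U ↪ X` is
`G`-equivariantly homotopic to a `G`-map with values in `A`. -/
def GCompressible (A : Set X) (U : Set X) : Prop :=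
  (∀ g x, x ∈ U → act g x ∈ U) ∧
  ∃ H : X × I → X,
    ContinuousOn H (U ×ˢ (univ : Set I)) ∧ (∀ x ∈ U, H (x, 0) = x) ∧
    (∀ g x, x ∈ U → ∀ t : I, H (act g x, t) = act g (H (x, t))) ∧
    (∀ x ∈ U, H (x, 1) ∈ A)

/-- A `G`-categorical set: compressible into a single orbit. -/
def GCategorical (U : Set X) : Prop :=
  ∃ x₀ : X, GCompressible act (orbit act x₀) U

/-- `X` can be covered by `k` open `G`-categorical sets. -/
def catGCover (k : ℕ) : Prop :=
  ∃ U : Fin k → Set X,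
    (∀ i, IsOpen (U i)) ∧ (⋃ i, U i) = univ ∧ ∀ i, GCategorical act (U i)

/-- Equivariant Lusternik–Schnirelmann category `cat_G`. -/
noncomputable def catG : ℕ∞ := minCover (catGCover act)

/-- `X` can be covered by `k` open sets `G`-compressible into `{star}`. -/
def pointedCatGCover (star : X) (k : ℕ) : Prop :=
  ∃ U : Fin k → Set X,
    (∀ i, IsOpen (U i)) ∧ (⋃ i, U i) = univ ∧
    ∀ i, GCompressible act {star} (U i)

/-- The pointed equivariant category `_{{⋆}}cat_G(X)`. -/
noncomputable def pointedCatG (star : X) : ℕ∞ := minCover (pointedCatGCover act star)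

/-- `X` is `G`-contractible: the identity is `G`-homotopic to a map with values in a
single orbit. -/
def GContractible : Prop :=
  ∃ H : X × I → X,
    Continuous H ∧ (∀ x, H (x, 0) = x) ∧
    (∀ g x, ∀ t : I, H (act g x, t) = act g (H (x, t))) ∧
    ∃ x₀ : X, ∀ x, H (x, 1) ∈ orbit act x₀

end Equivariant

/-- The orbit space `X/G` with the quotient topology. -/
abbrev OrbitSpace (act : G → X → X) : Type _ := Quot (fun x y => ∃ g, act g x = y)

end PaperTC
namespace PaperTC

/-- The unit sphere `S^n ⊆ ℝ^{n+1}` (with the Euclidean metric). -/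
abbrev Sph (n : ℕ) : Set (EuclideanSpace ℝ (Fin (n + 1))) := Metric.sphere 0 1

/-- The action of `G` on the unit sphere `S^n` obtained by restricting an orthogonal
representation of `G` on `ℝ^{n+1}`. -/
noncomputable def sphereAct {G : Type*} [Monoid G] {n : ℕ}
    (ρ : G →* (EuclideanSpace ℝ (Fin (n + 1)) ≃ₗᵢ[ℝ] EuclideanSpace ℝ (Fin (n + 1)))) :
    G → ↥(Sph n) → ↥(Sph n) := fun g x =>
  ⟨ρ g x, mem_sphere_zero_iff_norm.mpr (by
    rw [(ρ g).norm_map]; exact mem_sphere_zero_iff_norm.mp x.2)⟩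

end PaperTC

open PaperTC

namespace LC
open List

/-- coboundary on list cochains -/
def dl {X : Type*} (φ : List X → ℤ) : List X → ℤ
  | [] => 0
  | x :: l => φ l - dl (fun l => φ (x :: l)) l

/-- shuffle product evaluation -/
def EP {X Y : Type*} : List X → List Y → (List (X × Y) → ℤ) → ℤ
  | [], [], _ => 0
  | [], [_], φ => φ []
  | [], _ :: _ :: _, _ => 0
  | _ :: _, [], _ => 0
  | x :: a, y :: b, φ => EP a (y :: b) (fun l => φ ((x, y) :: l)) +
      (-1) ^ a.length * EP (x :: a) b (fun l => φ ((x, y) :: l))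
termination_by a b => a.length + b.length

variable {X Y Z : Type*}

lemma dl_add (φ ψ : List X → ℤ) (l : List X) :
    dl (fun l => φ l + ψ l) l = dl φ l + dl ψ l := by
  induction l generalizing φ ψ with
  | nil => simp [dl]
  | cons x l ih => simp only [dl, ih]; ring

lemma dl_smul (c : ℤ) (φ : List X → ℤ) (l : List X) :
    dl (fun l => c * φ l) l = c * dl φ l := by
  induction l generalizing φ with
  | nil => simp [dl]
  | cons x l ih => simp only [dl, ih]; ring

lemma dl_sub (φ ψ : List X → ℤ) (l : List X) :
    dl (fun l => φ l - ψ l) l = dl φ l - dl ψ l := by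
  induction l generalizing φ ψ with
  | nil => simp [dl]
  | cons x l ih => simp only [dl, ih]; ring

lemma dl_dl (φ : List X → ℤ) (l : List X) : dl (dl φ) l = 0 := by
  induction l generalizing φ with
  | nil => simp [dl]
  | cons x l ih =>
    simp only [dl]
    have := dl_sub φ (dl (fun l => φ (x :: l))) l
    rw [this, ih]; ring

/-- `dl` only sees sublists of length one less. -/
lemma dl_congr {φ ψ : List X → ℤ} {l : List X}
    (h : ∀ l', l' <+ l → l'.length + 1 = l.length → φ l' = ψ l') : dl φ l = dl ψ l := by
  induction l generalizing φ ψ with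
  | nil => simp [dl]
  | cons x l ih =>
    simp only [dl]
    rw [h l (List.sublist_cons_self x l) (by simp), ih]
    intro l' h1 h2
    exact h _ (h1.cons_cons x) (by simp [h2])

lemma dl_map (f : X → Y) (φ : List Y → ℤ) (l : List X) :
    dl (fun l => φ (l.map f)) l = dl φ (l.map f) := by
  induction l generalizing φ with
  | nil => simp [dl]
  | cons x l ih => simp only [dl, List.map_cons]; rw [ih (fun l => φ (f x :: l))]

lemma EP_add (a : List X) (b : List Y) (φ ψ : List (X × Y) → ℤ) :
    EP a b (fun l => φ l + ψ l) = EP a b φ + EP a b ψ := by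
  fun_induction EP a b φ generalizing ψ with
  | case1 => simp [EP]
  | case2 => simp [EP]
  | case3 => simp [EP]
  | case4 => simp [EP]
  | case5 x a y b φ ih1 ih2 => simp only [EP, ih1, ih2]; ring

lemma EP_smul (a : List X) (b : List Y) (c : ℤ) (φ : List (X × Y) → ℤ) :
    EP a b (fun l => c * φ l) = c * EP a b φ := by
  fun_induction EP a b φ with
  | case1 => simp [EP]
  | case2 => simp [EP]
  | case3 => simp [EP]
  | case4 => simp [EP]
  | case5 x a y b φ ih1 ih2 => simp only [EP, ih1, ih2]; ring

lemma EP_sub (a : List X) (b : List Y) (φ ψ : List (X × Y) → ℤ) :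
    EP a b (fun l => φ l - ψ l) = EP a b φ - EP a b ψ := by
  have := EP_add a b φ (fun l => (-1) * ψ l)
  rw [EP_smul] at this
  simp only [neg_mul, one_mul, ← sub_eq_add_neg] at this
  exact this

lemma EP_nil_right (a : List X) (φ : List (X × Y) → ℤ) : EP a [] φ = 0 := by
  cases a <;> simp [EP]

lemma EP_congr {a : List X} {b : List Y} {φ ψ : List (X × Y) → ℤ}
    (h : ∀ l, l.length + 1 = a.length + b.length → (∀ p ∈ l, p.1 ∈ a ∧ p.2 ∈ b) →
      φ l = ψ l) : EP a b φ = EP a b ψ := by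
  fun_induction EP a b φ generalizing ψ with
  | case1 => simp [EP]
  | case2 => simp [EP]; exact h [] (by simp) (by simp)
  | case3 => simp [EP]
  | case4 => simp [EP]
  | case5 x a y b φ ih1 ih2 =>
    simp only [EP]
    rw [ih1 (ψ := fun l => ψ ((x, y) :: l)), ih2 (ψ := fun l => ψ ((x, y) :: l))]
    · intro l hl hm
      refine h _ (by simp at hl ⊢; omega) ?_
      intro p hp
      rcases List.mem_cons.1 hp with rfl | hp
      · simp
      · exact ⟨(hm p hp).1, List.mem_cons_of_mem _ (hm p hp).2⟩
    · intro l hl hm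
      refine h _ (by simp at hl ⊢; omega) ?_
      intro p hp
      rcases List.mem_cons.1 hp with rfl | hp
      · simp
      · exact ⟨List.mem_cons_of_mem _ (hm p hp).1, (hm p hp).2⟩

lemma EP_zero (a : List X) (b : List Y) : EP a b (fun _ => 0) = 0 := by
  have := EP_smul a b 0 (fun _ => 0)
  simpa using this

lemma EP_eq_zero {a : List X} {b : List Y} {φ : List (X × Y) → ℤ}
    (h : ∀ l, l.length + 1 = a.length + b.length → (∀ p ∈ l, p.1 ∈ a ∧ p.2 ∈ b) →
      φ l = 0) : EP a b φ = 0 := by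
  rw [EP_congr (ψ := fun _ => 0) h, EP_zero]

lemma EP_cons_zero {x : X} {y : Y} {a : List X} {b : List Y} {φ : List (X × Y) → ℤ}
    (h : ∀ l, φ ((x, y) :: l) = 0) : EP (x :: a) (y :: b) φ = 0 := by
  simp only [EP, h, EP_zero]; simp

lemma EP_singleton_right (a : List X) (ha : a ≠ []) (y : Y) (φ : List (X × Y) → ℤ) :
    EP a [y] φ = φ (a.map (fun x => (x, y))) := by
  induction a generalizing φ with
  | nil => simp at ha
  | cons x a ih =>
    simp only [EP, mul_zero, add_zero, List.map_cons]
    cases a with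
    | nil => simp [EP]
    | cons x' a => rw [ih (by simp)]

lemma EP_singleton_left (b : List Y) (hb : b ≠ []) (x : X) (φ : List (X × Y) → ℤ) :
    EP [x] b φ = φ (b.map (fun y => (x, y))) := by
  induction b generalizing φ with
  | nil => simp at hb
  | cons y b ih =>
    cases b with
    | nil => simp [EP]
    | cons y' b =>
      rw [EP, ih (by simp)]
      simp [EP]

lemma dl_zero_of {φ : List X → ℤ} {l : List X}
    (h : ∀ l', l' <+ l → l'.length + 1 = l.length → φ l' = 0) : dl φ l = 0 := by
  rw [dl_congr (ψ := fun _ => 0 * 0) h, dl_smul]; simp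

/-- the boundary formula for the shuffle product -/
lemma EP_dl (a : List X) (b : List Y) (φ : List (X × Y) → ℤ) :
    EP a b (dl φ) = dl (fun a => EP a b φ) a +
      (-1) ^ (a.length + 1) * dl (fun b => EP a b φ) b := by
  induction hn : a.length + b.length using Nat.strong_induction_on generalizing a b φ with
  | _ n ih =>
  subst hn
  match a, b with
  | a, [] =>
    simp only [EP_nil_right, dl, mul_zero, add_zero]
    rw [dl_zero_of]; simp
  | [], [y] => simp [EP, dl]
  | [], [y, y'] => simp [EP, dl]
  | [], y :: y' :: y'' :: b =>
    simp only [EP, dl, zero_sub, neg_zero, sub_zero]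
    rw [dl_zero_of (l := b)]; · simp
    intro l' _ h; simp [EP]
  | x :: A, y :: B =>
    have e1 := ih _ (by simp) A (y :: B) (fun l => φ ((x, y) :: l)) rfl
    have e2 := ih _ (by simp) (x :: A) B (fun l => φ ((x, y) :: l)) rfl
    have hA : dl (fun A' => EP (x :: A') (y :: B) φ) A =
        dl (fun a => EP a (y :: B) (fun l => φ ((x, y) :: l))) A -
        (-1) ^ A.length * dl (fun A' => EP (x :: A') B (fun l => φ ((x, y) :: l))) A := by
      rw [← dl_smul, ← dl_sub]
      apply dl_congr
      intro l' _ hl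
      simp only [EP]
      rw [← hl, pow_succ]; ring
    have hB : dl (fun B' => EP (x :: A) (y :: B') φ) B =
        dl (fun B' => EP A (y :: B') (fun l => φ ((x, y) :: l))) B +
        (-1) ^ A.length * dl (fun B' => EP (x :: A) B' (fun l => φ ((x, y) :: l))) B := by
      rw [← dl_smul, ← dl_add]
      apply dl_congr
      intro l' _ hl
      simp only [EP]
    simp only [dl] at e1 e2 ⊢
    rw [hA, hB]
    rw [EP]
    simp only [dl, EP_sub]
    rw [e1, e2]
    simp only [List.length_cons, pow_succ]
    ring

end LC

namespace LC
open List
variable {X Y Z : Type*}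

/-- cup product of list cochains -/
def cup (p : ℕ) (φ ψ : List X → ℤ) (l : List X) : ℤ := φ (l.take (p + 1)) * ψ (l.drop p)

lemma cup_leib (p : ℕ) (φ ψ : List X → ℤ) (l : List X) (hl : p + 2 ≤ l.length) :
    dl (cup p φ ψ) l = cup (p + 1) (dl φ) ψ l + (-1) ^ p * cup p φ (dl ψ) l := by
  induction p generalizing φ l with
  | zero =>
    match l, hl with
    | x :: y :: r, _ =>
      simp only [dl, cup]
      have : dl (fun l => φ [x] * ψ (x :: y :: l)) r =
         φ [x] * dl (fun l => ψ (x :: y :: l)) r := by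
        rw [← dl_smul]
      simp [dl, this]; ring
  | succ p ih =>
    match l, hl with
    | x :: l, hl =>
      have h1 := ih (fun l => φ (x :: l)) l (by simpa using hl)
      simp only [dl, cup, take_succ_cons, drop_succ_cons] at h1 ⊢
      have h2 : dl (fun l => φ (x :: take (p + 1) l) * ψ (drop p l)) l =
        dl (cup p (fun l => φ (x :: l)) ψ) l := rfl
      rw [h2, h1]; ring

/-- sign cochains with a terminal weight -/
def Wb : List (X → ℤ) → (X → ℤ) → List X → ℤ
  | [], b, [q] => b q
  | sg :: σs, b, q :: q' :: l => (sg q' - sg q) * Wb σs b (q' :: l)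
  | _, _, _ => 0

lemma Wb_len {σs : List (X → ℤ)} {b : X → ℤ} {l : List X} (h : l.length ≠ σs.length + 1) :
    Wb σs b l = 0 := by
  fun_induction Wb σs b l with
  | case1 => simp at h
  | case2 b sg σs q q' l ih => rw [ih (by simpa using h)]; simp
  | case3 => rfl

lemma Wb_congr {σs τs : List (X → ℤ)} {b b' : X → ℤ} {l : List X}
    (h : List.Forall₂ (fun sg τ => ∀ q ∈ l, sg q = τ q) σs τs) (hb : ∀ q ∈ l, b q = b' q) :
    Wb σs b l = Wb τs b' l := by
  induction l generalizing σs τs with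
  | nil => cases h <;> simp [Wb]
  | cons q l ih =>
    cases h with
    | nil => cases l <;> simp [Wb]; exact hb _ (by simp)
    | cons h1 h2 =>
      cases l with
      | nil => simp [Wb]
      | cons q' l =>
        simp only [Wb]
        rw [ih, h1 q (by simp), h1 q' (by simp)]
        · exact h2.imp fun _ _ h q hq => h q (List.mem_cons_of_mem _ hq)
        · exact fun q hq => hb q (List.mem_cons_of_mem _ hq)

lemma Wb_map (f : X → Y) (σs : List (Y → ℤ)) (b : Y → ℤ) (l : List X) :
    Wb σs b (l.map f) = Wb (σs.map (fun sg x => sg (f x))) (fun x => b (f x)) l := by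
  induction l generalizing σs with
  | nil => cases σs <;> simp [Wb]
  | cons q l ih =>
    cases σs with
    | nil => cases l <;> simp [Wb]
    | cons sg σs =>
      cases l with
      | nil => simp [Wb]
      | cons q' l => simp only [Wb, List.map_cons]; have := ih σs; simp only [map_cons] at this; rw [this]

lemma Wb_const {σs : List (X → ℤ)} {b : X → ℤ} {l : List X}
    (h : ∃ sg ∈ σs, ∀ p ∈ l, ∀ q ∈ l, sg p = sg q) : Wb σs b l = 0 := by
  induction l generalizing σs with
  | nil => cases σs <;> simp [Wb]
  | cons q l ih =>
    cases σs with
    | nil => simp at h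
    | cons sg σs =>
      cases l with
      | nil => simp [Wb]
      | cons q' l =>
        simp only [Wb]
        obtain ⟨τ, hτ, h⟩ := h
        rcases List.mem_cons.1 hτ with rfl | hτ
        · rw [h q' (by simp) q (by simp)]; simp
        · rw [ih ⟨τ, hτ, fun p hp q hq => h p (mem_cons_of_mem _ hp) q (mem_cons_of_mem _ hq)⟩]
          simp

lemma dl_Wb (σs : List (X → ℤ)) (b : X → ℤ) (l : List X) (hl : 2 ≤ l.length) :
    dl (Wb σs b) l = (-1) ^ σs.length * Wb (σs ++ [b]) (fun _ => 1) l := by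
  induction l generalizing σs with
  | nil => simp at hl
  | cons q l ih =>
    match l, hl with
    | [q'], _ =>
      cases σs with
      | nil => simp [dl, Wb]
      | cons sg σs => cases σs <;> simp [dl, Wb]
    | q' :: q'' :: l, _ =>
      cases σs with
      | nil =>
        have : dl (fun _ : List X => (0 : ℤ)) l = 0 := dl_zero_of (by intros; rfl)
        simp [dl, Wb, this]
      | cons sg σs =>
        have := ih σs (by simp)
        simp only [dl, Wb, List.cons_append] at this ⊢
        rw [dl_smul (sg q' - sg q) (fun l => Wb σs b (q' :: q'' :: l)) l]
        simp only [List.length_cons, pow_succ]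
        linear_combination (-(sg q' - sg q)) * this

/-- no repeats: vanishing on lists with equal neighbours -/
def NR (φ : List X → ℤ) : Prop := ∀ l, ¬ l.IsChain (· ≠ ·) → φ l = 0

lemma NR.cons {φ : List X → ℤ} (h : NR φ) (x : X) : NR (fun l => φ (x :: l)) := by
  intro l hl
  exact h _ (fun h' => hl h'.of_cons)

lemma NR.rep {φ : List X → ℤ} (h : NR φ) (x : X) (l : List X) : φ (x :: x :: l) = 0 :=
  h _ (by simp)

lemma NR_Wb (σs : List (X → ℤ)) (b : X → ℤ) : NR (Wb σs b) := by
  intro l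
  induction l generalizing σs with
  | nil => simp
  | cons q l ih =>
    intro h
    cases l with
    | nil => simp at h
    | cons q' l =>
      cases σs with
      | nil => simp [Wb]
      | cons sg σs =>
        simp only [Wb]
        by_cases hq : q = q'
        · simp [hq]
        · rw [ih σs]; · simp
          intro h'; apply h; simp [hq, h']

lemma NR_cup {p : ℕ} {φ ψ : List X → ℤ} (h1 : NR φ) (h2 : NR ψ) : NR (cup p φ ψ) := by
  induction p generalizing φ with
  | zero => intro l hl; simp only [cup, drop_zero]; rw [h2 l hl]; simp
  | succ p ih =>
    intro l hl
    match l with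
    | [] => simp at hl
    | [x] => simp at hl
    | x :: y :: l =>
      by_cases hxy : x = y
      · subst hxy; simp only [cup, take_succ_cons]; rw [h1.rep]; simp
      · have := ih (h1.cons x) (y :: l) (by intro h'; apply hl; simp [hxy, h'])
        exact this

lemma NR.map {φ : List Y → ℤ} (h : NR φ) (f : X → Y) : NR (fun l => φ (l.map f)) := by
  intro l hl
  apply h
  intro h'
  apply hl
  rw [List.isChain_map] at h'
  exact h'.imp fun a b hab e => hab (by rw [e])

lemma EP_zero_snd {χ : List Y → ℤ} (h : NR χ) (a : List X) (b : List Y) (ha : 2 ≤ a.length) :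
    EP a b (fun l => χ (l.map Prod.snd)) = 0 := by
  induction b generalizing χ with
  | nil => rw [EP_nil_right]
  | cons y b ih =>
    match a, ha with
    | x :: x' :: a, ha =>
      rw [EP]
      have := ih (h.cons y)
      simp only [List.map_cons]
      rw [this, EP_cons_zero]; · simp
      intro l; simp only [List.map_cons]; exact h.rep _ _

lemma EP_zero_fst {χ : List X → ℤ} (h : NR χ) (a : List X) (b : List Y) (hb : 2 ≤ b.length) :
    EP a b (fun l => χ (l.map Prod.fst)) = 0 := by
  induction a generalizing χ with
  | nil => match b, hb with
    | y :: y' :: b, _ => simp [EP]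
  | cons x a ih =>
    match b, hb with
    | y :: y' :: b, hb =>
      rw [EP]
      have := ih (h.cons x)
      simp only [List.map_cons]
      rw [this, EP_cons_zero]; · simp
      intro l; simp only [List.map_cons]; exact h.rep _ _

lemma EP_eval {p : ℕ} {φ : List X → ℤ} {ψ : List Y → ℤ} (h1 : NR φ)
    (a : List X) (b : List Y) (ha : a.length = p + 1) (hb : b ≠ []) :
    EP a b (cup p (fun l => φ (l.map Prod.fst)) (fun l => ψ (l.map Prod.snd))) = φ a * ψ b := by
  induction p generalizing φ a with
  | zero =>
    match a, ha with
    | [x], _ =>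
      rw [EP_singleton_left _ hb]
      obtain ⟨y, b, rfl⟩ := List.exists_cons_of_ne_nil hb
      simp [cup, Function.comp_def]
  | succ p ih =>
    match a, ha with
    | x :: x' :: a, ha =>
      obtain ⟨y, b, rfl⟩ := List.exists_cons_of_ne_nil hb
      have := ih (h1.cons x) (x' :: a) (by simpa using ha)
      rw [EP]
      have e : (fun l => cup (p + 1) (fun l => φ (map Prod.fst l)) (fun l => ψ (map Prod.snd l))
          ((x, y) :: l)) = cup p (fun l => φ (x :: l.map Prod.fst)) (fun l => ψ (map Prod.snd l)) := by
        funext l; simp [cup]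
      rw [e, this]
      cases b with
      | nil => simp [EP]
      | cons y' b =>
        rw [EP_cons_zero]; · simp
        intro l
        simp only [cup, List.take_succ_cons, List.map_cons]
        rw [h1.rep]; simp

lemma EP_eval' {p q : ℕ} {φ : List Y → ℤ} {ψ : List X → ℤ} (h1 : NR φ)
    (a : List X) (b : List Y) (ha : a.length = q + 1) (hb : b.length = p + 1) :
    EP a b (cup p (fun l => φ (l.map Prod.snd)) (fun l => ψ (l.map Prod.fst))) =
      (-1) ^ (p * q) * (φ b * ψ a) := by
  induction p generalizing φ b with
  | zero =>
    match b, hb with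
    | [y], _ =>
      rw [EP_singleton_right _ (by intro h; simp [h] at ha)]
      obtain ⟨x, a, rfl⟩ := List.exists_cons_of_ne_nil (l := a) (by intro h; simp [h] at ha)
      simp [cup, Function.comp_def]
  | succ p ih =>
    match b, hb with
    | y :: y' :: b, hb =>
      obtain ⟨x, a, rfl⟩ := List.exists_cons_of_ne_nil (l := a) (by intro h; simp [h] at ha)
      have := ih (h1.cons y) (y' :: b) (by simpa using hb)
      rw [EP]
      have e : (fun l => cup (p + 1) (fun l => φ (map Prod.snd l)) (fun l => ψ (map Prod.fst l))
          ((x, y) :: l)) = cup p (fun l => φ (y :: l.map Prod.snd)) (fun l => ψ (map Prod.fst l)) := by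
        funext l; simp [cup]
      rw [e, this]
      have hq : a.length = q := by simpa using ha
      have h0 : EP a (y :: y' :: b) (cup p (fun l => φ (y :: l.map Prod.snd))
          (fun l => ψ (map Prod.fst l))) = 0 := by
        cases a with
        | nil => simp [EP]
        | cons x' a =>
          rw [EP_cons_zero]
          intro l
          simp only [cup, List.take_succ_cons, List.map_cons]
          rw [h1.rep]; simp
      rw [h0, hq]; ring

end LC

namespace LC
open List
variable {X Y Z : Type*}

/-- chains as additive functionals on cochains -/
abbrev Ch (X : Type*) := (List X → ℤ) →+ ℤ

/-- boundary -/
def bd (c : Ch X) : Ch X where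
  toFun φ := c (dl φ)
  map_zero' := by
    have : dl (0 : List X → ℤ) = 0 := by
      funext l; exact dl_zero_of (fun _ _ _ => rfl)
    rw [this, map_zero]
  map_add' φ ψ := by
    rw [← map_add]; congr 1; funext l; exact dl_add φ ψ l

/-- product chain -/
def pr (c : Ch X) (d : Ch Y) : Ch (X × Y) where
  toFun φ := c (fun a => d (fun b => EP a b φ))
  map_zero' := by
    have : (fun a => d (fun b => EP a b (0 : List (X × Y) → ℤ))) = 0 := by
      funext a
      have : (fun b => EP a b (0 : List (X × Y) → ℤ)) = 0 := by
        funext b; exact EP_zero a b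
      rw [this, map_zero]; rfl
    rw [this, map_zero]
  map_add' φ ψ := by
    rw [← map_add]; congr 1; funext a
    rw [Pi.add_apply, ← map_add]; congr 1; funext b
    exact EP_add a b φ ψ

/-- push forward -/
def push (f : X → Y) (c : Ch X) : Ch Y where
  toFun φ := c (fun l => φ (l.map f))
  map_zero' := map_zero c
  map_add' φ ψ := by rw [← map_add]; rfl

/-- interval chain -/
def Jc (p : ℕ → X) (n : ℕ) : Ch X where
  toFun φ := ∑ i ∈ Finset.range n, φ [p i, p (i + 1)]
  map_zero' := by simp
  map_add' φ ψ := by simp [Finset.sum_add_distrib]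

/-- point chain -/
def pt (x : X) : Ch X where
  toFun φ := φ [x]
  map_zero' := rfl
  map_add' _ _ := rfl

lemma bd_apply (c : Ch X) (φ : List X → ℤ) : bd c φ = c (dl φ) := rfl
lemma pr_apply (c : Ch X) (d : Ch Y) (φ : List (X × Y) → ℤ) :
    pr c d φ = c (fun a => d (fun b => EP a b φ)) := rfl
lemma push_apply (f : X → Y) (c : Ch X) (φ : List Y → ℤ) :
    push f c φ = c (fun l => φ (l.map f)) := rfl
lemma Jc_apply (p : ℕ → X) (n : ℕ) (φ : List X → ℤ) :
    Jc p n φ = ∑ i ∈ Finset.range n, φ [p i, p (i + 1)] := rfl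
lemma pt_apply (x : X) (φ : List X → ℤ) : pt x φ = φ [x] := rfl

lemma ch_smul (c : Ch X) (z : ℤ) (φ : List X → ℤ) : c (fun l => z * φ l) = z * c φ := by
  have := map_zsmul c z φ
  rw [smul_eq_mul] at this
  rw [← this]; rfl
lemma ch_add (c : Ch X) (φ ψ : List X → ℤ) : c (fun l => φ l + ψ l) = c φ + c ψ := map_add c φ ψ
lemma ch_sub (c : Ch X) (φ ψ : List X → ℤ) : c (fun l => φ l - ψ l) = c φ - c ψ := map_sub c φ ψ
lemma ch_zero (c : Ch X) : c (fun _ => 0) = 0 := map_zero c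
lemma ch_sum {ι : Type*} (s : Finset ι) (c : Ch X) (F : ι → List X → ℤ) :
    c (fun l => ∑ i ∈ s, F i l) = ∑ i ∈ s, c (F i) := by
  rw [← map_sum]; congr 1; funext l; simp

lemma bd_bd (c : Ch X) (φ : List X → ℤ) : bd (bd c) φ = 0 := by
  rw [bd_apply, bd_apply]
  have : dl (dl φ) = fun _ => 0 := by funext l; exact dl_dl φ l
  rw [this, ch_zero]

lemma bd_push (f : X → Y) (c : Ch X) (φ : List Y → ℤ) : bd (push f c) φ = bd c (fun l => φ (l.map f)) := by
  rw [bd_apply, push_apply, bd_apply]; congr 1; funext l; rw [dl_map]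

lemma bd_Jc (p : ℕ → X) (n : ℕ) (φ : List X → ℤ) : bd (Jc p n) φ = φ [p n] - φ [p 0] := by
  rw [bd_apply, Jc_apply]
  simp only [dl, sub_zero]
  rw [Finset.sum_range_sub (fun i => φ [p i])]

lemma ch_dl (d : Ch Y) (F : List X → List Y → ℤ) (a : List X) :
    d (fun b => dl (fun a' => F a' b) a) = dl (fun a' => d (F a')) a := by
  induction a generalizing F with
  | nil => simp only [dl]; exact ch_zero d
  | cons x a ih =>
    simp only [dl]
    rw [ch_sub, ih (fun a' b => F (x :: a') b)]

/-- `c` only sees lists satisfying `S`. -/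
def Supp (c : Ch X) (S : List X → Prop) : Prop :=
  ∀ φ ψ : List X → ℤ, (∀ l, S l → φ l = ψ l) → c φ = c ψ

lemma Supp.mono {c : Ch X} {S T : List X → Prop} (h : Supp c S) (hST : ∀ l, S l → T l) : Supp c T :=
  fun φ ψ hh => h φ ψ fun l hl => hh l (hST l hl)

lemma Supp.zero {c : Ch X} {S : List X → Prop} (h : Supp c S) {φ : List X → ℤ}
    (hφ : ∀ l, S l → φ l = 0) : c φ = 0 := by
  rw [h φ (fun _ => 0) hφ, ch_zero]

lemma Supp.and {c : Ch X} {S T : List X → Prop} (h : Supp c S) (h' : Supp c T) :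
    Supp c (fun l => S l ∧ T l) := by
  classical
  intro φ ψ hh
  rw [h φ (fun l => if S l then φ l else 0) (fun l hl => by simp [hl]),
    h ψ (fun l => if S l then ψ l else 0) (fun l hl => by simp [hl])]
  apply h'
  intro l hl
  by_cases hS : S l
  · simp [hS, hh l ⟨hS, hl⟩]
  · simp [hS]

lemma Supp.bd {c : Ch X} {S T : List X → Prop} (h : Supp c S)
    (hST : ∀ l l', S l → l' <+ l → l'.length + 1 = l.length → T l') : Supp (bd c) T := by
  intro φ ψ hh
  rw [bd_apply, bd_apply]
  apply h
  intro l hl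
  exact dl_congr fun l' h1 h2 => hh l' (hST l l' hl h1 h2)

lemma Supp.pr {c : Ch X} {d : Ch Y} {S : List X → Prop} {T : List Y → Prop} (h : Supp c S)
    (h' : Supp d T) : Supp (pr c d) (fun l => ∃ a b, S a ∧ T b ∧
      l.length + 1 = a.length + b.length ∧ ∀ p ∈ l, p.1 ∈ a ∧ p.2 ∈ b) := by
  intro φ ψ hh
  rw [pr_apply, pr_apply]
  apply h
  intro a ha
  apply h'
  intro b hb
  exact EP_congr fun l h1 h2 => hh l ⟨a, b, ha, hb, h1, h2⟩

lemma Supp.push {c : Ch X} {S : List X → Prop} {T : List Y → Prop} (f : X → Y) (h : Supp c S)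
    (hST : ∀ l, S l → T (l.map f)) : Supp (push f c) T := by
  intro φ ψ hh
  rw [push_apply, push_apply]
  exact h _ _ fun l hl => hh _ (hST l hl)

lemma supp_Jc (p : ℕ → X) (n : ℕ) : Supp (Jc p n) (fun l => ∃ i < n, l = [p i, p (i + 1)]) := by
  intro φ ψ hh
  rw [Jc_apply, Jc_apply]
  exact Finset.sum_congr rfl fun i hi => hh _ ⟨i, Finset.mem_range.1 hi, rfl⟩

lemma supp_pt (x : X) : Supp (pt x) (fun l => l = [x]) := fun _ _ hh => hh _ rfl

lemma bd_pr (c : Ch X) (d : Ch Y) {p : ℕ} (hc : Supp c (fun l => l.length = p))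
    (φ : List (X × Y) → ℤ) :
    bd (pr c d) φ = pr (bd c) d φ + (-1) ^ (p + 1) * pr c (bd d) φ := by
  rw [bd_apply, pr_apply, pr_apply, pr_apply, bd_apply, ← ch_smul, ← ch_add]
  apply hc
  intro a ha
  simp only [EP_dl, bd_apply]
  rw [ch_add, ch_smul, ch_dl, ha]

lemma pr_eval {c : Ch X} {d : Ch Y} {p : ℕ} (hc : Supp c (fun l => l.length = p + 1))
    (hd : Supp d (fun l => l ≠ [])) {φ : List X → ℤ} {ψ : List Y → ℤ} (h1 : NR φ) :
    pr c d (cup p (fun l => φ (l.map Prod.fst)) (fun l => ψ (l.map Prod.snd))) = c φ * d ψ := by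
  rw [pr_apply, mul_comm, ← ch_smul]
  apply hc
  intro a ha
  rw [mul_comm, ← ch_smul]
  apply hd
  intro b hb
  rw [EP_eval h1 a b ha hb]

lemma pr_eval' {c : Ch X} {d : Ch Y} {p q : ℕ} (hc : Supp c (fun l => l.length = q + 1))
    (hd : Supp d (fun l => l.length = p + 1)) {φ : List Y → ℤ} {ψ : List X → ℤ} (h1 : NR φ) :
    pr c d (cup p (fun l => φ (l.map Prod.snd)) (fun l => ψ (l.map Prod.fst))) =
      (-1) ^ (p * q) * (d φ * c ψ) := by
  rw [pr_apply, ← ch_smul, ← ch_smul]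
  apply hc
  intro a ha
  rw [mul_comm (d φ), ← ch_smul, ← ch_smul]
  apply hd
  intro b hb
  rw [EP_eval' h1 a b ha hb]; ring

lemma pr_zero_snd {c : Ch X} (d : Ch Y) (hc : Supp c (fun l => 2 ≤ l.length)) {χ : List Y → ℤ}
    (h : NR χ) : pr c d (fun l => χ (l.map Prod.snd)) = 0 := by
  rw [pr_apply]
  apply hc.zero
  intro a ha
  simp only [EP_zero_snd h a _ ha]
  exact ch_zero d

lemma pr_zero_fst (c : Ch X) {d : Ch Y} (hd : Supp d (fun l => 2 ≤ l.length)) {χ : List X → ℤ}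
    (h : NR χ) : pr c d (fun l => χ (l.map Prod.fst)) = 0 := by
  rw [pr_apply]
  rw [← ch_zero c]
  congr 1
  funext a
  exact hd.zero fun b hb => EP_zero_fst h a b hb

lemma pr_pt {c : Ch X} (hc : Supp c (fun l => l ≠ [])) (y : Y) (φ : List (X × Y) → ℤ) :
    pr c (pt y) φ = c (fun l => φ (l.map fun x => (x, y))) := by
  rw [pr_apply]
  apply hc
  intro a ha
  rw [pt_apply, EP_singleton_right a ha]

lemma pr_bd_Jc {c : Ch X} (hc : Supp c (fun l => l ≠ [])) (p : ℕ → Y) (n : ℕ)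
    (φ : List (X × Y) → ℤ) :
    pr c (bd (Jc p n)) φ = c (fun l => φ (l.map fun x => (x, p n))) -
      c (fun l => φ (l.map fun x => (x, p 0))) := by
  rw [pr_apply, ← ch_sub]
  apply hc
  intro a ha
  rw [bd_Jc, EP_singleton_right a ha, EP_singleton_right a ha]

lemma Wb_append (σs τs : List (X → ℤ)) (b : X → ℤ) (l : List X) :
    Wb (σs ++ τs) b l = cup σs.length (Wb σs fun _ => 1) (Wb τs b) l := by
  induction σs generalizing l with
  | nil =>
    cases l with
    | nil => cases τs <;> simp [cup, Wb]
    | cons x l => simp [cup, Wb]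
  | cons sg σs ih =>
    match l with
    | [] => simp [cup, Wb]
    | [x] => simp [cup, Wb]
    | x :: y :: l =>
      rw [List.cons_append, Wb, ih]
      simp only [cup, List.length_cons, List.take_succ_cons, List.drop_succ_cons, Wb]
      ring

/-- sign -/
noncomputable def sg (r : ℝ) : ℤ := if 0 < r then 1 else 0

/-- the top sign cocycle of a vector valued function -/
noncomputable def ww {m : ℕ} (f : X → Fin m → ℝ) : List X → ℤ :=
  Wb (List.ofFn fun i : Fin m => fun x => sg (f x i)) (fun _ => 1)

/-- its primitive -/
noncomputable def tt {k : ℕ} (f : X → Fin (k + 1) → ℝ) : List X → ℤ :=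
  Wb (List.ofFn fun i : Fin k => fun x => sg (f x i.castSucc)) (fun x => sg (f x (Fin.last k)))

lemma dl_tt {k : ℕ} (f : X → Fin (k + 1) → ℝ) (l : List X) (hl : 2 ≤ l.length) :
    dl (tt f) l = (-1) ^ k * ww f l := by
  rw [tt, dl_Wb _ _ _ hl, ww, List.ofFn_succ_last]
  simp

lemma NR_tt {k : ℕ} (f : X → Fin (k + 1) → ℝ) : NR (tt f) := NR_Wb _ _
lemma NR_ww {m : ℕ} (f : X → Fin m → ℝ) : NR (ww f) := NR_Wb _ _

lemma tt_congr {k : ℕ} {f g : X → Fin (k + 1) → ℝ} {l : List X}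
    (h : ∀ x ∈ l, ∀ i, sg (f x i) = sg (g x i)) : tt f l = tt g l := by
  apply Wb_congr
  · rw [List.forall₂_iff_get]
    simp only [List.length_ofFn, true_and]
    intro i hi hi' q hq
    simp [h q hq]
  · intro q hq; exact h q hq _

lemma tt_map {k : ℕ} (g : X → Y) (f : Y → Fin (k + 1) → ℝ) (l : List X) :
    tt f (l.map g) = tt (fun x => f (g x)) l := by
  rw [tt, Wb_map, List.map_ofFn]; rfl

lemma ww_map {m : ℕ} (g : X → Y) (f : Y → Fin m → ℝ) (l : List X) :
    ww f (l.map g) = ww (fun x => f (g x)) l := by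
  rw [ww, Wb_map, List.map_ofFn]; rfl

lemma ww_const {m : ℕ} {f : X → Fin m → ℝ} {l : List X}
    (h : ∃ i, ∀ p ∈ l, ∀ q ∈ l, sg (f p i) = sg (f q i)) : ww f l = 0 := by
  obtain ⟨i, hi⟩ := h
  apply Wb_const
  exact ⟨_, List.mem_ofFn.2 ⟨i, rfl⟩, hi⟩

end LC

namespace LC
open List
variable {X Y Z : Type*}

/-- mesh points -/
noncomputable def pp (n i : ℕ) : ℝ := -1 + 2 * i / n

/-- the cube chain -/
noncomputable def box (n : ℕ) : (j : ℕ) → Ch (Fin j → ℝ)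
  | 0 => pt (fun i => i.elim0)
  | j + 1 => push (fun q => Fin.snoc (α := fun _ => ℝ) q.1 q.2) (pr (box n j) (Jc (pp n) n))

/-- small lists -/
def Sm [PseudoMetricSpace X] (ε : ℝ) (l : List X) : Prop := ∀ x ∈ l, ∀ y ∈ l, dist x y ≤ ε

lemma Sm.sub [PseudoMetricSpace X] {ε : ℝ} {l l' : List X} (h : Sm ε l) (hs : l' ⊆ l) : Sm ε l' :=
  fun x hx y hy => h x (hs hx) y (hs hy)

lemma pp_abs {n i : ℕ} (hi : i ≤ n) : |pp n i| ≤ 1 := by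
  rw [pp, abs_le]
  rcases Nat.eq_zero_or_pos n with rfl | hn
  · simp
  have h0 : (0:ℝ) < n := by exact_mod_cast hn
  have h1 : (i:ℝ) ≤ n := by exact_mod_cast hi
  have h2 : 2 * (i:ℝ) / n ≤ 2 := by rw [div_le_iff₀ h0]; linarith
  have h3 : 0 ≤ 2 * (i:ℝ) / n := by positivity
  constructor <;> linarith

lemma pp_zero (n : ℕ) : pp n 0 = -1 := by simp [pp]
lemma pp_last {n : ℕ} (hn : 0 < n) : pp n n = 1 := by
  have h0 : (n:ℝ) ≠ 0 := by positivity
  rw [pp]; field_simp; norm_num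

lemma pp_dist (n i : ℕ) : dist (pp n i) (pp n (i + 1)) = 2 / n := by
  rw [Real.dist_eq, pp, pp]
  have : (-1 + 2 * (i:ℝ) / n - (-1 + 2 * ((i + 1 : ℕ) : ℝ) / n)) = -(2 / n) := by
    push_cast; ring
  rw [this, abs_neg, abs_of_nonneg]; positivity

lemma supp_J (n : ℕ) : Supp (Jc (pp n) n)
    (fun l => l.length = 2 ∧ Sm (2 / n : ℝ) l ∧ ∀ x ∈ l, |x| ≤ 1) := by
  refine (supp_Jc (pp n) n).mono ?_
  rintro l ⟨i, hi, rfl⟩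
  refine ⟨rfl, ?_, ?_⟩
  · intro x hx y hy
    have hd := pp_dist n i
    have h0 : (0:ℝ) ≤ 2 / n := by positivity
    simp only [List.mem_cons, List.not_mem_nil, or_false] at hx hy
    rcases hx with rfl | rfl <;> rcases hy with rfl | rfl
    · simpa using h0
    · exact hd.le
    · rw [dist_comm]; exact hd.le
    · simpa using h0
  · intro x hx
    simp only [List.mem_cons, List.not_mem_nil, or_false] at hx
    rcases hx with rfl | rfl
    · exact pp_abs hi.le
    · exact pp_abs hi

lemma supp_box (n j : ℕ) : Supp (box n j)
    (fun l => l.length = j + 1 ∧ Sm (2 / n : ℝ) l ∧ ∀ x ∈ l, ‖x‖ ≤ 1) := by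
  have h0 : (0:ℝ) ≤ 2 / n := by positivity
  induction j with
  | zero =>
    refine (supp_pt _).mono ?_
    rintro l rfl
    refine ⟨rfl, ?_, ?_⟩
    · intro x hx y hy; rw [Subsingleton.elim x y, dist_self]; exact h0
    · intro x hx; rw [Subsingleton.elim x 0, norm_zero]; exact zero_le_one
  | succ j ih =>
    refine (ih.pr (supp_J n)).push _ ?_
    rintro l ⟨a, b, ⟨h1, h2, h3⟩, ⟨h1', h2', h3'⟩, h4, h5⟩
    refine ⟨by simp; omega, ?_, ?_⟩
    · intro x hx y hy
      obtain ⟨p, hp, rfl⟩ := List.mem_map.1 hx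
      obtain ⟨q, hq, rfl⟩ := List.mem_map.1 hy
      rw [dist_pi_le_iff h0]
      intro i
      refine Fin.lastCases ?_ (fun i => ?_) i
      · simpa using h2' _ (h5 p hp).2 _ (h5 q hq).2
      · simpa using (dist_pi_le_iff h0).1 (h2 _ (h5 p hp).1 _ (h5 q hq).1) i
    · intro x hx
      obtain ⟨p, hp, rfl⟩ := List.mem_map.1 hx
      rw [pi_norm_le_iff_of_nonneg zero_le_one]
      intro i
      refine Fin.lastCases ?_ (fun i => ?_) i
      · simpa using h3' _ (h5 p hp).2
      · simpa using (pi_norm_le_iff_of_nonneg zero_le_one).1 (h3 _ (h5 p hp).1) i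

lemma box_len (n j : ℕ) : Supp (box n j) (fun l => l.length = j + 1) :=
  (supp_box n j).mono fun _ h => h.1

lemma supp_bd_box_aux {n : ℕ} (hn : 0 < n) (j : ℕ) : Supp (bd (box n j))
    (fun l => ∀ x ∈ l, ∃ i, |x i| = 1) := by
  induction j with
  | zero =>
    refine (box_len n 0).bd ?_
    intro l l' h1 _ h2 x hx
    have : l'.length = 0 := by omega
    rw [List.length_eq_zero_iff] at this
    simp [this] at hx
  | succ j ih =>
    intro φ ψ hh
    have hJ : Supp (bd (Jc (pp n) n)) (fun l => ∀ x ∈ l, |x| = 1) := by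
      intro φ ψ hh
      rw [bd_Jc, bd_Jc, hh, hh]
      · intro x hx; simp at hx; rw [hx, pp_zero]; simp
      · intro x hx; simp at hx; rw [hx, pp_last hn]; simp
    simp only [box]
    rw [bd_push, bd_push, bd_pr _ _ (box_len n j), bd_pr _ _ (box_len n j)]
    congr 1
    · refine (ih.pr (supp_J n)) _ _ ?_
      rintro l ⟨a, b, h1, h2, h3, h4⟩
      apply hh
      intro x hx
      obtain ⟨p, hp, rfl⟩ := List.mem_map.1 hx
      obtain ⟨i, hi⟩ := h1 _ (h4 p hp).1
      exact ⟨i.castSucc, by simpa using hi⟩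
    · congr 1
      refine ((box_len n j).pr hJ) _ _ ?_
      rintro l ⟨a, b, h1, h2, h3, h4⟩
      apply hh
      intro x hx
      obtain ⟨p, hp, rfl⟩ := List.mem_map.1 hx
      exact ⟨Fin.last j, by simpa using h2 _ (h4 p hp).2⟩

lemma supp_bd_box {n : ℕ} (hn : 0 < n) (j : ℕ) : Supp (bd (box n j))
    (fun l => l.length = j ∧ Sm (2 / n : ℝ) l ∧ ∀ x ∈ l, ‖x‖ = 1) := by
  refine ((supp_bd_box_aux hn j).and ((supp_box n j).bd (T := fun l => l.length = j ∧
    Sm (2 / n : ℝ) l ∧ ∀ x ∈ l, ‖x‖ ≤ 1) ?_)).mono ?_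
  · rintro l l' ⟨h1, h2, h3⟩ h4 h5
    exact ⟨by omega, h2.sub h4.subset, fun x hx => h3 x (h4.subset hx)⟩
  · rintro l ⟨h1, h2, h3, h4⟩
    refine ⟨h2, h3, fun x hx => le_antisymm (h4 x hx) ?_⟩
    obtain ⟨i, hi⟩ := h1 x hx
    rw [← hi]; exact norm_le_pi_norm x i

lemma ww_box {n : ℕ} (hn : 0 < n) (j : ℕ) : box n j (ww id) = 1 := by
  induction j with
  | zero => simp [box, pt_apply, ww, Wb]
  | succ j ih =>
    rw [box, push_apply]
    have e : (fun l : List ((Fin j → ℝ) × ℝ) => ww id (l.map fun q =>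
        (Fin.snoc (α := fun _ => ℝ) q.1 q.2 : Fin (j + 1) → ℝ))) =
        cup j (fun l => ww id (l.map Prod.fst)) (fun l => (Wb [sg] fun _ => 1) (l.map Prod.snd)) := by
      funext l
      rw [ww_map, ww, List.ofFn_succ_last, Wb_append]
      simp only [List.length_ofFn, cup, ww_map]
      congr 1
      · rw [ww]; simp
      · rw [Wb_map]; simp
    rw [e, pr_eval (box_len n j) ((supp_J n).mono _) (NR_ww _), ih, one_mul, Jc_apply]
    · simp only [Wb, mul_one]
      rw [Finset.sum_range_sub (fun i => sg (pp n i)), pp_zero, pp_last hn]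
      norm_num [sg]
    · rintro l ⟨h, _⟩ rfl; simp at h

lemma tt_bd_box {n : ℕ} (hn : 0 < n) {k : ℕ} : bd (box n (k + 1)) (tt id) = (-1) ^ k := by
  rw [bd_apply, (box_len n (k + 1)) (dl (tt id)) (fun l => (-1) ^ k * ww id l), ch_smul, ww_box hn, mul_one]
  intro l hl
  exact dl_tt _ _ (by omega)

/-- sign constancy for small lists -/
lemma small_sign {m : ℕ} [PseudoMetricSpace X] {D : Set X} (hD : IsCompact D) {f : X → Fin m → ℝ}
    (hf : ContinuousOn f D) {r : ℝ} (hr : 0 < r) :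
    ∃ ε > 0, ∀ l : List X, Sm ε l → (∀ x ∈ l, x ∈ D) → (∃ x ∈ l, ∃ i, r ≤ |f x i|) →
      ∃ i, ∀ x ∈ l, ∀ y ∈ l, sg (f x i) = sg (f y i) := by
  have hu := hD.uniformContinuousOn_of_continuous hf
  rw [Metric.uniformContinuousOn_iff] at hu
  obtain ⟨δ, hδ, h⟩ := hu r hr
  refine ⟨δ / 2, by positivity, ?_⟩
  rintro l hl hlD ⟨x, hx, i, hi⟩
  refine ⟨i, ?_⟩
  have key : ∀ y ∈ l, sg (f y i) = sg (f x i) := by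
    intro y hy
    have h1 := h x (hlD x hx) y (hlD y hy) (lt_of_le_of_lt (hl x hx y hy) (by linarith))
    have h2 : |f x i - f y i| < r := lt_of_le_of_lt (dist_le_pi_dist (f x) (f y) i) h1
    rw [abs_lt] at h2
    rw [sg, sg]
    rcases le_abs.1 hi with h3 | h3
    · rw [if_pos (by linarith), if_pos (by linarith)]
    · rw [if_neg (by linarith), if_neg (by linarith)]
  intro y hy z hz
  rw [key y hy, key z hz]

lemma small_sign' {m : ℕ} [PseudoMetricSpace X] {D : Set X} (hD : IsCompact D) {f : X → Fin m → ℝ}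
    (hf : ContinuousOn f D) (h0 : ∀ x ∈ D, f x ≠ 0) :
    ∃ ε > 0, ∀ l : List X, Sm ε l → (∀ x ∈ l, x ∈ D) → ww f l = 0 := by
  have : ∃ r > 0, ∀ x ∈ D, ∃ i, r ≤ |f x i| := by
    rcases D.eq_empty_or_nonempty with rfl | hne
    · exact ⟨1, one_pos, by simp⟩
    obtain ⟨x0, hx0, hmin⟩ := hD.exists_isMinOn hne hf.norm
    refine ⟨‖f x0‖, norm_pos_iff.2 (h0 x0 hx0), fun x hx => ?_⟩
    by_contra hcon
    push Not at hcon
    have h1 : ‖f x‖ < ‖f x0‖ := (pi_norm_lt_iff (norm_pos_iff.2 (h0 x0 hx0))).2 fun i => hcon i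
    exact absurd (hmin hx) (not_le.2 h1)
  obtain ⟨r, hr, h1⟩ := this
  obtain ⟨ε, hε, h2⟩ := small_sign hD hf hr
  refine ⟨ε, hε, fun l hl hlD => ?_⟩
  cases l with
  | nil => simp only [ww]; cases (List.ofFn fun i : Fin m => fun x => sg (f x i)) <;> simp [Wb]
  | cons x l => exact ww_const (h2 _ hl hlD ⟨x, by simp, h1 x (hlD x (by simp))⟩)

/-- the homotopy formula -/
lemma hom_formula {k : ℕ} (h : X × ℝ → Fin (k + 1) → ℝ) (n : ℕ) (l : List X) (hk : l.length = k + 1)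
    (hz : ∀ L : List (X × ℝ), (∀ p ∈ L, p.1 ∈ l) → (∀ p ∈ L, |p.2| ≤ 1) →
      (∀ p ∈ L, ∀ q ∈ L, dist p.2 q.2 ≤ 2 / n) → ww h L = 0) (hn : 0 < n) (hk0 : 0 < k) :
    dl (fun l => (-1) ^ k * (-1) * Jc (pp n) n (fun b => EP l b (tt h))) l =
      tt (fun x => h (x, 1)) l - tt (fun x => h (x, -1)) l := by
  have h1 : Jc (pp n) n (fun b => EP l b (dl (tt h))) = 0 := by
    apply (supp_J n).zero
    rintro b ⟨hb1, hb2, hb3⟩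
    apply EP_eq_zero
    intro L hL hm
    rw [dl_tt _ _ (by omega), hz L (fun p hp => (hm p hp).1) (fun p hp => hb3 _ (hm p hp).2)
      (fun p hp q hq => hb2 _ (hm p hp).2 _ (hm q hq).2), mul_zero]
  simp only [EP_dl] at h1
  rw [ch_add, ch_smul, ← bd_apply, bd_Jc, ch_dl, pp_zero, pp_last hn] at h1
  have hne : l ≠ [] := by intro h; simp [h] at hk
  rw [EP_singleton_right _ hne, EP_singleton_right _ hne, tt_map, tt_map, hk] at h1
  rw [dl_smul]
  have hs : ((-1 : ℤ) ^ k) * (-1) ^ k = 1 := by rw [← mul_pow]; simp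
  rw [pow_succ, pow_succ] at h1
  linear_combination (-(-1 : ℤ) ^ k) * h1 + (tt (fun x => h (x, 1)) l - tt (fun x => h (x, -1)) l) * hs

end LC

namespace LC
open List
variable {X Y Z : Type*}

lemma cup_congr {p : ℕ} {φ φ' ψ ψ' : List X → ℤ} {l : List X} (h1 : φ (l.take (p + 1)) = φ' (l.take (p + 1)))
    (h2 : ψ (l.drop p) = ψ' (l.drop p)) : cup p φ ψ l = cup p φ' ψ' l := by
  rw [cup, cup, h1, h2]

/-- Stokes: cocycle cup coboundary vanishes on a cycle -/
lemma stokes_right {p : ℕ} {e : Ch X} {S : List X → Prop} (he : Supp e S) (hS : ∀ l, S l → p + 2 ≤ l.length)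
    {U β : List X → ℤ} (hU : ∀ l, S l → dl U (l.take (p + 2)) = 0) (hcyc : ∀ φ, bd e φ = 0) :
    e (cup p U (dl β)) = 0 := by
  have h1 := hcyc (cup p U β)
  rw [bd_apply, he _ (fun l => (-1) ^ p * cup p U (dl β) l), ch_smul] at h1
  · rcases mul_eq_zero.1 h1 with h | h
    · exact absurd h (by simp)
    · exact h
  · intro l hl
    rw [cup_leib _ _ _ _ (hS l hl), cup, hU l hl]; simp

lemma stokes_left {p : ℕ} {e : Ch X} {S : List X → Prop} (he : Supp e S) (hS : ∀ l, S l → p + 2 ≤ l.length)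
    {U β : List X → ℤ} (hU : ∀ l, S l → dl U (l.drop p) = 0) (hcyc : ∀ φ, bd e φ = 0) :
    e (cup (p + 1) (dl β) U) = 0 := by
  have h1 := hcyc (cup p β U)
  rw [bd_apply, he _ (cup (p + 1) (dl β) U)] at h1
  · exact h1
  · intro l hl
    rw [cup_leib _ _ _ _ (hS l hl)]
    simp only [cup, hU l hl]; simp

section core
variable {k n : ℕ}

/-- points of the double cube -/
abbrev QQ (k : ℕ) := (Fin (k + 1) → ℝ) × (Fin (k + 1) → ℝ)

/-- lists on the first boundary part -/
def G1 (ε : ℝ) (l : List (QQ k)) : Prop := Sm ε l ∧ ∀ p ∈ l, ‖p.1‖ = 1 ∧ ‖p.2‖ ≤ 1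
/-- lists on the second boundary part -/
def G2 (ε : ℝ) (l : List (QQ k)) : Prop := Sm ε l ∧ ∀ p ∈ l, ‖p.1‖ ≤ 1 ∧ ‖p.2‖ = 1

lemma G1.sub {ε : ℝ} {l l' : List (QQ k)} (h : G1 ε l) (hs : l' ⊆ l) : G1 ε l' :=
  ⟨h.1.sub hs, fun p hp => h.2 p (hs hp)⟩
lemma G2.sub {ε : ℝ} {l l' : List (QQ k)} (h : G2 ε l) (hs : l' ⊆ l) : G2 ε l' :=
  ⟨h.1.sub hs, fun p hp => h.2 p (hs hp)⟩

lemma Sm_pr [PseudoMetricSpace X] [PseudoMetricSpace Y] {ε : ℝ} {l : List (X × Y)} {a : List X} {b : List Y}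
    (ha : Sm ε a) (hb : Sm ε b) (h : ∀ p ∈ l, p.1 ∈ a ∧ p.2 ∈ b) : Sm ε l := by
  intro p hp q hq
  rw [Prod.dist_eq]
  exact max_le (ha _ (h p hp).1 _ (h q hq).1) (hb _ (h p hp).2 _ (h q hq).2)

lemma supp_c0 : Supp (pr (box n (k + 1)) (box n (k + 1))) (fun l => l.length = 2 * k + 3 ∧
    Sm (2 / n : ℝ) l ∧ ∀ p ∈ l, ‖p.1‖ ≤ 1 ∧ ‖p.2‖ ≤ 1) := by
  refine ((supp_box n _).pr (supp_box n _)).mono ?_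
  rintro l ⟨a, b, ⟨h1, h2, h3⟩, ⟨h1', h2', h3'⟩, h4, h5⟩
  exact ⟨by omega, Sm_pr h2 h2' h5, fun p hp => ⟨h3 _ (h5 p hp).1, h3' _ (h5 p hp).2⟩⟩

lemma supp_c1 (hn : 0 < n) : Supp (pr (bd (box n (k + 1))) (box n (k + 1)))
    (fun l => l.length = 2 * k + 2 ∧ G1 (2 / n : ℝ) l) := by
  refine ((supp_bd_box hn _).pr (supp_box n _)).mono ?_
  rintro l ⟨a, b, ⟨h1, h2, h3⟩, ⟨h1', h2', h3'⟩, h4, h5⟩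
  exact ⟨by omega, Sm_pr h2 h2' h5, fun p hp => ⟨h3 _ (h5 p hp).1, h3' _ (h5 p hp).2⟩⟩

lemma supp_c2 (hn : 0 < n) : Supp (pr (box n (k + 1)) (bd (box n (k + 1))))
    (fun l => l.length = 2 * k + 2 ∧ G2 (2 / n : ℝ) l) := by
  refine ((supp_box n _).pr (supp_bd_box hn _)).mono ?_
  rintro l ⟨a, b, ⟨h1, h2, h3⟩, ⟨h1', h2', h3'⟩, h4, h5⟩
  exact ⟨by omega, Sm_pr h2 h2' h5, fun p hp => ⟨h3 _ (h5 p hp).1, h3' _ (h5 p hp).2⟩⟩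

lemma supp_e (hn : 0 < n) : Supp (pr (bd (box n (k + 1))) (bd (box n (k + 1))))
    (fun l => l.length = 2 * k + 1 ∧ G1 (2 / n : ℝ) l ∧ G2 (2 / n : ℝ) l) := by
  refine ((supp_bd_box hn _).pr (supp_bd_box hn _)).mono ?_
  rintro l ⟨a, b, ⟨h1, h2, h3⟩, ⟨h1', h2', h3'⟩, h4, h5⟩
  exact ⟨by omega, ⟨Sm_pr h2 h2' h5, fun p hp => ⟨h3 _ (h5 p hp).1, (h3' _ (h5 p hp).2).le⟩⟩,
    Sm_pr h2 h2' h5, fun p hp => ⟨(h3 _ (h5 p hp).1).le, h3' _ (h5 p hp).2⟩⟩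

/-- abstract data on the boundary of the double cube -/
structure BD (k n : ℕ) (α : Bool → QQ k → Fin (k + 1) → ℝ) : Prop where
  hn : 0 < n
  hk : 0 < k
  ex : ∃ (r : Bool → QQ k → Prop) (β β' : Bool → List (QQ k) → ℤ),
    (∀ l, G1 (2 / n : ℝ) l ∨ G2 (2 / n : ℝ) l → (∀ p ∈ l, r true p) ∨ (∀ p ∈ l, r false p)) ∧
    (∀ i l, G1 (2 / n : ℝ) l ∨ G2 (2 / n : ℝ) l → (∀ p ∈ l, r i p) → ww (α i) l = 0) ∧
    (∀ i l, G1 (2 / n : ℝ) l → (∀ p ∈ l, r i p) → l.length = k + 1 →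
      tt (α i) l = tt Prod.fst l + dl (β i) l) ∧
    (∀ i l, G2 (2 / n : ℝ) l → (∀ p ∈ l, r i p) → l.length = k + 1 →
      tt (α i) l = tt Prod.snd l + dl (β' i) l) ∧
    (∀ l : List (QQ k), G1 (2 / n : ℝ) l → ww Prod.fst l = 0) ∧
    (∀ l : List (QQ k), G2 (2 / n : ℝ) l → ww Prod.snd l = 0)

lemma eSS (hn : 0 < n) :
    pr (bd (box n (k + 1))) (bd (box n (k + 1))) (cup k (tt Prod.fst) (tt Prod.snd)) = 1 := by
  have e : (cup k (tt (X := QQ k) Prod.fst) (tt Prod.snd)) = cup k (fun l => tt id (l.map Prod.fst))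
      (fun l => tt id (l.map Prod.snd)) := by
    funext l; simp only [cup, tt_map]; rfl
  rw [e, pr_eval ((supp_bd_box hn _).mono fun l h => h.1) ((supp_bd_box hn _).mono _) (NR_tt _),
    tt_bd_box hn, ← mul_pow]
  · simp
  · rintro l h rfl; simp at h

lemma eSS' (hn : 0 < n) :
    pr (bd (box n (k + 1))) (bd (box n (k + 1))) (cup k (tt Prod.snd) (tt Prod.fst)) = (-1) ^ k := by
  have e : (cup k (tt (X := QQ k) Prod.snd) (tt Prod.fst)) = cup k (fun l => tt id (l.map Prod.snd))
      (fun l => tt id (l.map Prod.fst)) := by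
    funext l; simp only [cup, tt_map]; rfl
  rw [e, pr_eval' ((supp_bd_box hn _).mono fun l h => h.1) ((supp_bd_box hn _).mono fun l h => h.1) (NR_tt _),
    tt_bd_box hn, ← mul_pow]
  simp [pow_mul]
  rcases Nat.even_or_odd k with h | h
  · simp [h.neg_one_pow]
  · simp [h.neg_one_pow]

lemma e2 (hn : 0 < n) (hk : 0 < k) :
    pr (bd (box n (k + 1))) (bd (box n (k + 1))) (cup k (tt Prod.snd) (tt Prod.snd)) = 0 := by
  have e : (cup k (tt (X := QQ k) Prod.snd) (tt Prod.snd)) = fun l => cup k (tt id) (tt id) (l.map Prod.snd) := by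
    funext l; simp only [cup, ← List.map_take, ← List.map_drop, tt_map]; rfl
  rw [e]
  exact pr_zero_snd _ ((supp_bd_box hn _).mono fun l h => by have := h.1; omega) (NR_cup (NR_tt _) (NR_tt _))

lemma e1 (hn : 0 < n) (hk : 0 < k) :
    pr (bd (box n (k + 1))) (bd (box n (k + 1))) (cup k (tt Prod.fst) (tt Prod.fst)) = 0 := by
  have e : (cup k (tt (X := QQ k) Prod.fst) (tt Prod.fst)) = fun l => cup k (tt id) (tt id) (l.map Prod.fst) := by
    funext l; simp only [cup, ← List.map_take, ← List.map_drop, tt_map]; rfl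
  rw [e]
  exact pr_zero_fst _ ((supp_bd_box hn _).mono fun l h => by have := h.1; omega) (NR_cup (NR_tt _) (NR_tt _))

lemma e_cyc (hn : 0 < n) (φ : List (QQ k) → ℤ) :
    bd (pr (bd (box n (k + 1))) (bd (box n (k + 1)))) φ = 0 := by
  rw [bd_pr (p := k + 1) _ _ ((supp_bd_box hn _).mono fun l h => h.1)]
  have h0 : ∀ ψ, bd (bd (box n (k + 1))) ψ = 0 := fun ψ => bd_bd _ _
  rw [pr_apply, pr_apply, h0]
  simp only [h0]; rw [ch_zero]; simp

variable {α : Bool → QQ k → Fin (k + 1) → ℝ}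

lemma dlS {l : List (QQ k)} (hlen : 2 ≤ l.length) (h5 : ww Prod.fst l = 0) (h6 : ww Prod.snd l = 0)
    (η : List (QQ k) → ℤ) :
    dl (fun l => tt Prod.fst l - tt Prod.snd l + dl η l) l = 0 := by
  rw [dl_add (fun l => tt Prod.fst l - tt Prod.snd l) (dl η),
    dl_sub, dl_dl, dl_tt _ _ hlen, dl_tt _ _ hlen, h5, h6]
  simp

lemma expand (hn : 0 < n) (hk : 0 < k)
    (h5 : ∀ l : List (QQ k), G1 (2 / n : ℝ) l → ww Prod.fst l = 0)
    (h6 : ∀ l : List (QQ k), G2 (2 / n : ℝ) l → ww Prod.snd l = 0)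
    (η β : List (QQ k) → ℤ) (V : List (QQ k) → ℤ)
    (hV : ∀ l : List (QQ k), G1 (2 / n : ℝ) l → G2 (2 / n : ℝ) l → 2 ≤ l.length → dl V l = 0) :
    pr (bd (box n (k + 1))) (bd (box n (k + 1)))
      (cup k (fun l => tt Prod.fst l - tt Prod.snd l + dl η l) (fun l => V l + dl β l)) =
    pr (bd (box n (k + 1))) (bd (box n (k + 1))) (cup k (tt Prod.fst) V) -
    pr (bd (box n (k + 1))) (bd (box n (k + 1))) (cup k (tt Prod.snd) V) := by
  set e := pr (bd (box n (k + 1))) (bd (box n (k + 1))) with he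
  have hsup := supp_e (k := k) hn
  rw [← he] at hsup
  have hcyc := e_cyc (k := k) hn
  rw [← he] at hcyc
  have r1 : e (cup k (fun l => tt Prod.fst l - tt Prod.snd l + dl η l) (dl β)) = 0 := by
    refine stokes_right hsup (fun l hl => by omega) ?_ hcyc
    rintro l ⟨hl, hl1, hl2⟩
    have hsub := List.take_subset (k + 2) l
    exact dlS (by simp; omega) (h5 _ (hl1.sub hsub)) (h6 _ (hl2.sub hsub)) η
  have r2 : e (cup k (dl η) V) = 0 := by
    obtain ⟨k', rfl⟩ : ∃ k', k = k' + 1 := ⟨k - 1, by omega⟩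
    refine stokes_left hsup (fun l hl => by omega) ?_ hcyc
    rintro l ⟨hl, hl1, hl2⟩
    have hsub := List.drop_subset k' l
    exact hV _ (hl1.sub hsub) (hl2.sub hsub) (by simp; omega)
  have e1 : (cup k (fun l => tt Prod.fst l - tt Prod.snd l + dl η l) (fun l => V l + dl β l)) =
      fun l => (cup k (tt Prod.fst) V l - cup k (tt Prod.snd) V l) +
        (cup k (dl η) V l + cup k (fun l => tt Prod.fst l - tt Prod.snd l + dl η l) (dl β) l) := by
    funext l; simp only [cup]; ring
  rw [e1, ch_add, ch_sub, ch_add, r1, r2]; ring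

theorem parity (h : BD k n α) : Odd k := by
  obtain ⟨hn, hk, r, β, β', h1, h2, h3, h4, h5, h6⟩ := h
  have key := expand hn hk h5 h6 (fun l => β true l - β' true l) (fun l => β false l - β' false l)
    (fun l => tt Prod.fst l - tt Prod.snd l) (by
      intro l hl1 hl2 hlen
      rw [dl_sub, dl_tt _ _ hlen, dl_tt _ _ hlen, h5 l hl1, h6 l hl2]; simp)
  have z : pr (bd (box n (k + 1))) (bd (box n (k + 1)))
      (cup k (fun l => tt Prod.fst l - tt Prod.snd l + dl (fun l => β true l - β' true l) l)
        (fun l => tt Prod.fst l - tt Prod.snd l + dl (fun l => β false l - β' false l) l)) = 0 := by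
    apply (supp_e (k := k) hn).zero
    rintro l ⟨hl, hl1, hl2⟩
    have hs1 := List.take_subset (k + 1) l
    have hs2 := List.drop_subset k l
    rcases h1 l (Or.inl hl1) with hr | hr
    · rw [cup, dl_sub]
      have a1 := h3 true _ (hl1.sub hs1) (fun p hp => hr p (hs1 hp)) (by simp; omega)
      have a2 := h4 true _ (hl2.sub hs1) (fun p hp => hr p (hs1 hp)) (by simp; omega)
      rw [mul_eq_zero]; left; linarith
    · rw [cup, dl_sub (β false)]
      have a1 := h3 false _ (hl1.sub hs2) (fun p hp => hr p (hs2 hp)) (by simp; omega)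
      have a2 := h4 false _ (hl2.sub hs2) (fun p hp => hr p (hs2 hp)) (by simp; omega)
      rw [mul_eq_zero]; right; linarith
  rw [z] at key
  have x1 : (cup k (tt (X := QQ k) Prod.fst) (fun l => tt Prod.fst l - tt Prod.snd l)) = fun l =>
      cup k (tt Prod.fst) (tt Prod.fst) l - cup k (tt Prod.fst) (tt Prod.snd) l := by
    funext l; simp only [cup]; ring
  have x2 : (cup k (tt (X := QQ k) Prod.snd) (fun l => tt Prod.fst l - tt Prod.snd l)) = fun l =>
      cup k (tt Prod.snd) (tt Prod.fst) l - cup k (tt Prod.snd) (tt Prod.snd) l := by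
    funext l; simp only [cup]; ring
  rw [x1, x2, ch_sub, ch_sub, e1 hn hk, e2 hn hk, eSS hn, eSS' hn] at key
  by_contra hodd
  rw [Nat.not_odd_iff_even] at hodd
  rw [hodd.neg_one_pow] at key
  norm_num at key

theorem degree (h : BD k n α) :
    pr (box n (k + 1)) (box n (k + 1)) (cup (k + 1) (ww (α true)) (ww (α false))) = 1 := by
  obtain ⟨hn, hk, r, β, β', h1, h2, h3, h4, h5, h6⟩ := h
  have hs : ((-1 : ℤ) ^ k) * (-1) ^ k = 1 := by rw [← mul_pow]; simp
  -- step 1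
  have st1 : pr (box n (k + 1)) (box n (k + 1)) (cup (k + 1) (ww (α true)) (ww (α false))) =
      (-1) ^ k * bd (pr (box n (k + 1)) (box n (k + 1))) (cup k (tt (α true)) (ww (α false))) := by
    rw [bd_apply, ← ch_smul]
    apply supp_c0
    rintro l ⟨hl, -, -⟩
    rw [cup_leib _ _ _ _ (by omega)]
    simp only [cup]
    rw [dl_tt _ _ (by simp; omega)]
    have : dl (ww (α false)) (l.drop k) = 0 := by
      have e : dl (ww (α false)) (l.drop k) = dl (fun l => (-1) ^ k * dl (tt (α false)) l) (l.drop k) := by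
        apply dl_congr
        intro l' _ hl'
        rw [dl_tt _ _ (by simp at hl'; omega), ← mul_assoc, hs, one_mul]
      rw [e, dl_smul, dl_dl, mul_zero]
    rw [this]
    linear_combination (-(ww (α true) (take (k + 1 + 1) l) * ww (α false) (drop (k + 1) l))) * hs
  rw [st1, bd_pr _ _ (box_len n (k + 1))]
  -- step 2
  have gen : ∀ (c : Ch (QQ k)) (Gi : List (QQ k) → Prop) (S β : List (QQ k) → ℤ),
      Supp c (fun l => l.length = 2 * k + 2 ∧ Gi l) →
      (∀ l, Gi l → (G1 (2 / n : ℝ) l ∨ G2 (2 / n : ℝ) l)) →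
      (∀ l l', Gi l → l' ⊆ l → Gi l') →
      (∀ l, Gi l → (∀ p ∈ l, r true p) → l.length = k + 1 → tt (α true) l = S l + dl β l) →
      (∀ l, Gi l → 2 ≤ l.length → dl S l = 0) →
      c (cup k (tt (α true)) (ww (α false))) = bd c (cup k (fun l => S l + dl β l) (tt (α false))) := by
    intro c Gi S β hc hG hsub hT hS
    rw [bd_apply]
    apply hc
    rintro l ⟨hl, hGl⟩
    have hs1 := List.take_subset (k + 1) l
    have hs2 := List.drop_subset k l
    have hs3 := List.take_subset (k + 2) l
    rw [cup_leib _ _ _ _ (by omega)]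
    simp only [cup]
    rw [dl_add S (dl β), dl_dl, hS _ (hsub _ _ hGl hs3) (by simp; omega), dl_tt _ _ (by simp; omega)]
    have hcase : tt (α true) (take (k + 1) l) * ww (α false) (drop k l) =
        (S (take (k + 1) l) + dl β (take (k + 1) l)) * ww (α false) (drop k l) := by
      rcases h1 l (hG l hGl) with hr | hr
      · rw [hT _ (hsub _ _ hGl hs1) (fun p hp => hr p (hs1 hp)) (by simp; omega)]
      · rw [h2 false _ (hG _ (hsub _ _ hGl hs2)) (fun p hp => hr p (hs2 hp))]; simp
    rw [hcase]
    linear_combination (-((S (take (k + 1) l) + dl β (take (k + 1) l)) * ww (α false) (drop k l))) * hs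
  have g1 := gen _ (G1 (2 / n : ℝ)) (tt Prod.fst) (β true) (supp_c1 hn) (fun l h => Or.inl h)
    (fun l l' h h' => h.sub h') (h3 true) (fun l h h' => by rw [dl_tt _ _ h', h5 l h, mul_zero])
  have g2 := gen _ (G2 (2 / n : ℝ)) (tt Prod.snd) (β' true) (supp_c2 hn) (fun l h => Or.inr h)
    (fun l l' h h' => h.sub h') (h4 true) (fun l h h' => by rw [dl_tt _ _ h', h6 l h, mul_zero])
  rw [g1, g2, bd_pr (p := k + 1) _ _ ((supp_bd_box hn _).mono fun l h => h.1), bd_pr _ _ (box_len n (k + 1))]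
  have h0 : ∀ ψ, bd (bd (box n (k + 1))) ψ = 0 := fun ψ => bd_bd _ _
  have z1 : ∀ φ, pr (bd (bd (box n (k + 1)))) (box n (k + 1)) φ = 0 := by
    intro φ; rw [pr_apply, h0]
  have z2 : ∀ φ, pr (box n (k + 1)) (bd (bd (box n (k + 1)))) φ = 0 := by
    intro φ; rw [pr_apply]; simp only [h0]; exact ch_zero _
  rw [z1, z2]
  -- step 3
  have key := expand hn hk h5 h6 (fun l => β true l - β' true l) (β' false) (tt Prod.snd)
    (by intro l hl1 hl2 hlen; rw [dl_tt _ _ hlen, h6 l hl2, mul_zero])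
  rw [eSS hn, e2 hn hk] at key
  have fin : pr (bd (box n (k + 1))) (bd (box n (k + 1)))
      (cup k (fun l => tt Prod.fst l + dl (β true) l) (tt (α false))) -
      pr (bd (box n (k + 1))) (bd (box n (k + 1)))
      (cup k (fun l => tt Prod.snd l + dl (β' true) l) (tt (α false))) = 1 := by
    rw [← sub_zero (1 : ℤ), ← key, ← ch_sub]
    apply supp_e hn
    rintro l ⟨hl, hl1, hl2⟩
    have hs1 := List.take_subset (k + 1) l
    have hs2 := List.drop_subset k l
    simp only [cup]
    rw [dl_sub (β true)]
    rcases h1 l (Or.inl hl1) with hr | hr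
    · have a1 := h3 true _ (hl1.sub hs1) (fun p hp => hr p (hs1 hp)) (by simp; omega)
      have a2 := h4 true _ (hl2.sub hs1) (fun p hp => hr p (hs1 hp)) (by simp; omega)
      have a3 : tt Prod.fst (take (k + 1) l) - tt Prod.snd (take (k + 1) l) +
        (dl (β true) (take (k + 1) l) - dl (β' true) (take (k + 1) l)) = 0 := by linarith
      rw [a3, ← a1, ← a2]; ring
    · have a2 := h4 false _ (hl2.sub hs2) (fun p hp => hr p (hs2 hp)) (by simp; omega)
      rw [← a2]; ring
  simp only [pow_succ]
  linear_combination fin + (pr (bd (box n (k + 1))) (bd (box n (k + 1)))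
      (cup k (fun l => tt Prod.fst l + dl (β true) l) (tt (α false))) -
      pr (bd (box n (k + 1))) (bd (box n (k + 1)))
      (cup k (fun l => tt Prod.snd l + dl (β' true) l) (tt (α false)))) * hs

end core
end LC

namespace LC
open List
variable {X Y Z : Type*}

/-- the double cube -/
def K2 (k : ℕ) : Set (QQ k) := {p | ‖p.1‖ ≤ 1 ∧ ‖p.2‖ ≤ 1}
/-- first boundary part -/
def E1 (k : ℕ) : Set (QQ k) := {p | ‖p.1‖ = 1 ∧ ‖p.2‖ ≤ 1}
/-- second boundary part -/
def E2 (k : ℕ) : Set (QQ k) := {p | ‖p.1‖ ≤ 1 ∧ ‖p.2‖ = 1}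

lemma K2_compact (k : ℕ) : IsCompact (K2 k) := by
  have : K2 k = Metric.closedBall 0 1 ×ˢ Metric.closedBall 0 1 := by
    ext p; simp [K2]
  rw [this]
  exact (isCompact_closedBall _ _).prod (isCompact_closedBall _ _)

lemma E1_compact (k : ℕ) : IsCompact (E1 k) := by
  have : E1 k = Metric.sphere 0 1 ×ˢ Metric.closedBall 0 1 := by
    ext p; simp [E1]
  rw [this]
  exact (isCompact_sphere _ _).prod (isCompact_closedBall _ _)

lemma E2_compact (k : ℕ) : IsCompact (E2 k) := by
  have : E2 k = Metric.closedBall 0 1 ×ˢ Metric.sphere 0 1 := by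
    ext p; simp [E2]
  rw [this]
  exact (isCompact_closedBall _ _).prod (isCompact_sphere _ _)

lemma E1_sub (k : ℕ) : E1 k ⊆ K2 k := fun _ h => ⟨h.1.le, h.2⟩
lemma E2_sub (k : ℕ) : E2 k ⊆ K2 k := fun _ h => ⟨h.1, h.2.le⟩

lemma mesh {ε : ℝ} (hε : 0 < ε) : ∃ n0 : ℕ, ∀ n ≥ n0, 0 < n ∧ (2 / n : ℝ) ≤ ε := by
  obtain ⟨n0, h⟩ := exists_nat_gt (2 / ε)
  refine ⟨n0, fun n hn => ?_⟩
  have h0 : (0:ℝ) < 2 / ε := by positivity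
  have h1 : (2 / ε) < n := lt_of_lt_of_le h (by exact_mod_cast hn)
  have h2 : (0:ℝ) < n := h0.trans h1
  refine ⟨by exact_mod_cast h2, ?_⟩
  rw [div_le_iff₀ h2]
  rw [div_lt_iff₀ hε] at h1
  linarith

lemma Sm.mono [PseudoMetricSpace X] {ε ε' : ℝ} {l : List X} (h : Sm ε l) (hs : ε ≤ ε') : Sm ε' l :=
  fun x hx y hy => (h x hx y hy).trans hs

lemma hom_exists {k : ℕ} (hk : 0 < k) {D : Set (QQ k)} (hD : IsCompact D)
    (h : QQ k × ℝ → Fin (k + 1) → ℝ)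
    (hc : ContinuousOn h (D ×ˢ Set.Icc (-1) 1)) (hne : ∀ x ∈ D ×ˢ Set.Icc (-1 : ℝ) 1, h x ≠ 0)
    (f g : QQ k → Fin (k + 1) → ℝ) (hf : ∀ p ∈ D, ∀ j, sg (h (p, -1) j) = sg (f p j))
    (hg : ∀ p ∈ D, ∀ j, sg (h (p, 1) j) = sg (g p j)) :
    ∃ n0 : ℕ, ∀ n ≥ n0, ∃ β : List (QQ k) → ℤ, ∀ l, Sm (2 / n : ℝ) l → (∀ p ∈ l, p ∈ D) →
      l.length = k + 1 → tt g l = tt f l + dl β l := by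
  obtain ⟨ε, hε, h1⟩ := small_sign' (hD.prod isCompact_Icc) hc hne
  obtain ⟨n0, hn0⟩ := mesh hε
  refine ⟨n0, fun n hn => ⟨fun l => (-1) ^ k * (-1) * Jc (pp n) n (fun b => EP l b (tt h)), fun l hl hlD hlen => ?_⟩⟩
  · rw [hom_formula h n l hlen _ (hn0 n hn).1 hk,
      tt_congr (g := f) fun p hp => hf p (hlD p hp), tt_congr (g := g) fun p hp => hg p (hlD p hp)]
    · ring
    · intro L hL1 hL2 hL3
      apply h1
      · intro p hp q hq
        refine (max_le (hl _ (hL1 p hp) _ (hL1 q hq)) (hL3 p hp q hq)).trans (hn0 n hn).2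
      · intro p hp
        exact ⟨hlD _ (hL1 p hp), abs_le.1 (hL2 p hp)⟩

theorem BD_of {k : ℕ} (hk : 0 < k) (α : Bool → QQ k → Fin (k + 1) → ℝ) (ρ : Bool → QQ k → ℝ)
    (hρ : ∀ i, ContinuousOn (ρ i) (K2 k)) (hρ1 : ∀ p ∈ K2 k, ρ true p + ρ false p = 1)
    (hα : ∀ i, ContinuousOn (α i) (K2 k))
    (hαne : ∀ i, ∀ p, p ∈ E1 k ∨ p ∈ E2 k → 1 / 4 ≤ ρ i p → α i p ≠ 0)
    (h h' : Bool → QQ k × ℝ → Fin (k + 1) → ℝ)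
    (hc : ∀ i, ContinuousOn (h i) ({p | p ∈ E1 k ∧ 1 / 4 ≤ ρ i p} ×ˢ Set.Icc (-1) 1))
    (hne : ∀ i, ∀ x ∈ {p | p ∈ E1 k ∧ 1 / 4 ≤ ρ i p} ×ˢ Set.Icc (-1 : ℝ) 1, h i x ≠ 0)
    (hf : ∀ i, ∀ p ∈ E1 k, 1 / 4 ≤ ρ i p → ∀ j, sg (h i (p, -1) j) = sg (p.1 j))
    (hg : ∀ i, ∀ p ∈ E1 k, 1 / 4 ≤ ρ i p → ∀ j, sg (h i (p, 1) j) = sg (α i p j))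
    (hc' : ∀ i, ContinuousOn (h' i) ({p | p ∈ E2 k ∧ 1 / 4 ≤ ρ i p} ×ˢ Set.Icc (-1) 1))
    (hne' : ∀ i, ∀ x ∈ {p | p ∈ E2 k ∧ 1 / 4 ≤ ρ i p} ×ˢ Set.Icc (-1 : ℝ) 1, h' i x ≠ 0)
    (hf' : ∀ i, ∀ p ∈ E2 k, 1 / 4 ≤ ρ i p → ∀ j, sg (h' i (p, -1) j) = sg (p.2 j))
    (hg' : ∀ i, ∀ p ∈ E2 k, 1 / 4 ≤ ρ i p → ∀ j, sg (h' i (p, 1) j) = sg (α i p j)) :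
    ∃ n0 : ℕ, ∀ n ≥ n0, BD k n α := by
  have cl : ∀ i (E : Set (QQ k)), E ⊆ K2 k → IsCompact E → IsCompact {p | p ∈ E ∧ 1 / 4 ≤ ρ i p} := by
    intro i E hE hEc
    have := ((hρ i).mono hE).preimage_isClosed_of_isClosed hEc.isClosed (isClosed_Ici (a := (1 / 4 : ℝ)))
    exact hEc.of_isClosed_subset this (fun p hp => hp.1)
  have cE1 := fun i => cl i _ (E1_sub k) (E1_compact k)
  have cE2 := fun i => cl i _ (E2_sub k) (E2_compact k)
  have c1 := fun i => hom_exists hk (cE1 i) (h i) (hc i) (hne i) Prod.fst (α i)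
    (fun p hp => hf i p hp.1 hp.2) (fun p hp => hg i p hp.1 hp.2)
  have c2 := fun i => hom_exists hk (cE2 i) (h' i) (hc' i) (hne' i) Prod.snd (α i)
    (fun p hp => hf' i p hp.1 hp.2) (fun p hp => hg' i p hp.1 hp.2)
  choose n1 hn1 using c1
  choose n2 hn2 using c2
  have c3 := fun i => small_sign' (cE1 i) ((hα i).mono fun p hp => E1_sub k hp.1)
    (fun p hp => hαne i p (Or.inl hp.1) hp.2)
  have c4 := fun i => small_sign' (cE2 i) ((hα i).mono fun p hp => E2_sub k hp.1)
    (fun p hp => hαne i p (Or.inr hp.1) hp.2)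
  choose ε3 hε3 h3 using c3
  choose ε4 hε4 h4 using c4
  obtain ⟨ε5, hε5, h5⟩ := small_sign' (E1_compact k) (f := Prod.fst) continuous_fst.continuousOn
    (by rintro p hp h0; have := hp.1; rw [h0] at this; simp at this)
  obtain ⟨ε6, hε6, h6⟩ := small_sign' (E2_compact k) (f := Prod.snd) continuous_snd.continuousOn
    (by rintro p hp h0; have := hp.2; rw [h0] at this; simp at this)
  have hu := (K2_compact k).uniformContinuousOn_of_continuous (hρ true)
  rw [Metric.uniformContinuousOn_iff] at hu
  obtain ⟨δ, hδ, h7⟩ := hu (1 / 4) (by norm_num)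
  obtain ⟨n3, hn3⟩ := mesh (ε := min (min (min (ε3 true) (ε3 false)) (min (ε4 true) (ε4 false)))
    (min (min ε5 ε6) (δ / 2))) (by
      have := hε3 true; have := hε3 false; have := hε4 true; have := hε4 false
      simp only [lt_min_iff]
      refine ⟨⟨⟨?_, ?_⟩, ?_, ?_⟩, ⟨?_, ?_⟩, ?_⟩ <;> first | assumption | positivity)
  refine ⟨n1 true + n1 false + n2 true + n2 false + n3, fun n hn => ?_⟩
  obtain ⟨hn0, hm⟩ := hn3 n (by omega)
  simp only [le_min_iff] at hm
  obtain ⟨⟨⟨m1, m2⟩, m3, m4⟩, ⟨m5, m6⟩, m7⟩ := hm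
  have m3' : ∀ i, (2 / n : ℝ) ≤ ε3 i := by intro i; cases i <;> assumption
  have m4' : ∀ i, (2 / n : ℝ) ≤ ε4 i := by intro i; cases i <;> assumption
  have q1 := fun i => hn1 i n (by cases i <;> omega)
  have q2 := fun i => hn2 i n (by cases i <;> omega)
  choose β hβ using q1
  choose β' hβ' using q2
  refine ⟨hn0, hk, fun i p => 1 / 4 ≤ ρ i p, β, β', ?_, ?_, ?_, ?_, ?_, ?_⟩
  · intro l hl
    have hsm : Sm (2 / n : ℝ) l := by rcases hl with h | h <;> exact h.1
    have hK : ∀ p ∈ l, p ∈ K2 k := by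
      rcases hl with h | h
      · exact fun p hp => E1_sub k (h.2 p hp)
      · exact fun p hp => E2_sub k (h.2 p hp)
    by_contra hcon
    push Not at hcon
    obtain ⟨⟨p, hp, h8⟩, q, hq, h9⟩ := hcon
    have := h7 p (hK p hp) q (hK q hq) (lt_of_le_of_lt ((hsm p hp q hq).trans m7) (by linarith))
    rw [Real.dist_eq, abs_lt] at this
    have := hρ1 q (hK q hq)
    linarith
  · rintro i l (hl | hl) hr
    · exact h3 i l (hl.1.mono (m3' i)) fun p hp => ⟨hl.2 p hp, hr p hp⟩
    · exact h4 i l (hl.1.mono (m4' i)) fun p hp => ⟨hl.2 p hp, hr p hp⟩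
  · intro i l hl hr hlen
    exact hβ i l hl.1 (fun p hp => ⟨hl.2 p hp, hr p hp⟩) hlen
  · intro i l hl hr hlen
    exact hβ' i l hl.1 (fun p hp => ⟨hl.2 p hp, hr p hp⟩) hlen
  · intro l hl
    exact h5 l (hl.1.mono m5) hl.2
  · intro l hl
    exact h6 l (hl.1.mono m6) hl.2

end LC

namespace LC
open List
variable {X Y Z : Type*}

lemma alg_end {G Λ : Type*} [Group G] [Finite G] [Fintype Λ] [Nontrivial Λ] [MulAction G Λ]
    [MulAction.IsPretransitive G Λ] (c1 c2 : Λ → ℤ) (k : G → Λ → Λ → ℤ)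
    (hk : ∀ g h x y, k (g * h) (g • x) (g • y) = k g (g • x) (g • y) + k h x y)
    (h1 : ∀ g x, c1 (g • x) = c1 x + ∑ y, k g (g • x) (g • y))
    (h2 : ∀ g y, c2 (g • y) = c2 y - ∑ x, k g (g • x) (g • y))
    (ht : ∑ x, c1 x + ∑ x, c2 x = 1) : False := by
  classical
  have := Fintype.ofFinite G
  obtain ⟨N, hN⟩ : ∃ N : ℤ, N = ((Fintype.card G : ℕ) : ℤ) := ⟨_, rfl⟩
  have hN0 : N ≠ 0 := by rw [hN]; exact_mod_cast Fintype.card_ne_zero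
  set e : Λ → Λ → ℤ := fun x y => (∑ h, k h x y) / N with he
  have hke : ∀ g x y, k g (g • x) (g • y) = e (g • x) (g • y) - e x y := by
    intro g x y
    have : ∑ h, k h (g • x) (g • y) = ∑ h, k h x y + N * k g (g • x) (g • y) := by
      rw [← Equiv.sum_comp (Equiv.mulLeft g)]
      simp only [Equiv.coe_mulLeft, hk, Finset.sum_add_distrib, Finset.sum_const, Finset.card_univ,
        nsmul_eq_mul]
      rw [hN]; ring
    simp only [he]
    rw [this, Int.add_mul_ediv_left _ _ hN0]; ring
  obtain ⟨x0⟩ : Nonempty Λ := inferInstance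
  have d1 : ∀ x, c1 x - ∑ y, e x y = c1 x0 - ∑ y, e x0 y := by
    intro x
    obtain ⟨g, rfl⟩ := MulAction.exists_smul_eq G x0 x
    rw [h1]; simp only [hke, Finset.sum_sub_distrib]
    rw [Fintype.sum_bijective _ (MulAction.bijective g) (fun y => e (g • x0) (g • y)) (fun y => e (g • x0) y)
      (fun _ => rfl)]
    ring
  have d2 : ∀ y, c2 y + ∑ x, e x y = c2 x0 + ∑ x, e x x0 := by
    intro x
    obtain ⟨g, rfl⟩ := MulAction.exists_smul_eq G x0 x
    rw [h2]; simp only [hke, Finset.sum_sub_distrib]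
    rw [Fintype.sum_bijective _ (MulAction.bijective g) (fun y => e (g • y) (g • x0)) (fun y => e y (g • x0))
      (fun _ => rfl)]
    ring
  have s1 : ∑ x, (c1 x - ∑ y, e x y) + ∑ y, (c2 y + ∑ x, e x y) = 1 := by
    rw [Finset.sum_sub_distrib, Finset.sum_add_distrib, Finset.sum_comm (f := fun x y => e x y)]
    linarith
  simp only [d1, d2, Finset.sum_const, Finset.card_univ, nsmul_eq_mul, ← mul_add] at s1
  have h3 : (Fintype.card Λ : ℤ) ∣ 1 := ⟨_, s1.symm⟩
  have h4 := Fintype.one_lt_card (α := Λ)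
  have := Int.le_of_dvd one_pos h3
  omega

section seg
variable {W : Type*} [NormedAddCommGroup W] [NormedSpace ℝ W]

/-- segment with parameter in [-1,1] -/
noncomputable def seg (w w' : W) (t : ℝ) : W := ((1 - t) / 2) • w + ((1 + t) / 2) • w'

lemma seg_one (w w' : W) : seg w w' 1 = w' := by simp [seg]
lemma seg_neg_one (w w' : W) : seg w w' (-1) = w := by simp [seg]

lemma seg_mem {w w' : W} {t : ℝ} {S : Set W} (hS : Convex ℝ S) (h : w ∈ S) (h' : w' ∈ S) (ht : |t| ≤ 1) :
    seg w w' t ∈ S := by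
  rw [abs_le] at ht
  exact hS h h' (by linarith) (by linarith) (by ring)

lemma seg_dist {w u u' : W} {s s' R : ℝ} (hw : ‖w‖ ≤ R) (hu : ‖u‖ ≤ R) (hs : |s'| ≤ 1) :
    dist (seg w u s) (seg w u' s') ≤ |s - s'| * R + dist u u' := by
  have e : seg w u s - seg w u' s' = ((s' - s) / 2) • (w - u) + ((1 + s') / 2) • (u - u') := by
    simp only [seg]; module
  rw [dist_eq_norm, e, dist_eq_norm]
  refine (norm_add_le _ _).trans (add_le_add ?_ ?_)
  · rw [norm_smul, Real.norm_eq_abs, abs_div, abs_sub_comm, abs_two]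
    have := norm_sub_le w u
    have h0 := abs_nonneg (s - s')
    nlinarith
  · rw [norm_smul, Real.norm_eq_abs]
    rw [abs_le] at hs
    rw [abs_of_nonneg (by linarith)]
    nlinarith [norm_nonneg (u - u')]

/-- integral of a one-cochain along a segment -/
noncomputable def Xi (n : ℕ) (Ψ : List W → ℤ) (w w' : W) : ℤ :=
  Jc (pp n) n (fun l => Ψ (l.map (seg w w')))

lemma tri {D : Set W} {ε R : ℝ} {n : ℕ} (hn : 0 < n) (hR : ∀ w ∈ D, ‖w‖ ≤ R) (hm : 2 / n * (2 * R) ≤ ε)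
    {Ψ : List W → ℤ} (hΨ : ∀ l, l.length = 3 → Sm ε l → (∀ w ∈ l, w ∈ D) → dl Ψ l = 0)
    {w w' w'' : W} (hD : convexHull ℝ {w, w', w''} ⊆ D) :
    Xi n Ψ w w' + Xi n Ψ w' w'' = Xi n Ψ w w'' := by
  set f : ℝ × ℝ → W := fun q => seg w (seg w' w'' q.2) q.1 with hf
  have hcv := convex_convexHull ℝ ({w, w', w''} : Set W)
  have hs := subset_convexHull ℝ ({w, w', w''} : Set W)
  have m1 := hs (show w ∈ ({w, w', w''} : Set W) by simp)
  have m2 := hs (show w' ∈ ({w, w', w''} : Set W) by simp)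
  have m3 := hs (show w'' ∈ ({w, w', w''} : Set W) by simp)
  have hR0 : 0 ≤ R := (norm_nonneg w).trans (hR w (hD m1))
  have h0 : (0:ℝ) ≤ 2 / n := by positivity
  have key : ∀ l : List (ℝ × ℝ), (∃ a b : List ℝ, (a.length = 2 ∧ Sm (2 / n : ℝ) a ∧ ∀ x ∈ a, |x| ≤ 1) ∧
      (b.length = 2 ∧ Sm (2 / n : ℝ) b ∧ ∀ x ∈ b, |x| ≤ 1) ∧
      l.length + 1 = a.length + b.length ∧ ∀ p ∈ l, p.1 ∈ a ∧ p.2 ∈ b) → dl Ψ (l.map f) = 0 := by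
    rintro l ⟨a, b, ⟨a1, a2, a3⟩, ⟨b1, b2, b3⟩, h4, h5⟩
    have mem : ∀ p ∈ l, seg w' w'' p.2 ∈ convexHull ℝ ({w, w', w''} : Set W) := fun p hp =>
      seg_mem hcv m2 m3 (b3 _ (h5 p hp).2)
    have mem' : ∀ p ∈ l, f p ∈ convexHull ℝ ({w, w', w''} : Set W) := fun p hp =>
      seg_mem hcv m1 (mem p hp) (a3 _ (h5 p hp).1)
    apply hΨ
    · simp; omega
    · intro u hu u' hu'
      obtain ⟨p, hp, rfl⟩ := List.mem_map.1 hu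
      obtain ⟨q, hq, rfl⟩ := List.mem_map.1 hu'
      refine le_trans ?_ hm
      have d1 := a2 _ (h5 p hp).1 _ (h5 q hq).1
      have d2 := b2 _ (h5 p hp).2 _ (h5 q hq).2
      have e1 := seg_dist (s := p.1) (s' := q.1) (u' := seg w' w'' q.2) (hR _ (hD m1)) (hR _ (hD (mem p hp)))
        (a3 _ (h5 q hq).1)
      have e2 := seg_dist (s := p.2) (s' := q.2) (u' := w'') (hR _ (hD m2)) (hR _ (hD m3))
        (b3 _ (h5 q hq).2)
      rw [dist_self] at e2
      rw [Real.dist_eq] at d1 d2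
      have := mul_le_mul_of_nonneg_right d1 hR0
      have := mul_le_mul_of_nonneg_right d2 hR0
      simp only [hf]
      linarith
    · intro u hu
      obtain ⟨p, hp, rfl⟩ := List.mem_map.1 hu
      exact hD (mem' p hp)
  have hz : bd (pr (Jc (pp n) n) (Jc (pp n) n)) (fun l => Ψ (l.map f)) = 0 := by
    rw [bd_apply]
    refine ((supp_J n).pr (supp_J n)).zero fun l hl => ?_
    rw [dl_map]; exact key l hl
  have hw0 : Ψ [w, w] = 0 := by
    have := hΨ [w, w, w] rfl (by
      intro x hx y hy; simp at hx hy; subst hx hy; rw [dist_self]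
      exact le_trans (by positivity) hm) (by simp; exact hD m1)
    simpa [dl] using this
  rw [bd_pr _ _ ((supp_J n).mono fun l h => h.1), pr_bd_Jc ((supp_J n).mono fun l h => by
    rintro rfl; simp at h), pr_apply, bd_Jc, pp_last hn, pp_zero] at hz
  have s : Supp (Jc (pp n) n) (fun l => ∃ x y, l = [x, y]) := (supp_Jc _ _).mono (by
    rintro l ⟨i, _, rfl⟩; exact ⟨_, _, rfl⟩)
  have z1 : Jc (pp n) n (fun b => EP [1] b fun l => Ψ (l.map f)) = Xi n Ψ w' w'' := by
    refine s _ _ ?_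
    rintro _ ⟨x, y, rfl⟩
    rw [EP_singleton_left _ (by simp)]
    simp [hf, seg_one]
  have z2 : Jc (pp n) n (fun b => EP [-1] b fun l => Ψ (l.map f)) = 0 := by
    refine s.zero ?_
    rintro _ ⟨x, y, rfl⟩
    rw [EP_singleton_left _ (by simp)]
    simp [hf, seg_neg_one, hw0]
  have z3 : Jc (pp n) n (fun l => Ψ ((l.map fun x => (x, (1:ℝ))).map f)) = Xi n Ψ w w'' := by
    refine s _ _ ?_
    rintro _ ⟨x, y, rfl⟩
    simp [hf, seg_one]
  have z4 : Jc (pp n) n (fun l => Ψ ((l.map fun x => (x, (-1:ℝ))).map f)) = Xi n Ψ w w' := by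
    refine s _ _ ?_
    rintro _ ⟨x, y, rfl⟩
    simp [hf, seg_neg_one]
  rw [z1, z2, z3, z4] at hz
  norm_num at hz
  linarith

/-- hypotheses about segment lists -/
lemma seg_list {D : Set W} {ε R : ℝ} {n : ℕ} (hR : ∀ w ∈ D, ‖w‖ ≤ R) (hR0 : 0 ≤ R) (hm : 2 / n * (2 * R) ≤ ε)
    {w w' : W} (hD : convexHull ℝ {w, w'} ⊆ D) :
    Supp (Jc (pp n) n) (fun l => (∃ x y, l = [x, y]) ∧ Sm ε (l.map (seg w w')) ∧
      ∀ u ∈ l.map (seg w w'), u ∈ D) := by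
  have hcv := convex_convexHull ℝ ({w, w'} : Set W)
  have hs := subset_convexHull ℝ ({w, w'} : Set W)
  have m1 := hs (show w ∈ ({w, w'} : Set W) by simp)
  have m2 := hs (show w' ∈ ({w, w'} : Set W) by simp)
  have h0 : (0:ℝ) ≤ 2 / n := by positivity
  refine ((supp_Jc (pp n) n).and (supp_J n)).mono ?_
  rintro l ⟨⟨i, _, rfl⟩, a1, a2, a3⟩
  refine ⟨⟨_, _, rfl⟩, ?_, ?_⟩
  · intro u hu u' hu'
    obtain ⟨p, hp, rfl⟩ := List.mem_map.1 hu
    obtain ⟨q, hq, rfl⟩ := List.mem_map.1 hu'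
    refine le_trans ?_ hm
    have e2 := seg_dist (s := p) (s' := q) (u' := w') (hR _ (hD m1)) (hR _ (hD m2)) (a3 _ hq)
    have d1 := a2 _ hp _ hq
    rw [dist_self] at e2
    rw [Real.dist_eq] at d1
    have := mul_le_mul_of_nonneg_right d1 hR0
    have : 0 ≤ 2 / n * R := by positivity
    linarith
  · intro u hu
    obtain ⟨p, hp, rfl⟩ := List.mem_map.1 hu
    exact hD (seg_mem hcv m1 m2 (a3 _ hp))

lemma Xi_dl {n : ℕ} (hn : 0 < n) (c : List W → ℤ) (w w' : W) :
    Xi n (dl c) w w' = c [w'] - c [w] := by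
  have := bd_Jc (pp n) n (fun l => c (l.map (seg w w')))
  rw [pp_last hn, pp_zero, bd_apply] at this
  simp only [List.map_cons, List.map_nil, seg_one, seg_neg_one] at this
  rw [← this, Xi]
  congr 1
  funext l
  rw [dl_map]

end seg
end LC

namespace LC
open List
variable {X Y Z Q W : Type*}

lemma ww_congr {k : ℕ} {f g : X → Fin k → ℝ} {l : List X}
    (h : ∀ x ∈ l, f x = g x) : ww f l = ww g l := by
  apply Wb_congr
  · rw [List.forall₂_iff_get]
    simp only [List.length_ofFn, true_and]
    intro i hi hi' q hq
    simp [h q hq]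
  · intro q hq; rfl

lemma EP_map (f : Y → Z) (a : List X) (b : List Y) (χ : List (X × Z) → ℤ) :
    EP a (b.map f) χ = EP a b (fun l => χ (l.map (Prod.map id f))) := by
  induction hn : a.length + b.length using Nat.strong_induction_on generalizing a b χ with
  | _ n ih =>
    match a, b with
    | [], [] => simp [EP]
    | [], [_] => simp [EP]
    | [], _ :: _ :: _ => simp [EP]
    | _ :: _, [] => simp [EP]
    | x :: a, y :: b =>
      simp only [List.map_cons, EP]
      have h1 := ih (a.length + (y :: b).length) (by simp at hn ⊢; omega) a (y :: b)
        (fun l => χ ((x, f y) :: l)) rfl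
      have h2 := ih ((x :: a).length + b.length) (by simp at hn ⊢; omega) (x :: a) b
        (fun l => χ ((x, f y) :: l)) rfl
      simp only [List.map_cons] at h1
      rw [h1, h2]; rfl

/-- slant product -/
def sl (C : Ch Q) (χ : List (Q × W) → ℤ) (b : List W) : ℤ := C (fun a => EP a b χ)

lemma sl_dl {C : Ch Q} {N : ℕ} (hN : Even N) {SC SB : List Q → Prop}
    (hC : Supp C (fun l => l.length = N + 1 ∧ SC l)) (hB : Supp (bd C) SB)
    {χ χ' : List (Q × W) → ℤ} {b : List W}
    (h1 : ∀ a, SC a → ∀ L : List (Q × W), (∀ p ∈ L, p.1 ∈ a ∧ p.2 ∈ b) → L.length = N + b.length → dl χ L = χ' L)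
    (h2 : ∀ a, SB a → ∀ L : List (Q × W), (∀ p ∈ L, p.1 ∈ a ∧ p.2 ∈ b) → χ L = 0) :
    dl (sl C χ) b = sl C χ' b := by
  have e1 : sl C χ' b = C (fun a => EP a b (dl χ)) := by
    refine hC _ _ fun a ha => EP_congr fun L hL hm => ?_
    rw [h1 a ha.2 L hm (by omega)]
  have e2 : C (fun a => EP a b (dl χ)) = C (fun a => dl (fun a => EP a b χ) a + dl (fun b => EP a b χ) b) := by
    refine hC _ _ fun a ha => ?_
    rw [EP_dl, ha.1, (show Even (N + 1 + 1) by grind).neg_one_pow, one_mul]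
  have e3 : bd C (fun a => EP a b χ) = 0 := hB.zero fun a ha => EP_eq_zero fun L _ hm => h2 a ha L hm
  rw [bd_apply] at e3
  rw [e1, e2, ch_add, e3, zero_add]
  exact (ch_dl C (fun b a => EP a b χ) b).symm

/-- zero cochain -/
def z0 (u : Z → ℤ) : List Z → ℤ
  | [z] => u z
  | _ => 0
/-- one cochain -/
def z1 (u : Z → Z → ℤ) : List Z → ℤ
  | [z, z'] => u z z'
  | _ => 0

section
variable {Λ : Type*} [DecidableEq Λ] (st : Z → Bool) (lab : Z → Λ)

/-- indicator, first state -/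
def uu (x : Λ) (z : Z) : ℤ := if st z = true ∧ lab z = x then 1 else 0
/-- indicator, second state -/
def vv (x : Λ) (z : Z) : ℤ := if st z = false ∧ lab z = x then 1 else 0
/-- transition cochain -/
def ff (x y : Λ) : List Z → ℤ := z1 fun z z' => uu st lab x z * vv st lab y z' - vv st lab y z * uu st lab x z'

lemma dl_uu [Fintype Λ] {z z' : Z} (h : st z = st z' → lab z = lab z') (x : Λ) :
    dl (z0 (uu st lab x)) [z, z'] = - ∑ y, ff st lab x y [z, z'] := by
  simp only [dl, z0, ff, z1, uu, vv, Finset.sum_sub_distrib, ← Finset.mul_sum, ← Finset.sum_mul]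
  rcases hz : st z <;> rcases hz' : st z' <;> simp_all

lemma dl_vv [Fintype Λ] {z z' : Z} (h : st z = st z' → lab z = lab z') (y : Λ) :
    dl (z0 (vv st lab y)) [z, z'] = ∑ x, ff st lab x y [z, z'] := by
  simp only [dl, z0, ff, z1, uu, vv, Finset.sum_sub_distrib, ← Finset.mul_sum, ← Finset.sum_mul]
  rcases hz : st z <;> rcases hz' : st z' <;> simp_all

lemma dl_ff {z z' z'' : Z} (h : st z = st z' → lab z = lab z') (h' : st z' = st z'' → lab z' = lab z'')
    (h'' : st z = st z'' → lab z = lab z'') (x y : Λ) :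
    dl (ff st lab x y) [z, z', z''] = 0 := by
  simp only [dl, ff, z1, uu, vv]
  rcases hz : st z <;> rcases hz' : st z' <;> rcases hz'' : st z'' <;> simp_all <;> split_ifs <;> simp_all

lemma sum_uv [Fintype Λ] (z : Z) : ∑ x, uu st lab x z + ∑ x, vv st lab x z = 1 := by
  simp only [uu, vv]
  rcases hz : st z <;> simp_all
end

lemma len2 {N : ℕ} {L : List X} (h : L.length = N + 2) : ∃ z z', L.drop N = [z, z'] ∧ z ∈ L ∧ z' ∈ L := by
  have : (L.drop N).length = 2 := by simp; omega
  obtain ⟨z, z', h'⟩ := List.length_eq_two.1 this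
  refine ⟨z, z', h', ?_, ?_⟩ <;> apply List.mem_of_mem_drop (i := N) <;> rw [h'] <;> simp

lemma len3 {N : ℕ} {L : List X} (h : L.length = N + 3) :
    ∃ z z' z'', L.drop N = [z, z', z''] ∧ z ∈ L ∧ z' ∈ L ∧ z'' ∈ L := by
  have : (L.drop N).length = 3 := by simp; omega
  obtain ⟨z, z', z'', h'⟩ := List.length_eq_three.1 this
  refine ⟨z, z', z'', h', ?_, ?_, ?_⟩ <;> apply List.mem_of_mem_drop (i := N) <;> rw [h'] <;> simp

lemma len1 {N : ℕ} {L : List X} (h : L.length = N + 1) :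
    ∃ z, L.drop N = [z] ∧ z ∈ L := by
  have : (L.drop N).length = 1 := by simp; omega
  obtain ⟨z, h'⟩ := List.length_eq_one_iff.1 this
  refine ⟨z, h', ?_⟩
  apply List.mem_of_mem_drop (i := N); rw [h']; simp

lemma dl_cupww {k : ℕ} (f g : X → Fin k → ℝ) (L : List X) (hL : 2 ≤ L.length) :
    dl (cup k (ww f) (ww g)) L = 0 := by
  have e : cup k (ww f) (ww g) = Wb ((List.ofFn fun i : Fin k => fun x => sg (f x i)) ++
      List.ofFn fun i : Fin k => fun x => sg (g x i)) (fun _ => 1) := by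
    funext l; rw [Wb_append, List.length_ofFn]; rfl
  rw [e, dl_Wb _ _ _ hL, Wb_const, mul_zero]
  exact ⟨fun _ => 1, by simp, by simp⟩

lemma dl_cupOm {N : ℕ} (hN : Even N) {Om : List X → ℤ} (hOm : ∀ L, 2 ≤ L.length → dl Om L = 0)
    (ψ : List X → ℤ) (L : List X) (hL : N + 2 ≤ L.length) :
    dl (cup N Om ψ) L = cup N Om (dl ψ) L := by
  rw [cup_leib _ _ _ _ hL, hN.neg_one_pow, one_mul, cup, hOm _ (by simp; omega), zero_mul, zero_add]

/-- vanishing of `cup k (ww f) (ww g)` on sublists -/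
lemma cupww_zero {k : ℕ} {f : Bool → X → Fin k → ℝ} {l l' : List X} (hs : l' ⊆ l)
    (h : ∃ i j, ∀ x ∈ l, ∀ y ∈ l, sg (f i x j) = sg (f i y j)) :
    cup k (ww (f true)) (ww (f false)) l' = 0 := by
  obtain ⟨i, j, h⟩ := h
  cases i
  · rw [cup, ww_const (f := f false) ⟨j, fun p hp q hq => ?_⟩, mul_zero]
    exact h p (hs (List.mem_of_mem_drop hp)) q (hs (List.mem_of_mem_drop hq))
  · rw [cup, ww_const (f := f true) ⟨j, fun p hp q hq => ?_⟩, zero_mul]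
    exact h p (hs (List.mem_of_mem_take hp)) q (hs (List.mem_of_mem_take hq))

end LC

namespace LC
open List

/-- data for the core argument -/
structure Core (k : ℕ) (G Λ W : Type*) [Group G] [MulAction G Λ] [NormedAddCommGroup W]
    [NormedSpace ℝ W] (act : G → W →ₗ[ℝ] W) (α : Bool → QQ k × W → Fin (k + 1) → ℝ)
    (st : QQ k × W → Bool) (lab : QQ k × W → Λ) (r : ℝ) : Prop where
  hr : 0 < r
  act_mul : ∀ g h w, act (g * h) w = act g (act h w)
  act_one : ∀ w, act 1 w = w
  hα : ∀ i, ContinuousOn (α i) (K2 k ×ˢ {0}ᶜ)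
  hb : ∀ q, q ∈ E1 k ∪ E2 k → ∀ w, w ≠ 0 → α true (q, w) ≠ 0 ∨ α false (q, w) ≠ 0
  hαG : ∀ g, ∀ q ∈ K2 k, ∀ w, w ≠ 0 → ∀ i, α i (q, act g w) = α i (q, w)
  hst : ∀ g, ∀ q ∈ K2 k, ∀ w, w ≠ 0 → st (q, act g w) = st (q, w)
  hlab : ∀ g, ∀ q ∈ K2 k, ∀ w, w ≠ 0 → (∀ i j, |α i (q, w) j| < r) → lab (q, act g w) = g • lab (q, w)
  hloc : ∀ C : Set W, IsCompact C → 0 ∉ C → ∃ ε > 0, ∀ z ∈ K2 k ×ˢ C, ∀ z' ∈ K2 k ×ˢ C, dist z z' ≤ ε →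
    st z = st z' → (∀ i j, |α i z j| < r) → (∀ i j, |α i z' j| < r) → lab z = lab z'
  hdeg : ∀ w, w ≠ 0 → ∃ n0 : ℕ, ∀ n ≥ n0, pr (box n (k + 1)) (box n (k + 1))
    (cup (k + 1) (ww fun q => α true (q, w)) (ww fun q => α false (q, w))) = 1

/-- vanishing cochain -/
noncomputable def OM {k : ℕ} {W : Type*} (α : Bool → QQ k × W → Fin (k + 1) → ℝ) : List (QQ k × W) → ℤ :=
  cup (k + 1) (ww (α true)) (ww (α false))

section
variable {k : ℕ} {G Λ W : Type*} [Group G] [MulAction G Λ] [NormedAddCommGroup W]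
    [NormedSpace ℝ W] {act : G → W →ₗ[ℝ] W} {α : Bool → QQ k × W → Fin (k + 1) → ℝ}
    {st : QQ k × W → Bool} {lab : QQ k × W → Λ} {r : ℝ}

lemma Core.good (h : Core k G Λ W act α st lab r) {D : Set W} (hD : IsCompact D) (h0 : 0 ∉ D) :
    ∃ ε > 0, (∀ l : List (QQ k × W), Sm ε l → (∀ z ∈ l, z ∈ K2 k ×ˢ D) →
      ((∀ l', l' ⊆ l → OM α l' = 0) ∨ ∀ z ∈ l, ∀ i j, |α i z j| < r) ∧
      (∀ z ∈ l, ∀ z' ∈ l, st z = st z' → (∀ z ∈ l, ∀ i j, |α i z j| < r) → lab z = lab z')) ∧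
      (∀ l : List (QQ k × W), Sm ε l → (∀ z ∈ l, z ∈ K2 k ×ˢ D ∧ z.1 ∈ E1 k ∪ E2 k) →
        ∀ l', l' ⊆ l → OM α l' = 0) := by
  have hsub : K2 k ×ˢ D ⊆ K2 k ×ˢ {0}ᶜ := by
    rintro z ⟨h1, h2⟩
    exact ⟨h1, fun h3 => h0 (by rw [← Set.mem_singleton_iff.1 h3]; exact h2)⟩
  have hK := (K2_compact k).prod hD
  have c1 := fun i => small_sign hK ((h.hα i).mono hsub) h.hr
  choose ε1 hε1 h1 using c1
  have hE : IsCompact ((E1 k ∪ E2 k) ×ˢ D) := ((E1_compact k).union (E2_compact k)).prod hD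
  have hEK : (E1 k ∪ E2 k) ×ˢ D ⊆ K2 k ×ˢ D := by
    rintro z ⟨h1, h2⟩
    exact ⟨Set.union_subset (E1_sub k) (E2_sub k) h1, h2⟩
  have : ∃ m > 0, ∀ z ∈ (E1 k ∪ E2 k) ×ˢ D, ∃ i j, m ≤ |α i z j| := by
    rcases ((E1 k ∪ E2 k) ×ˢ D).eq_empty_or_nonempty with he | hne
    · rw [he]; exact ⟨1, one_pos, by simp⟩
    obtain ⟨z0, hz0, hmin⟩ := hE.exists_isMinOn hne
      (((h.hα true).mono (hEK.trans hsub)).norm.add ((h.hα false).mono (hEK.trans hsub)).norm)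
    have hp : 0 < ‖α true z0‖ + ‖α false z0‖ := by
      have := h.hb z0.1 hz0.1 z0.2 (fun h3 => h0 (by rw [← h3]; exact hz0.2))
      rcases this with h3 | h3
      · have := norm_pos_iff.2 h3; have := norm_nonneg (α false z0); linarith
      · have := norm_pos_iff.2 h3; have := norm_nonneg (α true z0); linarith
    refine ⟨(‖α true z0‖ + ‖α false z0‖) / 2, by linarith, fun z hz => ?_⟩
    by_contra! hcon
    have hm := hmin hz
    simp only [Set.mem_ofPred_eq, Pi.add_apply] at hm
    have q : ∀ i, ‖α i z‖ < (‖α true z0‖ + ‖α false z0‖) / 2 := fun i =>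
      (pi_norm_lt_iff (by linarith)).2 fun j => hcon i j
    have := q true; have := q false
    linarith
  obtain ⟨m, hm, h2⟩ := this
  have c3 := fun i => small_sign hK ((h.hα i).mono hsub) hm
  choose ε3 hε3 h3 using c3
  obtain ⟨ε4, hε4, h4⟩ := h.hloc D hD h0
  have a1 := hε1 true; have a2 := hε1 false; have a3 := hε3 true; have a4 := hε3 false
  obtain ⟨ε, hε, hl⟩ : ∃ ε > 0, (ε ≤ ε1 true ∧ ε ≤ ε1 false) ∧ (ε ≤ ε3 true ∧ ε ≤ ε3 false) ∧ ε ≤ ε4 :=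
    ⟨min (min (ε1 true) (ε1 false)) (min (min (ε3 true) (ε3 false)) ε4), by simp [*],
      by simp only [← le_min_iff]; simp only [min_assoc]; exact le_rfl⟩
  have b1 : ∀ i, ε ≤ ε1 i := by intro i; cases i <;> tauto
  have b3 : ∀ i, ε ≤ ε3 i := by intro i; cases i <;> tauto
  refine ⟨ε, hε, fun l hl1 hl2 => ⟨?_, ?_⟩, fun l hl1 hl2 l' hs => ?_⟩
  · by_cases hc : ∀ z ∈ l, ∀ i j, |α i z j| < r
    · exact Or.inr hc
    · left
      push Not at hc
      obtain ⟨z, hz, i, j, hij⟩ := hc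
      intro l' hs
      obtain ⟨j', hj'⟩ := h1 i l (hl1.mono (b1 i)) hl2 ⟨z, hz, j, hij⟩
      exact cupww_zero hs ⟨i, j', hj'⟩
  · intro z hz z' hz' hst hsm
    exact h4 z (hl2 z hz) z' (hl2 z' hz') ((hl1 z hz z' hz').trans hl.2.2) hst (hsm z hz) (hsm z' hz')
  · rcases l with _ | ⟨z, l⟩
    · have : l' = [] := by simpa using hs
      subst this
      simp [OM, cup, ww, List.ofFn_succ, Wb]
    · obtain ⟨i, j, hij⟩ := h2 z ⟨(hl2 z (by simp)).2, (hl2 z (by simp)).1.2⟩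
      obtain ⟨j', hj'⟩ := h3 i (z :: l) (hl1.mono (b3 i)) (fun z hz => (hl2 z hz).1) ⟨z, by simp, j, hij⟩
      exact cupww_zero hs ⟨i, j', hj'⟩

lemma supp_bdC {n : ℕ} (hn : 0 < n) : Supp (bd (pr (box n (k + 1)) (box n (k + 1))))
    (fun l => Sm (2 / n : ℝ) l ∧ ∀ p ∈ l, p ∈ E1 k ∪ E2 k) := by
  intro φ ψ hh
  rw [bd_pr _ _ (box_len n (k + 1)), bd_pr _ _ (box_len n (k + 1))]
  congr 1
  · exact supp_c1 hn _ _ fun l hl => hh l ⟨hl.2.1, fun p hp => Or.inl (hl.2.2 p hp)⟩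
  · congr 1
    exact supp_c2 hn _ _ fun l hl => hh l ⟨hl.2.1, fun p hp => Or.inr (hl.2.2 p hp)⟩

theorem Core.main [Finite G] [Fintype Λ] [Nontrivial Λ] [MulAction.IsPretransitive G Λ]
    (h : Core k G Λ W act α st lab r) {D : Set W} (hD : IsCompact D) (h0 : 0 ∉ D) {y y' w0 : W}
    (hy : ∀ g h : G, convexHull ℝ {y', act g y, act h w0} ⊆ D) : False := by
  classical
  obtain ⟨ε, hε, hg1, hg2⟩ := h.good hD h0
  obtain ⟨R, hR0, hR⟩ : ∃ R : ℝ, 0 < R ∧ ∀ w ∈ D, ‖w‖ ≤ R := by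
    obtain ⟨R, hR⟩ := hD.isBounded.exists_norm_le
    exact ⟨max R 1, by simp, fun w hw => (hR w hw).trans (le_max_left _ _)⟩
  have hy'D : y' ∈ D := hy 1 1 (subset_convexHull ℝ _ (by simp))
  have hne : ∀ w ∈ D, w ≠ 0 := fun w hw hw0 => h0 (hw0 ▸ hw)
  obtain ⟨n1, hn1⟩ := h.hdeg y' (hne _ hy'D)
  obtain ⟨n2, hn2⟩ := mesh hε
  obtain ⟨n3, hn3⟩ := mesh (ε := ε / (2 * R)) (by positivity)
  obtain ⟨n, hd, hn, hnε, hnR⟩ : ∃ n : ℕ, pr (box n (k + 1)) (box n (k + 1))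
    (cup (k + 1) (ww fun q => α true (q, y')) (ww fun q => α false (q, y'))) = 1 ∧ 0 < n ∧
      (2 / n : ℝ) ≤ ε ∧ 2 / n * (2 * R) ≤ ε := by
    refine ⟨n1 + n2 + n3, hn1 _ (by omega), (hn2 _ (by omega)).1, (hn2 _ (by omega)).2, ?_⟩
    have := (hn3 (n1 + n2 + n3) (by omega)).2
    rwa [le_div_iff₀ (by positivity)] at this
  clear hn1 hn2 hn3
  set C : Ch (QQ k) := pr (box n (k + 1)) (box n (k + 1)) with hCdef
  set N := 2 * k + 2 with hNdef
  have hN : Even N := ⟨k + 1, by omega⟩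
  have hC : Supp C (fun l => l.length = N + 1 ∧ (Sm (2 / n : ℝ) l ∧ ∀ p ∈ l, p ∈ K2 k)) :=
    supp_c0.mono fun l hl => ⟨by omega, hl.2⟩
  have hB := supp_bdC (k := k) hn
  have hOm : ∀ L, 2 ≤ L.length → dl (OM α) L = 0 := dl_cupww _ _
  -- good product lists
  have G1 : ∀ (a : List (QQ k)) (b : List W) (L : List (QQ k × W)), (Sm (2 / n : ℝ) a ∧ ∀ p ∈ a, p ∈ K2 k) →
      Sm ε b → (∀ w ∈ b, w ∈ D) → (∀ p ∈ L, p.1 ∈ a ∧ p.2 ∈ b) →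
      (∀ l', l' ⊆ L → OM α l' = 0) ∨ ((∀ z ∈ L, ∀ i j, |α i z j| < r) ∧
        (∀ z ∈ L, ∀ z' ∈ L, st z = st z' → lab z = lab z')) := by
    intro a b L ha hb1 hb2 hL
    have e1 : Sm ε L := Sm_pr (ha.1.mono hnε) hb1 hL
    obtain ⟨e3, e4⟩ := hg1 L e1 (fun z hz => ⟨ha.2 _ (hL z hz).1, hb2 _ (hL z hz).2⟩)
    rcases e3 with e3 | e3
    · exact Or.inl e3
    · exact Or.inr ⟨e3, fun z hz z' hz' hs => e4 z hz z' hz' hs e3⟩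
  have G2 : ∀ (a : List (QQ k)) (b : List W) (L : List (QQ k × W)),
      (Sm (2 / n : ℝ) a ∧ ∀ p ∈ a, p ∈ E1 k ∪ E2 k) →
      Sm ε b → (∀ w ∈ b, w ∈ D) → (∀ p ∈ L, p.1 ∈ a ∧ p.2 ∈ b) → ∀ φ, cup N (OM α) φ L = 0 := by
    intro a b L ha hb1 hb2 hL φ
    have e1 : Sm ε L := Sm_pr (ha.1.mono hnε) hb1 hL
    rw [cup, hg2 L e1 (fun z hz => ⟨⟨Set.union_subset (E1_sub k) (E2_sub k) (ha.2 _ (hL z hz).1),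
      hb2 _ (hL z hz).2⟩, ha.2 _ (hL z hz).1⟩) _ (List.take_subset _ _), zero_mul]
  set Ψ : Λ → Λ → List W → ℤ := fun x x' => sl C (cup N (OM α) (ff st lab x x')) with hΨ
  set c1 : Λ → List W → ℤ := fun x => sl C (cup N (OM α) (z0 (uu st lab x))) with hc1
  set c2 : Λ → List W → ℤ := fun x => sl C (cup N (OM α) (z0 (vv st lab x))) with hc2
  have slsum : ∀ (F : Λ → List (QQ k × W) → ℤ) (b : List W),
      sl C (fun L => ∑ x, F x L) b = ∑ x, sl C (F x) b := by
    intro F b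
    simp only [sl]
    rw [← ch_sum]; congr 1; funext a
    have : ∀ s : Finset Λ, EP a b (fun L => ∑ x ∈ s, F x L) = ∑ x ∈ s, EP a b (F x) := by
      intro s
      induction s using Finset.induction_on with
      | empty => simp only [Finset.sum_empty]; exact EP_zero a b
      | insert i s hi ih => simp only [Finset.sum_insert hi]; rw [EP_add, ih]
    exact this _
  -- cocycle
  have T1 : ∀ x x' l, l.length = 3 → Sm ε l → (∀ w ∈ l, w ∈ D) → dl (Ψ x x') l = 0 := by
    intro x x' b hb hb1 hb2
    rw [hΨ]
    simp only
    rw [sl_dl hN hC hB (χ' := fun _ => 0)]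
    · simp only [sl, EP_zero]; exact ch_zero C
    · intro a ha L hL hlen
      rw [dl_cupOm hN hOm _ _ (by omega), cup]
      rcases G1 a b L ha hb1 hb2 hL with g | g
      · rw [g _ (List.take_subset _ _), zero_mul]
      · obtain ⟨z, z', z'', e, m1, m2, m3⟩ := len3 (N := N) (L := L) (by omega)
        rw [e, dl_ff, mul_zero] <;> apply g.2 <;> assumption
    · intro a ha L hL
      exact G2 a b L ha hb1 hb2 hL _
  have T2 : ∀ x l, l.length = 2 → Sm ε l → (∀ w ∈ l, w ∈ D) → dl (c1 x) l = - ∑ x', Ψ x x' l := by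
    intro x b hb hb1 hb2
    rw [hΨ, hc1]
    simp only
    rw [sl_dl hN hC hB (χ' := fun L => (-1) * ∑ x', cup N (OM α) (ff st lab x x') L), ← slsum]
    · simp only [sl, EP_smul]; rw [ch_smul]; ring
    · intro a ha L hL hlen
      rw [dl_cupOm hN hOm _ _ (by omega)]
      simp only [cup, ← Finset.mul_sum]
      rcases G1 a b L ha hb1 hb2 hL with g | g
      · rw [g _ (List.take_subset _ _)]; ring
      · obtain ⟨z, z', e, m1, m2⟩ := len2 (N := N) (L := L) (by omega)
        rw [e, dl_uu _ _ (g.2 _ m1 _ m2)]; ring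
    · intro a ha L hL
      exact G2 a b L ha hb1 hb2 hL _
  have T3 : ∀ x l, l.length = 2 → Sm ε l → (∀ w ∈ l, w ∈ D) → dl (c2 x) l = ∑ x', Ψ x' x l := by
    intro x b hb hb1 hb2
    rw [hΨ, hc2]
    simp only
    rw [sl_dl hN hC hB (χ' := fun L => ∑ x', cup N (OM α) (ff st lab x' x) L), ← slsum]
    · intro a ha L hL hlen
      rw [dl_cupOm hN hOm _ _ (by omega)]
      simp only [cup, ← Finset.mul_sum]
      rcases G1 a b L ha hb1 hb2 hL with g | g
      · rw [g _ (List.take_subset _ _)]; ring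
      · obtain ⟨z, z', e, m1, m2⟩ := len2 (N := N) (L := L) (by omega)
        rw [e, dl_vv _ _ (g.2 _ m1 _ m2)]
    · intro a ha L hL
      exact G2 a b L ha hb1 hb2 hL _
  -- total
  have T4 : ∑ x, c1 x [y'] + ∑ x, c2 x [y'] = 1 := by
    rw [hc1, hc2]
    simp only
    rw [← slsum, ← slsum, ← hd]
    simp only [sl]
    rw [← ch_add]
    refine hC _ _ fun a ha => ?_
    have ha0 : a ≠ [] := by rintro rfl; simp at ha
    rw [EP_singleton_right a ha0, EP_singleton_right a ha0]
    simp only [cup, ← Finset.mul_sum]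
    rw [← mul_add]
    obtain ⟨z, e, -⟩ := len1 (N := N) (L := a.map fun q => (q, y')) (by simpa using ha.1)
    rw [e]
    simp only [z0]
    rw [sum_uv, mul_one, List.take_of_length_le (by simp; omega), OM, cup, ← List.map_take, ← List.map_drop, ww_map, ww_map]
  -- equivariance
  have T5 : ∀ (g : G) (b : List W), Sm ε b → (∀ w ∈ b, w ∈ D) → ∀ φ φ' : List (QQ k × W) → ℤ,
      (∀ L : List (QQ k × W), (∀ z ∈ L, z.1 ∈ K2 k ∧ z.2 ∈ D) → (∀ z ∈ L, ∀ i j, |α i z j| < r) →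
        φ' ((L.drop N).map (Prod.map id (act g))) = φ (L.drop N)) →
      sl C (cup N (OM α) φ') (b.map (act g)) = sl C (cup N (OM α) φ) b := by
    intro g b hb1 hb2 φ φ' hφ
    simp only [sl]
    refine hC _ _ fun a ha => ?_
    rw [EP_map]
    refine EP_congr fun L _ hL => ?_
    have hL' : ∀ z ∈ L, z.1 ∈ K2 k ∧ z.2 ∈ D := fun z hz => ⟨ha.2.2 _ (hL z hz).1, hb2 _ (hL z hz).2⟩
    have e1 : OM α (take (N + 1) (L.map (Prod.map id (act g)))) = OM α (take (N + 1) L) := by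
      rw [← List.map_take]
      simp only [OM, cup]
      rw [← List.map_take, ← List.map_drop, ww_map, ww_map]
      congr 1
      · refine ww_congr fun z hz => ?_
        have := hL' z (List.mem_of_mem_take (List.mem_of_mem_take hz))
        exact h.hαG g _ this.1 _ (hne _ this.2) _
      · refine ww_congr fun z hz => ?_
        have := hL' z (List.mem_of_mem_take (List.mem_of_mem_drop hz))
        exact h.hαG g _ this.1 _ (hne _ this.2) _
    simp only [cup]
    rw [e1]
    rcases G1 a b L ha.2 hb1 hb2 hL with q | q
    · have := q _ (List.take_subset (N + 1) L)
      rw [this, zero_mul, zero_mul]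
    · rw [← List.map_drop, hφ L hL' q.1]
  have U : ∀ (g : G) (z : QQ k × W), z.1 ∈ K2 k ∧ z.2 ∈ D → (∀ i j, |α i z j| < r) → ∀ x,
      uu st lab (g • x) (Prod.map id (act g) z) = uu st lab x z ∧
      vv st lab (g • x) (Prod.map id (act g) z) = vv st lab x z := by
    intro g z hz hs x
    have e1 := h.hst g z.1 hz.1 z.2 (hne _ hz.2)
    have e2 := h.hlab g z.1 hz.1 z.2 (hne _ hz.2) hs
    have e1' : st (Prod.map id (act g) z) = st z := e1
    have e2' : lab (Prod.map id (act g) z) = g • lab z := e2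
    simp only [uu, vv, e1', e2', smul_left_cancel_iff]
    exact ⟨trivial, trivial⟩
  have T6 : ∀ g x x' b, Sm ε b → (∀ w ∈ b, w ∈ D) → Ψ (g • x) (g • x') (b.map (act g)) = Ψ x x' b := by
    intro g x x' b hb1 hb2
    apply T5 g b hb1 hb2
    intro L hL hs
    have : ∀ z ∈ L.drop N, z ∈ L := fun z hz => List.mem_of_mem_drop hz
    match L.drop N, this with
    | [], _ => rfl
    | [_], _ => rfl
    | [z, z'], hm =>
      have m1 := hm z (by simp)
      have m2 := hm z' (by simp)
      simp only [List.map_cons, List.map_nil, ff, z1]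
      rw [(U g z (hL z m1) (hs z m1) x).1, (U g z (hL z m1) (hs z m1) x').2,
        (U g z' (hL z' m2) (hs z' m2) x).1, (U g z' (hL z' m2) (hs z' m2) x').2]
    | _ :: _ :: _ :: _, _ => rfl
  have T7 : ∀ g x w, w ∈ D → c1 (g • x) [act g w] = c1 x [w] ∧ c2 (g • x) [act g w] = c2 x [w] := by
    intro g x w hw
    have hb1 : Sm ε [w] := by intro x hx y hy; simp at hx hy; subst hx hy; simpa using hε.le
    constructor
    · apply T5 g [w] hb1 (by simpa using hw)
      intro L hL hs
      have : ∀ z ∈ L.drop N, z ∈ L := fun z hz => List.mem_of_mem_drop hz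
      match L.drop N, this with
      | [], _ => rfl
      | [z], hm =>
        have m1 := hm z (by simp)
        simp only [List.map_cons, List.map_nil, z0]
        exact (U g z (hL z m1) (hs z m1) x).1
      | _ :: _ :: _, _ => rfl
    · apply T5 g [w] hb1 (by simpa using hw)
      intro L hL hs
      have : ∀ z ∈ L.drop N, z ∈ L := fun z hz => List.mem_of_mem_drop hz
      match L.drop N, this with
      | [], _ => rfl
      | [z], hm =>
        have m1 := hm z (by simp)
        simp only [List.map_cons, List.map_nil, z0]
        exact (U g z (hL z m1) (hs z m1) x).2
      | _ :: _ :: _, _ => rfl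
  -- segments
  have hull2 : ∀ g h : G, convexHull ℝ {y', act g y} ⊆ D ∧ convexHull ℝ {act g y, act h w0} ⊆ D ∧
      convexHull ℝ {y', act h w0} ⊆ D := by
    intro g h
    refine ⟨(convexHull_mono ?_).trans (hy g h), (convexHull_mono ?_).trans (hy g h),
      (convexHull_mono ?_).trans (hy g h)⟩ <;> intro x hx <;> simp at hx ⊢ <;> tauto
  have S1 : ∀ g h x x', Xi n (Ψ x x') y' (act g y) + Xi n (Ψ x x') (act g y) (act h w0) =
      Xi n (Ψ x x') y' (act h w0) := fun g h x x' => tri hn hR hnR (T1 x x') (hy g h)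
  have Q1 : ∀ w w', convexHull ℝ {w, w'} ⊆ D → ∀ x, c1 x [w'] - c1 x [w] = - ∑ x', Xi n (Ψ x x') w w' := by
    intro w w' hww x
    rw [← Xi_dl hn, Xi, seg_list hR hR0.le hnR hww _ (fun l => (-1) * ∑ x', Ψ x x' (l.map (seg w w'))),
      ch_smul, ch_sum, neg_one_mul]
    · rfl
    · rintro l ⟨⟨_, _, rfl⟩, h2, h3⟩
      rw [T2 x _ rfl h2 h3]; ring
  have Q2 : ∀ w w', convexHull ℝ {w, w'} ⊆ D → ∀ x, c2 x [w'] - c2 x [w] = ∑ x', Xi n (Ψ x' x) w w' := by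
    intro w w' hww x
    rw [← Xi_dl hn, Xi, seg_list hR hR0.le hnR hww _ (fun l => ∑ x', Ψ x' x (l.map (seg w w'))), ch_sum]
    · rfl
    · rintro l ⟨⟨_, _, rfl⟩, h2, h3⟩
      rw [T3 x _ rfl h2 h3]
  have Q3 : ∀ g w w', convexHull ℝ {w, w'} ⊆ D → ∀ x x',
      Xi n (Ψ (g • x) (g • x')) (act g w) (act g w') = Xi n (Ψ x x') w w' := by
    intro g w w' hww x x'
    refine seg_list hR hR0.le hnR hww _ _ ?_
    rintro l ⟨⟨_, _, rfl⟩, h2, h3⟩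
    rw [← T6 g x x' _ h2 h3]
    simp [seg]
  set E : G → Λ → Λ → ℤ := fun h x x' => Xi n (Ψ x x') y' (act h w0) with hE
  set κ : G → Λ → Λ → ℤ := fun g x x' => Xi n (Ψ x x') y' (act g y) -
    Xi n (Ψ (g⁻¹ • x) (g⁻¹ • x')) y' y with hκ
  have R1 : ∀ g h x x', E (g * h) (g • x) (g • x') = E h x x' + κ g (g • x) (g • x') := by
    intro g h' x x'
    simp only [hE, hκ, inv_smul_smul]
    have e1 := S1 g (g * h') (g • x) (g • x')
    have e2 := S1 1 h' x x'
    have e3 := Q3 g y (act h' w0) (by have := (hull2 1 h').2.1; rwa [h.act_one] at this) x x'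
    rw [h.act_one] at e2
    rw [← h.act_mul] at e3
    linarith
  refine alg_end (G := G) (fun x => c1 x [y']) (fun x => c2 x [y']) κ ?_ ?_ ?_ T4
  · intro g h' x x'
    have e1 := R1 (g * h') 1 (h'⁻¹ • x) (h'⁻¹ • x')
    have e2 := R1 g h' x x'
    have e3 := R1 h' 1 (h'⁻¹ • x) (h'⁻¹ • x')
    simp only [mul_smul, smul_inv_smul, mul_one] at e1 e2 e3
    linarith
  · intro g x
    have e1 := Q1 y' (act g w0) (hull2 1 g).2.2 (g • x)
    have e2 := Q1 y' w0 (by have := (hull2 1 1).2.2; rwa [h.act_one] at this) x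
    have hwD : w0 ∈ D := by
      have := hy 1 1 (subset_convexHull ℝ _ (show act 1 w0 ∈ _ by simp)); rwa [h.act_one] at this
    have e3 := (T7 g x w0 hwD).1
    have e4 : ∑ x', Xi n (Ψ (g • x) x') y' (act g w0) =
        ∑ x', (Xi n (Ψ x x') y' w0 + κ g (g • x) (g • x')) := by
      rw [← Fintype.sum_bijective _ (MulAction.bijective g) (fun x' => E g (g • x) (g • x'))
        (fun x' => E g (g • x) x') (fun _ => rfl)]
      refine Finset.sum_congr rfl fun x' _ => ?_
      have := R1 g 1 x x'
      simp only [hE, mul_one, h.act_one] at this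
      exact this
    rw [Finset.sum_add_distrib] at e4
    linarith
  · intro g x
    have e1 := Q2 y' (act g w0) (hull2 1 g).2.2 (g • x)
    have e2 := Q2 y' w0 (by have := (hull2 1 1).2.2; rwa [h.act_one] at this) x
    have hwD : w0 ∈ D := by
      have := hy 1 1 (subset_convexHull ℝ _ (show act 1 w0 ∈ _ by simp)); rwa [h.act_one] at this
    have e3 := (T7 g x w0 hwD).2
    have e4 : ∑ x', Xi n (Ψ x' (g • x)) y' (act g w0) =
        ∑ x', (Xi n (Ψ x' x) y' w0 + κ g (g • x') (g • x)) := by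
      rw [← Fintype.sum_bijective _ (MulAction.bijective g) (fun x' => E g (g • x') (g • x))
        (fun x' => E g x' (g • x)) (fun _ => rfl)]
      refine Finset.sum_congr rfl fun x' _ => ?_
      have := R1 g 1 x' x
      simp only [hE, mul_one, h.act_one] at this
      exact this
    rw [Finset.sum_add_distrib] at e4
    linarith

lemma avoid [FiniteDimensional ℝ W] {ι : Type*} [Finite ι] (P : ι → Submodule ℝ W)
    (hP : ∀ i, Module.finrank ℝ (P i) < Module.finrank ℝ W) : ∃ w : W, ∀ i, w ∉ P i := by
  classical
  have := Fintype.ofFinite ι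
  by_contra! hcon
  have h2 : (⋃ p ∈ Finset.univ.image P, (p : Set W)) = Set.univ := by
    rw [Set.eq_univ_iff_forall]
    intro w
    obtain ⟨i, hi⟩ := hcon w
    simp only [Finset.mem_image, Finset.mem_univ, true_and, Set.iUnion_exists, Set.iUnion_iUnion_eq',
      Set.mem_iUnion]
    exact ⟨i, hi⟩
  have := Subspace.top_mem_of_biUnion_eq_univ h2
  simp only [Finset.mem_image, Finset.mem_univ, true_and] at this
  obtain ⟨i, hi⟩ := this
  have := hP i
  rw [hi, finrank_top] at this
  exact lt_irrefl _ this

lemma hull0 {w y y' : W} (hw : w ≠ 0) (hy : y ∉ Submodule.span ℝ {w})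
    (hy' : y' ∉ Submodule.span ℝ {y, w}) : (0 : W) ∉ convexHull ℝ {y', y, w} := by
  intro h0
  rw [convexHull_insert (by simp), mem_convexJoin] at h0
  obtain ⟨a, ha, b, hb, hab⟩ := h0
  rw [Set.mem_singleton_iff] at ha
  subst ha
  rw [convexHull_pair] at hb
  obtain ⟨s, t, hs, ht, hst, h1⟩ := hab
  obtain ⟨s', t', hs', ht', hst', h2⟩ := hb
  have hbs : b ∈ Submodule.span ℝ {y, w} := by
    rw [← h2]
    exact Submodule.add_mem _ (Submodule.smul_mem _ _ (Submodule.subset_span (by simp)))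
      (Submodule.smul_mem _ _ (Submodule.subset_span (by simp)))
  by_cases hs0 : s = 0
  · have ht1 : t = 1 := by linarith
    rw [hs0, ht1, zero_smul, zero_add, one_smul] at h1
    rw [h1] at h2
    by_cases hs0' : s' = 0
    · have ht1' : t' = 1 := by linarith
      rw [hs0', ht1', zero_smul, zero_add, one_smul] at h2
      exact hw h2
    · apply hy
      have : y = (-(s'⁻¹ * t')) • w := by
        have h3 : s' • y = -(t' • w) := eq_neg_of_add_eq_zero_left h2
        rw [neg_smul, mul_smul, ← smul_neg, ← h3, smul_smul, inv_mul_cancel₀ hs0', one_smul]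
      rw [this]
      exact Submodule.smul_mem _ _ (Submodule.subset_span (by simp))
  · apply hy'
    have : a = (-(s⁻¹ * t)) • b := by
      have h3 : s • a = -(t • b) := eq_neg_of_add_eq_zero_left h1
      rw [neg_smul, mul_smul, ← smul_neg, ← h3, smul_smul, inv_mul_cancel₀ hs0, one_smul]
    rw [this]
    exact Submodule.smul_mem _ _ hbs

theorem Core.false [Finite G] [Fintype Λ] [Nontrivial Λ] [MulAction.IsPretransitive G Λ]
    [FiniteDimensional ℝ W] (hdim : 3 ≤ Module.finrank ℝ W)
    (h : Core k G Λ W act α st lab r) : False := by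
  classical
  have hi : ∀ g w, w ≠ 0 → act g w ≠ 0 := by
    intro g w hw h0
    have := h.act_mul g⁻¹ g w
    rw [h0, map_zero, inv_mul_cancel, h.act_one] at this
    exact hw this
  have hfs : ∀ s : Finset W, Module.finrank ℝ (Submodule.span ℝ (s : Set W)) ≤ s.card :=
    fun s => finrank_span_finset_le_card s
  have : Nontrivial W := Module.nontrivial_of_finrank_pos (R := ℝ) (by omega)
  obtain ⟨w0, hw0⟩ := exists_ne (0 : W)
  obtain ⟨y, hy⟩ := avoid (fun g : G => Submodule.span ℝ {act g w0}) (by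
    intro g
    have := hfs {act g w0}
    rw [Finset.card_singleton, Finset.coe_singleton] at this
    omega)
  obtain ⟨y', hy'⟩ := avoid (fun g : G × G => Submodule.span ℝ {act g.1 y, act g.2 w0}) (by
    intro g
    have := hfs {act g.1 y, act g.2 w0}
    rw [Finset.coe_pair] at this
    have := Finset.card_le_two (a := act g.1 y) (b := act g.2 w0)
    omega)
  refine h.main (D := ⋃ g : G × G, convexHull ℝ {y', act g.1 y, act g.2 w0}) (y := y) (y' := y') (w0 := w0)
    ?_ ?_ ?_
  · apply isCompact_iUnion
    intro g
    exact (Set.toFinite _).isCompact_convexHull (𝕜 := ℝ)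
  · rw [Set.mem_iUnion]
    rintro ⟨⟨g, g'⟩, hg⟩
    refine hull0 (hi g' w0 hw0) ?_ (hy' (g, g')) hg
    intro hcon
    rw [Submodule.mem_span_singleton] at hcon
    obtain ⟨a, ha⟩ := hcon
    apply hy (g⁻¹ * g')
    rw [Submodule.mem_span_singleton]
    refine ⟨a, ?_⟩
    have := h.act_mul g⁻¹ g y
    rw [← ha, map_smul, inv_mul_cancel, h.act_one, ← h.act_mul] at this
    exact this.symm
  · intro g g'
    exact Set.subset_iUnion (fun g : G × G => convexHull ℝ {y', act g.1 y, act g.2 w0}) (g, g')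
end
end LC

namespace LC
open List unitInterval PaperTC

/-- ambient space -/
abbrev EE (n : ℕ) := EuclideanSpace ℝ (Fin (n + 1))

section two
variable {G : Type*} [Group G] {n : ℕ} (ρ : G →* (EE n ≃ₗᵢ[ℝ] EE n))

/-- data for a cover with two sets -/
structure TD (U : Bool → Set (Sph n × Sph n)) (s1 s2 : Bool → Sph n × Sph n → C(I, Sph n))
    (f : Bool → Sph n × Sph n → ℝ) : Prop where
  hU : ∀ i, IsOpen (U i)
  hfc : ∀ i, Continuous (f i)
  hf0 : ∀ i p, 0 ≤ f i p
  hsum : ∀ p, f true p + f false p = 1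
  hpos : ∀ i p, 0 < f i p → p ∈ U i
  hinv : ∀ i g1 g2 p, f i (sphereAct ρ g1 p.1, sphereAct ρ g2 p.2) = f i p
  c1 : ∀ i, ContinuousOn (s1 i) (U i)
  c2 : ∀ i, ContinuousOn (s2 i) (U i)
  st1 : ∀ i, ∀ p ∈ U i, s1 i p 0 = p.1
  en2 : ∀ i, ∀ p ∈ U i, s2 i p 1 = p.2
  horb : ∀ i, ∀ p ∈ U i, PaperTC.orbit (sphereAct ρ) (s1 i p 1) = PaperTC.orbit (sphereAct ρ) (s2 i p 0)
  e1 : ∀ i, ∀ p ∈ U i, ∀ g1 g2 t, s1 i (sphereAct ρ g1 p.1, sphereAct ρ g2 p.2) t = sphereAct ρ g1 (s1 i p t)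
  e2 : ∀ i, ∀ p ∈ U i, ∀ g1 g2 t, s2 i (sphereAct ρ g1 p.1, sphereAct ρ g2 p.2) t = sphereAct ρ g2 (s2 i p t)

lemma sA_one (x : Sph n) : sphereAct ρ 1 x = x := by
  apply Subtype.ext; simp [sphereAct]

lemma sA_mul (g h : G) (x : Sph n) : sphereAct ρ (g * h) x = sphereAct ρ g (sphereAct ρ h x) := by
  apply Subtype.ext; simp [sphereAct]

lemma sA_isom (g : G) : Isometry (sphereAct ρ g : Sph n → Sph n) := by
  apply Isometry.of_dist_eq
  intro x y
  rw [Subtype.dist_eq, Subtype.dist_eq]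
  exact (ρ g).dist_map _ _

lemma TD_of (h : invTCcover (sphereAct ρ) 2) : ∃ U s1 s2 f, TD ρ U s1 s2 f := by
  classical
  obtain ⟨U', ho, hc, h1⟩ := h
  choose hi s1 s2 c1 c2 hs he using h1
  let e : Bool → Fin 2 := fun i => if i then 0 else 1
  let d : Fin 2 → Sph n × Sph n → ℝ := fun i p => if (U' i)ᶜ = ∅ then 1 else Metric.infDist p (U' i)ᶜ
  have dc : ∀ i, Continuous (d i) := by
    intro i
    by_cases hh : (U' i)ᶜ = ∅
    · simp only [d, hh, if_true]; exact continuous_const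
    · simp only [d, hh, if_false]; exact Metric.continuous_infDist_pt _
  have d0 : ∀ i p, 0 ≤ d i p := by
    intro i p
    simp only [d]; split_ifs
    · norm_num
    · exact Metric.infDist_nonneg
  have dU : ∀ i p, 0 < d i p ↔ p ∈ U' i := by
    intro i p
    by_cases hh : (U' i)ᶜ = ∅
    · simp only [d, hh, if_true]
      rw [Set.compl_empty_iff] at hh
      simp [hh]
    · simp only [d, hh, if_false]
      rw [← (ho i).isClosed_compl.notMem_iff_infDist_pos (Set.nonempty_iff_ne_empty.2 hh)]
      simp
  have dinv : ∀ i g1 g2 p, d i (sphereAct ρ g1 p.1, sphereAct ρ g2 p.2) = d i p := by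
    intro i g1 g2 p
    have hiso : Isometry (fun p : Sph n × Sph n => (sphereAct ρ g1 p.1, sphereAct ρ g2 p.2)) :=
      (sA_isom ρ g1).prodMap (sA_isom ρ g2)
    simp only [d]; split_ifs
    · rfl
    · have him : (fun p : Sph n × Sph n => (sphereAct ρ g1 p.1, sphereAct ρ g2 p.2)) '' (U' i)ᶜ = (U' i)ᶜ := by
        ext y
        constructor
        · rintro ⟨x, hx, rfl⟩ hy
          apply hx
          have := hi i g1⁻¹ g2⁻¹ _ hy
          simpa [← sA_mul, sA_one] using this
        · intro hy
          refine ⟨(sphereAct ρ g1⁻¹ y.1, sphereAct ρ g2⁻¹ y.2), fun hx => hy ?_, ?_⟩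
          · have := hi i g1 g2 _ hx
            simpa [← sA_mul, sA_one] using this
          · simp [← sA_mul, sA_one]
      have := Metric.infDist_image hiso (x := p) (t := (U' i)ᶜ)
      rw [him] at this
      exact this
  have dpos : ∀ p, 0 < d 0 p + d 1 p := by
    intro p
    have : p ∈ ⋃ i, U' i := by rw [hc]; trivial
    rw [Set.mem_iUnion] at this
    obtain ⟨i, hp⟩ := this
    have h2 := (dU i p).2 hp
    have := d0 0 p
    have := d0 1 p
    fin_cases i <;> simp at h2 <;> linarith
  refine ⟨fun i => U' (e i), fun i => s1 (e i), fun i => s2 (e i),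
    fun i p => d (e i) p / (d 0 p + d 1 p), fun i => ho _, fun i => ?_, ?_, ?_, ?_, ?_, fun i => c1 _, fun i => c2 _,
    fun i p hp => (hs _ p hp).1, fun i p hp => (hs _ p hp).2.1, fun i p hp => (hs _ p hp).2.2,
    fun i p hp g1 g2 t => (he _ g1 g2 p hp t).1, fun i p hp g1 g2 t => (he _ g1 g2 p hp t).2⟩
  · exact (dc _).div ((dc 0).add (dc 1)) fun p => (dpos p).ne'
  · intro i p
    exact div_nonneg (d0 _ _) (dpos p).le
  · intro p
    simp only [e]
    rw [← add_div]
    exact div_self (dpos p).ne'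
  · intro i p hp
    rw [← dU]
    by_contra hcon
    have := le_antisymm (not_lt.1 hcon) (d0 _ _)
    rw [this] at hp
    simp at hp
  · intro i g1 g2 p
    simp only [dinv]
end two
end LC

namespace LC
open List unitInterval PaperTC

section geo
variable {n k : ℕ} {V : Submodule ℝ (EE n)} (b : OrthonormalBasis (Fin (k + 1)) ℝ V)

/-- V-coordinates -/
noncomputable def cV (y : EE n) : Fin (k + 1) → ℝ := fun j => inner ℝ (b j : EE n) y
/-- inclusion of V -/
noncomputable def iV (v : Fin (k + 1) → ℝ) : EE n := ∑ j, v j • (b j : EE n)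

lemma cV_cont : Continuous (cV b) := by
  unfold cV; fun_prop
lemma iV_cont : Continuous (iV b) := by
  unfold iV; fun_prop
lemma iV_mem (v) : iV b v ∈ V := Submodule.sum_mem _ fun j _ => V.smul_mem _ (b j).2
lemma cV_add (x y) : cV b (x + y) = cV b x + cV b y := by
  ext j; simp [cV, inner_add_right]
lemma cV_smul (c : ℝ) (y) : cV b (c • y) = c • cV b y := by
  ext j; simp [cV, inner_smul_right]
lemma cV_perp {w : EE n} (hw : w ∈ Vᗮ) : cV b w = 0 := by
  ext j; exact hw _ (b j).2
lemma cV_iV (v) : cV b (iV b v) = v := by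
  ext j
  have : ∀ i, inner ℝ (b j : EE n) (b i : EE n) = if j = i then (1 : ℝ) else 0 := fun i =>
    orthonormal_iff_ite.1 b.orthonormal j i
  simp [cV, iV, inner_sum, inner_smul_right, this]
lemma iV_cV {y : EE n} (hy : y ∈ V) : iV b (cV b y) = y := by
  have := b.sum_repr' ⟨y, hy⟩
  have h2 := congrArg (Subtype.val) this
  simp only [Submodule.coe_sum, Submodule.coe_smul] at h2
  simpa [iV, cV] using h2
lemma iV_norm (v) : ‖iV b v‖ ≤ ∑ j, |v j| := by
  refine (norm_sum_le _ _).trans (Finset.sum_le_sum fun j _ => ?_)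
  rw [norm_smul]
  have : ‖(b j : EE n)‖ = 1 := b.orthonormal.1 j
  simp [this]
lemma cV_le (y : EE n) (j) : |cV b y j| ≤ ‖y‖ := by
  have h := abs_real_inner_le_norm (b j : EE n) y
  have : ‖(b j : EE n)‖ = 1 := b.orthonormal.1 j
  rw [this, one_mul] at h
  exact h
lemma sub_perp (y : EE n) : y - iV b (cV b y) ∈ Vᗮ := by
  intro v hv
  rw [inner_sub_right]
  rw [← iV_cV b hv]
  set c := cV b v
  simp only [iV, sum_inner, inner_sum, inner_smul_left, inner_smul_right]
  have : ∀ i j, inner ℝ (b j : EE n) (b i : EE n) = if j = i then (1 : ℝ) else 0 := fun i j =>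
    orthonormal_iff_ite.1 b.orthonormal j i
  simp [this, cV, mul_comm]

lemma cV_ne {y : EE n} (hy : y ∈ V) (h0 : y ≠ 0) : cV b y ≠ 0 := by
  intro h; apply h0; rw [← iV_cV b hy, h]; simp [iV]

/-- unnormalised point -/
noncomputable def mm (v : Fin (k + 1) → ℝ) (w : EE n) : EE n := iV b v + (1 - ‖v‖) • w

lemma cV_mm (v) {w : EE n} (hw : w ∈ Vᗮ) : cV b (mm b v w) = v := by
  rw [mm, cV_add, cV_smul, cV_perp b hw, cV_iV]; simp

lemma mm_ne (v) {w : EE n} (hw : w ∈ Vᗮ) (h0 : w ≠ 0) : mm b v w ≠ 0 := by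
  intro h
  have h1 := cV_mm b v hw
  rw [h] at h1
  have h2 : v = 0 := by rw [← h1]; ext j; simp [cV]
  rw [h2] at h
  simp [mm, iV] at h
  exact h0 h

variable (n) in
/-- default point -/
noncomputable def dpt : Sph n := ⟨EuclideanSpace.single 0 1, by simp⟩

open Classical in
/-- normalisation -/
noncomputable def nrm (y : EE n) : Sph n := if h : y = 0 then dpt n else
  ⟨‖y‖⁻¹ • y, by rw [mem_sphere_zero_iff_norm, norm_smul, norm_inv, norm_norm, inv_mul_cancel₀ (norm_ne_zero_iff.2 h)]⟩

lemma nrm_coe {y : EE n} (h : y ≠ 0) : (nrm y : EE n) = ‖y‖⁻¹ • y := by simp [nrm, h]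

lemma nrm_cont : ContinuousOn (nrm : EE n → Sph n) {0}ᶜ := by
  rw [Topology.IsInducing.subtypeVal.continuousOn_iff]
  have : ContinuousOn (fun y : EE n => ‖y‖⁻¹ • y) {0}ᶜ := by
    have h1 : ContinuousOn (fun y : EE n => ‖y‖⁻¹) {0}ᶜ :=
      continuousOn_id.norm.inv₀ fun x hx => norm_ne_zero_iff.2 hx
    exact h1.smul continuousOn_id
  exact this.congr fun y hy => nrm_coe hy

lemma Sph_ne (x : Sph n) : (x : EE n) ≠ 0 := by
  intro h; have := mem_sphere_zero_iff_norm.1 x.2; rw [h] at this; simp at this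

lemma Sph_norm (x : Sph n) : ‖(x : EE n)‖ = 1 := mem_sphere_zero_iff_norm.1 x.2

/-- parametrised point -/
noncomputable def nz (v : Fin (k + 1) → ℝ) (w : EE n) : Sph n := nrm (mm b v w)

lemma nz_sg (v) {w : EE n} (hw : w ∈ Vᗮ) (h0 : w ≠ 0) (j) : sg (cV b (nz b v w) j) = sg (v j) := by
  have hm := mm_ne b v hw h0
  rw [nz, nrm_coe hm, cV_smul, cV_mm b v hw]
  have : 0 < ‖mm b v w‖⁻¹ := inv_pos.2 (norm_pos_iff.2 hm)
  simp only [sg, Pi.smul_apply, smul_eq_mul, mul_pos_iff_of_pos_left this]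

lemma nz_V {v : Fin (k + 1) → ℝ} (hv : ‖v‖ = 1) {w : EE n} (hw : w ∈ Vᗮ) (h0 : w ≠ 0) :
    (nz b v w : EE n) ∈ V := by
  rw [nz, nrm_coe (mm_ne b v hw h0)]
  apply V.smul_mem
  rw [mm, hv]; simp [iV_mem]

lemma nz_cont : ContinuousOn (fun p : (Fin (k + 1) → ℝ) × Vᗮ => nz b p.1 (p.2 : EE n)) (Set.univ ×ˢ {0}ᶜ) := by
  refine nrm_cont.comp (t := {0}ᶜ) ?_ ?_
  · apply Continuous.continuousOn
    have := iV_cont b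
    unfold mm
    fun_prop
  · rintro p ⟨-, hp⟩
    apply mm_ne b _ p.2.2
    simpa using hp

variable {G : Type*} [Group G] {ρ : G →* (EE n ≃ₗᵢ[ℝ] EE n)} (hVfix : ∀ g : G, ∀ v ∈ V, ρ g v = v)
include hVfix

lemma perp_inv (g : G) {w : EE n} (hw : w ∈ Vᗮ) : ρ g w ∈ Vᗮ := by
  intro v hv
  rw [← hVfix g v hv, (ρ g).inner_map_map]
  exact hw v hv

lemma mm_act (g : G) (v) (w : EE n) : ρ g (mm b v w) = mm b v (ρ g w) := by
  rw [mm, map_add, map_smul, hVfix g _ (iV_mem b v), mm]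

lemma nz_act (g : G) (v) {w : EE n} (hw : w ∈ Vᗮ) (h0 : w ≠ 0) :
    nz b v (ρ g w) = sphereAct ρ g (nz b v w) := by
  apply Subtype.ext
  have h1 := mm_ne b v hw h0
  have h2 : mm b v (ρ g w) ≠ 0 := mm_ne b v (perp_inv hVfix g hw) (by simpa using h0)
  simp only [sphereAct, nz]
  rw [nrm_coe h1, nrm_coe h2, map_smul, mm_act b hVfix, ← mm_act b hVfix, (ρ g).norm_map]

end geo

lemma smul_cont {T F : Type*} [TopologicalSpace T] [NormedAddCommGroup F] [NormedSpace ℝ F]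
    {f : T → ℝ} {g : T → F} {D : Set T} (hf : ContinuousOn f D) {C : ℝ} (hC : ∀ x, ‖g x‖ ≤ C)
    (hg : ∀ x ∈ D, f x ≠ 0 → ContinuousWithinAt g D x) : ContinuousOn (fun x => f x • g x) D := by
  intro x hx
  by_cases h0 : f x = 0
  · have hfx := hf x hx
    unfold ContinuousWithinAt at *
    rw [h0] at hfx
    simp only [h0, zero_smul]
    apply squeeze_zero_norm (a := fun y => |f y| * C)
    · intro y
      rw [norm_smul]
      exact mul_le_mul_of_nonneg_left (hC y) (abs_nonneg _)
    · have := (hfx.abs).mul_const C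
      simpa using this
  · exact (hf x hx).smul (hg x hx h0)

end LC

namespace LC
open List unitInterval PaperTC

section tdbd
variable {n k : ℕ} {V : Submodule ℝ (EE n)} (b : OrthonormalBasis (Fin (k + 1)) ℝ V)
  (x0 : EE n)

/-- the pair of points -/
noncomputable def PP (z : QQ k × Vᗮ) : Sph n × Sph n := (nz b z.1.1 x0, nz b z.1.2 (z.2 : EE n))

/-- the vector function -/
noncomputable def al (s1 : Bool → Sph n × Sph n → C(I, Sph n)) (f : Bool → Sph n × Sph n → ℝ)
    (i : Bool) (z : QQ k × Vᗮ) : Fin (k + 1) → ℝ := f i (PP b x0 z) • cV b (s1 i (PP b x0 z) 1)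

lemma ev_cont {S : Type*} [TopologicalSpace S] {D : Set S} (s : Sph n × Sph n → C(I, Sph n)) {O : Set (Sph n × Sph n)}
    (hs : ContinuousOn s O) {P : S → Sph n × Sph n} (hP : ContinuousOn P D) (hm : ∀ x ∈ D, P x ∈ O)
    {τ : ℝ → I} (hτ : Continuous τ) {R : Set ℝ} :
    ContinuousOn (fun x : S × ℝ => cV b (s (P x.1) (τ x.2) : EE n)) (D ×ˢ R) := by
  have h1 : ContinuousOn (fun x : S × ℝ => s (P x.1)) (D ×ˢ R) :=
    hs.comp (hP.comp continuousOn_fst fun x hx => hx.1) fun x hx => hm _ hx.1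
  have h2 : ContinuousOn (fun x : S × ℝ => (s (P x.1), τ x.2)) (D ×ˢ R) :=
    h1.prodMk (hτ.comp continuous_snd).continuousOn
  have h4 : Continuous fun y : C(I, Sph n) × I => y.1 y.2 := continuous_eval
  have h3 : Continuous fun y : C(I, Sph n) × I => cV b (y.1 y.2 : EE n) :=
    (cV_cont b).comp (continuous_subtype_val.comp h4)
  have h5 := h3.comp_continuousOn h2
  exact h5

variable {x0} (hx0 : x0 ∈ Vᗮ) (hx0' : x0 ≠ 0)
include hx0 hx0'

lemma PP_cont : ContinuousOn (PP b x0 (V := V)) (Set.univ ×ˢ {0}ᶜ) := by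
  have hn := nz_cont b
  have h1 : Continuous fun z : QQ k × Vᗮ => ((z.1.1, ⟨x0, hx0⟩) : (Fin (k + 1) → ℝ) × Vᗮ) := by fun_prop
  have h2 : Continuous fun z : QQ k × Vᗮ => ((z.1.2, z.2) : (Fin (k + 1) → ℝ) × Vᗮ) := by fun_prop
  have h0 : (⟨x0, hx0⟩ : Vᗮ) ≠ 0 := by
    intro h; exact hx0' (congrArg Subtype.val h)
  have h3 : ContinuousOn (fun z : QQ k × Vᗮ => nz b z.1.1 x0) (Set.univ ×ˢ {0}ᶜ) :=
    ContinuousOn.comp (g := fun p : (Fin (k + 1) → ℝ) × Vᗮ => nz b p.1 (p.2 : EE n))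
      (f := fun z : QQ k × Vᗮ => ((z.1.1, ⟨x0, hx0⟩) : (Fin (k + 1) → ℝ) × Vᗮ)) hn h1.continuousOn
      (fun z _ => Set.mk_mem_prod trivial h0)
  have h4 : ContinuousOn (fun z : QQ k × Vᗮ => nz b z.1.2 (z.2 : EE n)) (Set.univ ×ˢ {0}ᶜ) :=
    ContinuousOn.comp (g := fun p : (Fin (k + 1) → ℝ) × Vᗮ => nz b p.1 (p.2 : EE n))
      (f := fun z : QQ k × Vᗮ => ((z.1.2, z.2) : (Fin (k + 1) → ℝ) × Vᗮ)) hn h2.continuousOn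
      (fun z hz => Set.mk_mem_prod trivial hz.2)
  exact h3.prodMk h4

variable {G : Type*} [Group G] {ρ : G →* (EE n ≃ₗᵢ[ℝ] EE n)}
  {U : Bool → Set (Sph n × Sph n)} {s1 s2 : Bool → Sph n × Sph n → C(I, Sph n)}
  {f : Bool → Sph n × Sph n → ℝ} (T : TD ρ U s1 s2 f)
include T

lemma al_cont (i) : ContinuousOn (al b x0 s1 f i (V := V)) (Set.univ ×ˢ {0}ᶜ) := by
  have hP := PP_cont b hx0 hx0'
  apply smul_cont (C := 1) ((T.hfc i).comp_continuousOn hP)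
  · intro z
    rw [pi_norm_le_iff_of_nonneg zero_le_one]
    intro j
    exact (cV_le b _ j).trans (Sph_norm _).le
  · intro z hz h0
    have hU : PP b x0 z ∈ U i := T.hpos i _ (lt_of_le_of_ne (T.hf0 i _) (Ne.symm h0))
    have h1 : ContinuousAt (s1 i) (PP b x0 z) := (T.c1 i).continuousAt ((T.hU i).mem_nhds hU)
    have h2 := h1.comp_continuousWithinAt (hP z hz)
    have h3 : Continuous fun γ : C(I, Sph n) => cV b (γ 1 : EE n) :=
      (cV_cont b).comp (continuous_subtype_val.comp (continuous_eval_const 1))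
    exact h3.continuousAt.comp_continuousWithinAt h2

omit hx0 hx0' in
lemma TD.fix1 (hVfix : ∀ g : G, ∀ v ∈ V, ρ g v = v)
    (hfixV : ∀ x : Sph n, (∀ g : G, sphereAct ρ g x = x) → (x : EE n) ∈ V)
    {i p} (hp : p ∈ U i) (h : (p.1 : EE n) ∈ V) (t : I) : (s1 i p t : EE n) ∈ V := by
  apply hfixV
  intro g
  rw [← T.e1 i p hp g 1 t, sA_one]
  have : sphereAct ρ g p.1 = p.1 := Subtype.ext (hVfix g _ h)
  rw [this]

omit hx0 hx0' in
lemma TD.fix2 (hVfix : ∀ g : G, ∀ v ∈ V, ρ g v = v)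
    (hfixV : ∀ x : Sph n, (∀ g : G, sphereAct ρ g x = x) → (x : EE n) ∈ V)
    {i p} (hp : p ∈ U i) (h : (p.2 : EE n) ∈ V) (t : I) : (s2 i p t : EE n) ∈ V := by
  apply hfixV
  intro g
  rw [← T.e2 i p hp 1 g t, sA_one]
  have : sphereAct ρ g p.2 = p.2 := Subtype.ext (hVfix g _ h)
  rw [this]

omit hx0 hx0' in
lemma TD.AB (hVfix : ∀ g : G, ∀ v ∈ V, ρ g v = v)
    {i p} (hp : p ∈ U i) (h : (s2 i p 0 : EE n) ∈ V) : s1 i p 1 = s2 i p 0 := by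
  have h1 : s1 i p 1 ∈ PaperTC.orbit (sphereAct ρ) (s1 i p 1) := ⟨1, sA_one ρ _⟩
  rw [T.horb i p hp] at h1
  obtain ⟨g, hg⟩ := h1
  rw [← hg]
  exact Subtype.ext (hVfix g _ h)

lemma TD_BD (hVfix : ∀ g : G, ∀ v ∈ V, ρ g v = v)
    (hfixV : ∀ x : Sph n, (∀ g : G, sphereAct ρ g x = x) → (x : EE n) ∈ V)
    (hk : 0 < k) {w : Vᗮ} (hw : w ≠ 0) :
    (∀ i q, q ∈ E1 k ∨ q ∈ E2 k → 1 / 4 ≤ f i (PP b x0 (q, w)) → al b x0 s1 f i (q, w) ≠ 0) ∧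
    ∃ n0 : ℕ, ∀ m ≥ n0, BD k m fun i q => al b x0 s1 f i (q, w) := by
  have hw' : (w : EE n) ≠ 0 := by simpa using hw
  have hq : Continuous fun q : QQ k => ((q, w) : QQ k × Vᗮ) := by fun_prop
  have hP : ContinuousOn (fun q : QQ k => PP b x0 (q, w)) Set.univ :=
    (PP_cont b hx0 hx0').comp hq.continuousOn fun q _ => ⟨trivial, hw⟩
  have hmem : ∀ i q, 1 / 4 ≤ f i (PP b x0 (q, w)) → PP b x0 (q, w) ∈ U i := by
    intro i q h
    exact T.hpos i _ (by linarith)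
  have hV1 : ∀ i q, q ∈ E1 k → 1 / 4 ≤ f i (PP b x0 (q, w)) → ∀ t, (s1 i (PP b x0 (q, w)) t : EE n) ∈ V := by
    intro i q hq h t
    exact T.fix1 hVfix hfixV (hmem i q h) (nz_V b hq.1 hx0 hx0') t
  have hV2 : ∀ i q, q ∈ E2 k → 1 / 4 ≤ f i (PP b x0 (q, w)) → ∀ t, (s2 i (PP b x0 (q, w)) t : EE n) ∈ V := by
    intro i q hq h t
    exact T.fix2 hVfix hfixV (hmem i q h) (nz_V b hq.2 w.2 hw') t
  have hAB : ∀ i q, q ∈ E2 k → 1 / 4 ≤ f i (PP b x0 (q, w)) →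
      s1 i (PP b x0 (q, w)) 1 = s2 i (PP b x0 (q, w)) 0 := by
    intro i q hq h
    exact T.AB hVfix (hmem i q h) (hV2 i q hq h 0)
  have hsg : ∀ i q, 1 / 4 ≤ f i (PP b x0 (q, w)) → ∀ j,
      sg (cV b (s1 i (PP b x0 (q, w)) 1) j) = sg (al b x0 s1 f i (q, w) j) := by
    intro i q h j
    have : 0 < f i (PP b x0 (q, w)) := by linarith
    simp only [sg, al, Pi.smul_apply, smul_eq_mul, mul_pos_iff_of_pos_left this]
  have hne : ∀ i q, q ∈ E1 k ∨ q ∈ E2 k → 1 / 4 ≤ f i (PP b x0 (q, w)) → al b x0 s1 f i (q, w) ≠ 0 := by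
    intro i q hq h
    apply smul_ne_zero
    · intro h0; rw [h0] at h; norm_num at h
    · apply cV_ne b _ (Sph_ne _)
      rcases hq with hq | hq
      · exact hV1 i q hq h 1
      · rw [hAB i q hq h]; exact hV2 i q hq h 0
  refine ⟨hne, ?_⟩
  let τ : ℝ → I := fun t => Set.projIcc 0 1 zero_le_one ((1 + t) / 2)
  let τ' : ℝ → I := fun t => Set.projIcc 0 1 zero_le_one ((1 - t) / 2)
  have hτ : Continuous τ := continuous_projIcc.comp (by fun_prop)
  have hτ' : Continuous τ' := continuous_projIcc.comp (by fun_prop)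
  have a1 : τ (-1) = 0 := by simp [τ]
  have a2 : τ 1 = 1 := by simp [τ]
  have a3 : τ' (-1) = 1 := by
    have : (1 - -1 : ℝ) / 2 = 1 := by norm_num
    simp [τ', this]
  have a4 : τ' 1 = 0 := by simp [τ']
  refine BD_of hk _ (fun i q => f i (PP b x0 (q, w))) ?_ ?_ ?_ hne
    (fun i x => cV b (s1 i (PP b x0 (x.1, w)) (τ x.2))) (fun i x => cV b (s2 i (PP b x0 (x.1, w)) (τ' x.2)))
    ?_ ?_ ?_ ?_ ?_ ?_ ?_ ?_
  · intro i
    exact ((T.hfc i).comp_continuousOn hP).mono fun _ _ => trivial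
  · intro p _
    exact T.hsum _
  · intro i
    exact (al_cont b hx0 hx0' T i).comp hq.continuousOn fun q _ => ⟨trivial, hw⟩
  · intro i
    exact ev_cont b (s1 i) (T.c1 i) (hP.mono fun _ _ => trivial) (fun q hq => hmem i q hq.2) hτ
  · rintro i x ⟨⟨h1, h2⟩, -⟩
    exact cV_ne b (hV1 i _ h1 h2 _) (Sph_ne _)
  · intro i p hp h j
    simp only [a1]
    rw [T.st1 i _ (hmem i p h)]
    exact nz_sg b _ hx0 hx0' j
  · intro i p hp h j
    simp only [a2]
    exact hsg i p h j
  · intro i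
    exact ev_cont b (s2 i) (T.c2 i) (hP.mono fun _ _ => trivial) (fun q hq => hmem i q hq.2) hτ'
  · rintro i x ⟨⟨h1, h2⟩, -⟩
    exact cV_ne b (hV2 i _ h1 h2 _) (Sph_ne _)
  · intro i p hp h j
    simp only [a3]
    rw [T.en2 i _ (hmem i p h)]
    exact nz_sg b _ w.2 hw' j
  · intro i p hp h j
    simp only [a4]
    rw [← hAB i p hp h]
    exact hsg i p h j

end tdbd
end LC

namespace LC
open List unitInterval PaperTC

section fin
variable {n k : ℕ} {V : Submodule ℝ (EE n)} (b : OrthonormalBasis (Fin (k + 1)) ℝ V)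
  {G : Type*} [Group G] {ρ : G →* (EE n ≃ₗᵢ[ℝ] EE n)}

/-- H has a nonzero fixed vector in the complement -/
def HF (ρ : G →* (EE n ≃ₗᵢ[ℝ] EE n)) (V : Submodule ℝ (EE n)) (H : Subgroup G) : Prop :=
  ∃ w ∈ Vᗮ, w ≠ 0 ∧ ∀ h ∈ H, ρ h w = w

lemma fixed_zero (hfixV : ∀ x : Sph n, (∀ g : G, sphereAct ρ g x = x) → (x : EE n) ∈ V)
    {w : EE n} (hw : w ∈ Vᗮ) (h : ∀ g, ρ g w = w) : w = 0 := by
  by_contra h0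
  have h1 := hfixV (nrm w) (by
    intro g
    apply Subtype.ext
    simp only [sphereAct]
    rw [nrm_coe h0, map_smul, h g])
  rw [nrm_coe h0] at h1
  have h2 := V.smul_mem ‖w‖ h1
  rw [smul_smul, mul_inv_cancel₀ (norm_ne_zero_iff.2 h0), one_smul] at h2
  have := hw w h2
  rw [inner_self_eq_zero] at this
  exact h0 this

lemma stab_max (hVfix : ∀ g : G, ∀ v ∈ V, ρ g v = v) {H : Subgroup G} (hH : Maximal (HF ρ V) H)
    (A : Sph n) (hA : ∀ h ∈ H, sphereAct ρ h A = A) (hs : ∀ j, |cV b A j| < 1 / (2 * (k + 1)))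
    {u : G} (hu : sphereAct ρ u A = A) : u ∈ H := by
  let K : Subgroup G :=
    { carrier := {u | sphereAct ρ u A = A}
      mul_mem' := by
        intro a c ha hc
        change sphereAct ρ (a * c) A = A
        rw [sA_mul, show sphereAct ρ c A = A from hc, show sphereAct ρ a A = A from ha]
      one_mem' := sA_one ρ A
      inv_mem' := by
        intro a ha
        change sphereAct ρ a⁻¹ A = A
        conv_lhs => rw [← show sphereAct ρ a A = A from ha]
        rw [← sA_mul, inv_mul_cancel, sA_one] }
  have hK : HF ρ V K := by
    refine ⟨A - iV b (cV b A), sub_perp b _, ?_, ?_⟩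
    · intro h
      rw [sub_eq_zero] at h
      have h1 := iV_norm b (cV b A)
      rw [← h, Sph_norm] at h1
      have h2 : ∑ j, |cV b (A : EE n) j| ≤ ∑ j : Fin (k + 1), (1 / (2 * (k + 1)) : ℝ) :=
        Finset.sum_le_sum fun j _ => (hs j).le
      have h3 : ∑ j : Fin (k + 1), (1 / (2 * (k + 1)) : ℝ) = 1 / 2 := by
        simp; field_simp
      rw [h3] at h2
      linarith
    · intro u hu
      rw [map_sub, hVfix u _ (iV_mem b _)]
      have : ρ u A = A := congrArg Subtype.val (show sphereAct ρ u A = A from hu)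
      rw [this]
  exact hH.2 hK hA hu

variable {x0 : EE n} {U : Bool → Set (Sph n × Sph n)} {s1 s2 : Bool → Sph n × Sph n → C(I, Sph n)}
  {f : Bool → Sph n × Sph n → ℝ}

variable (x0 f) in
/-- which set is used -/
noncomputable def stt (z : QQ k × Vᗮ) : Bool := decide (1 / 2 ≤ f true (PP b x0 z))

variable (x0 f s1 s2 ρ) in
open Classical in
/-- the label -/
noncomputable def lbl (H : Subgroup G) (z : QQ k × Vᗮ) : G ⧸ H :=
  if h : ∃ g : G, sphereAct ρ g (s1 (stt b x0 f z) (PP b x0 z) 1) = s2 (stt b x0 f z) (PP b x0 z) 0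
  then (h.choose : G ⧸ H) else ((1 : G) : G ⧸ H)

/-- restricted action -/
noncomputable def actW (hVfix : ∀ g : G, ∀ v ∈ V, ρ g v = v) (g : G) : Vᗮ →ₗ[ℝ] Vᗮ :=
  ((ρ g).toLinearEquiv.toLinearMap).restrict fun _ hw => perp_inv hVfix g hw

variable (T : TD ρ U s1 s2 f)
include T

lemma stt_half (z : QQ k × Vᗮ) : 1 / 2 ≤ f (stt b x0 f z) (PP b x0 z) := by
  by_cases h : 1 / 2 ≤ f true (PP b x0 z)
  · simp only [stt, h, decide_true]
  · simp only [stt, h, decide_false]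
    have := T.hsum (PP b x0 z)
    linarith

lemma lbl_spec {H : Subgroup G} (z : QQ k × Vᗮ) : ∃ g : G,
    sphereAct ρ g (s1 (stt b x0 f z) (PP b x0 z) 1) = s2 (stt b x0 f z) (PP b x0 z) 0 ∧
      lbl b ρ x0 s1 s2 f H z = (g : G ⧸ H) := by
  have h : ∃ g : G, sphereAct ρ g (s1 (stt b x0 f z) (PP b x0 z) 1) = s2 (stt b x0 f z) (PP b x0 z) 0 := by
    have hU : PP b x0 z ∈ U (stt b x0 f z) := T.hpos _ _ (by linarith [stt_half b (x0 := x0) T z])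
    have : s2 (stt b x0 f z) (PP b x0 z) 0 ∈ PaperTC.orbit (sphereAct ρ) (s2 (stt b x0 f z) (PP b x0 z) 0) :=
      ⟨1, sA_one ρ _⟩
    rw [← T.horb _ _ hU] at this
    exact this
  exact ⟨h.choose, h.choose_spec, by rw [lbl, dif_pos h]⟩

lemma lbl_stab (hVfix : ∀ g : G, ∀ v ∈ V, ρ g v = v) {H : Subgroup G} (hH : Maximal (HF ρ V) H)
    (hx0 : x0 ∈ Vᗮ) (hx0' : x0 ≠ 0) (hxH : ∀ h ∈ H, ρ h x0 = x0)
    {z : QQ k × Vᗮ} {i : Bool} (hi : 1 / 2 ≤ f i (PP b x0 z))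
    (hs : ∀ j, |al b x0 s1 f i z j| < 1 / (4 * (k + 1))) {g g' : G}
    (hg : sphereAct ρ g (s1 i (PP b x0 z) 1) = sphereAct ρ g' (s1 i (PP b x0 z) 1)) :
    (g : G ⧸ H) = (g' : G ⧸ H) := by
  have hU : PP b x0 z ∈ U i := T.hpos _ _ (by linarith)
  rw [QuotientGroup.eq]
  apply stab_max b hVfix hH (s1 i (PP b x0 z) 1)
  · intro h hh
    rw [← T.e1 i _ hU h 1 1, sA_one]
    have : sphereAct ρ h (PP b x0 z).1 = (PP b x0 z).1 := by
      simp only [PP]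
      rw [← nz_act b hVfix h _ hx0 hx0', hxH h hh]
    rw [this]
  · intro j
    have h1 := hs j
    simp only [al, Pi.smul_apply, smul_eq_mul, abs_mul] at h1
    rw [abs_of_nonneg (T.hf0 i _)] at h1
    have h2 : (1 / 2 : ℝ) * |cV b (s1 i (PP b x0 z) 1) j| ≤ f i (PP b x0 z) * |cV b (s1 i (PP b x0 z) 1) j| :=
      mul_le_mul_of_nonneg_right hi (abs_nonneg _)
    have h3 : (1 / (2 * (k + 1)) : ℝ) = 2 * (1 / (4 * (k + 1))) := by field_simp; norm_num
    rw [h3]; linarith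
  · rw [sA_mul, ← hg, ← sA_mul, inv_mul_cancel, sA_one]

omit T in
lemma PP_act (hVfix : ∀ g : G, ∀ v ∈ V, ρ g v = v) (g : G) (q : QQ k) {w : Vᗮ} (hw : w ≠ 0) :
    PP b x0 (q, actW hVfix g w) = (sphereAct ρ 1 (PP b x0 (q, w)).1, sphereAct ρ g (PP b x0 (q, w)).2) := by
  rw [sA_one]
  simp only [PP]
  rw [← nz_act b hVfix g _ w.2 (by simpa using hw)]
  rfl

end fin
end LC

namespace LC
open List unitInterval PaperTC

section fin2
variable {n k : ℕ} {V : Submodule ℝ (EE n)} (b : OrthonormalBasis (Fin (k + 1)) ℝ V)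
  {G : Type*} [Group G] {ρ : G →* (EE n ≃ₗᵢ[ℝ] EE n)}
  {x0 : EE n} {U : Bool → Set (Sph n × Sph n)} {s1 s2 : Bool → Sph n × Sph n → C(I, Sph n)}
  {f : Bool → Sph n × Sph n → ℝ} (T : TD ρ U s1 s2 f)
include T

lemma loc_compact (hx0 : x0 ∈ Vᗮ) (hx0' : x0 ≠ 0) {C : Set Vᗮ} (hC : IsCompact C) (h0 : 0 ∉ C) (i : Bool) (g : G)
    (r : ℝ) : IsCompact {z : QQ k × Vᗮ | (z ∈ K2 k ×ˢ C ∧ (1 / 2 ≤ f i (PP b x0 z) ∧ ‖al b x0 s1 f i z‖ ≤ r)) ∧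
      sphereAct ρ g (s1 i (PP b x0 z) 1) = s2 i (PP b x0 z) 0} := by
  have hK := (K2_compact k).prod hC
  have hsub : K2 k ×ˢ C ⊆ (Set.univ ×ˢ {0}ᶜ : Set (QQ k × Vᗮ)) := by
    rintro z ⟨-, hz⟩
    refine ⟨trivial, fun h => h0 ?_⟩
    rw [← Set.mem_singleton_iff.1 h]; exact hz
  have hP := (PP_cont b hx0 hx0').mono hsub
  have ha := ((al_cont b hx0 hx0' T i).mono hsub).norm
  have hf := (T.hfc i).comp_continuousOn hP
  have cl1 := (hf.prodMk ha).preimage_isClosed_of_isClosed hK.isClosed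
    ((isClosed_Ici (a := (1 / 2 : ℝ))).prod (isClosed_Iic (a := r)))
  have hD : IsCompact {z : QQ k × Vᗮ | z ∈ K2 k ×ˢ C ∧ (1 / 2 ≤ f i (PP b x0 z) ∧ ‖al b x0 s1 f i z‖ ≤ r)} :=
    hK.of_isClosed_subset cl1 (fun z hz => hz.1)
  set D := {z : QQ k × Vᗮ | z ∈ K2 k ×ˢ C ∧ (1 / 2 ≤ f i (PP b x0 z) ∧ ‖al b x0 s1 f i z‖ ≤ r)}
  have hPD : ContinuousOn (PP b x0) D := hP.mono fun z hz => hz.1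
  have hU : ∀ z ∈ D, PP b x0 z ∈ U i := fun z hz => T.hpos i _ (by linarith [hz.2.1])
  have e1 : Continuous fun γ : C(I, Sph n) => γ 1 := continuous_eval_const 1
  have e0 : Continuous fun γ : C(I, Sph n) => γ 0 := continuous_eval_const 0
  have hA : ContinuousOn (fun z => sphereAct ρ g (s1 i (PP b x0 z) 1)) D := by
    have := (sA_isom ρ g).continuous.comp_continuousOn (e1.comp_continuousOn ((T.c1 i).comp hPD hU))
    exact this
  have hB : ContinuousOn (fun z => s2 i (PP b x0 z) 0) D := by
    have := e0.comp_continuousOn ((T.c2 i).comp hPD hU)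
    exact this
  have cl2 := (hA.prodMk hB).preimage_isClosed_of_isClosed hD.isClosed isClosed_diagonal
  exact hD.of_isClosed_subset cl2 (fun z hz => hz.1)

set_option maxHeartbeats 1000000 in
lemma TD_Core [Finite G] (hVfix : ∀ g : G, ∀ v ∈ V, ρ g v = v)
    (hfixV : ∀ x : Sph n, (∀ g : G, sphereAct ρ g x = x) → (x : EE n) ∈ V)
    (hk : 0 < k) {H : Subgroup G} (hH : Maximal (HF ρ V) H)
    (hx0 : x0 ∈ Vᗮ) (hx0' : x0 ≠ 0) (hxH : ∀ h ∈ H, ρ h x0 = x0) :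
    Core k G (G ⧸ H) Vᗮ (actW hVfix) (al b x0 s1 f) (stt b x0 f) (lbl b ρ x0 s1 s2 f H) (1 / (8 * (k + 1))) := by
  have hrr : (1 / (8 * (k + 1)) : ℝ) < 1 / (4 * (k + 1)) := by
    apply one_div_lt_one_div_of_lt <;> linarith [(Nat.cast_nonneg k : (0:ℝ) ≤ k)]
  have hhalf := stt_half b (x0 := x0) T
  have hst : ∀ g q (w : Vᗮ), w ≠ 0 → stt b x0 f (q, actW hVfix g w) = stt b x0 f (q, w) := by
    intro g q w hw
    simp only [stt]
    rw [PP_act b hVfix g q hw, T.hinv]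
  constructor
  · positivity
  · intro g h w
    apply Subtype.ext
    simp [actW]
  · intro w
    apply Subtype.ext
    simp [actW]
  · intro i
    exact (al_cont b hx0 hx0' T i).mono fun z hz => ⟨trivial, hz.2⟩
  · intro q hq w hw
    have h1 := (TD_BD b hx0 hx0' T hVfix hfixV hk hw).1
    have h2 := hhalf (q, w)
    have h3 := h1 (stt b x0 f (q, w)) q hq (by linarith)
    cases h4 : stt b x0 f (q, w)
    · rw [h4] at h3; exact Or.inr h3
    · rw [h4] at h3; exact Or.inl h3
  · intro g q _ w hw i
    simp only [al]
    rw [PP_act b hVfix g q hw, T.hinv]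
    by_cases h0 : f i (PP b x0 (q, w)) = 0
    · rw [h0]; simp
    · have hU : PP b x0 (q, w) ∈ U i := T.hpos i _ (lt_of_le_of_ne (T.hf0 i _) (Ne.symm h0))
      rw [T.e1 i _ hU, sA_one]
  · intro g q _ w hw
    exact hst g q w hw
  · intro g q _ w hw hs
    obtain ⟨u, hu, hl⟩ := lbl_spec b (x0 := x0) T (H := H) (q, w)
    obtain ⟨u', hu', hl'⟩ := lbl_spec b (x0 := x0) T (H := H) (q, actW hVfix g w)
    have h2 := hhalf (q, w)
    have hU : PP b x0 (q, w) ∈ U (stt b x0 f (q, w)) := T.hpos _ _ (by linarith)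
    rw [hl, hl']
    rw [hst g q w hw, PP_act b hVfix g q hw, T.e1 _ _ hU, T.e2 _ _ hU, sA_one, ← hu, ← sA_mul] at hu'
    have := lbl_stab b T hVfix hH hx0 hx0' hxH h2 (fun j => (hs _ j).trans hrr) hu'
    rw [this]; rfl
  · intro C hC h0
    have key : ∀ p : Bool × G × G, ∃ ε > 0, (p.2.1 : G ⧸ H) ≠ (p.2.2 : G ⧸ H) →
        ∀ z ∈ {z : QQ k × Vᗮ | (z ∈ K2 k ×ˢ C ∧ (1 / 2 ≤ f p.1 (PP b x0 z) ∧ ‖al b x0 s1 f p.1 z‖ ≤ 1 / (8 * (k + 1)))) ∧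
          sphereAct ρ p.2.1 (s1 p.1 (PP b x0 z) 1) = s2 p.1 (PP b x0 z) 0},
        ∀ z' ∈ {z : QQ k × Vᗮ | (z ∈ K2 k ×ˢ C ∧ (1 / 2 ≤ f p.1 (PP b x0 z) ∧ ‖al b x0 s1 f p.1 z‖ ≤ 1 / (8 * (k + 1)))) ∧
          sphereAct ρ p.2.2 (s1 p.1 (PP b x0 z) 1) = s2 p.1 (PP b x0 z) 0}, ε < dist z z' := by
      rintro ⟨i, g, g'⟩
      by_cases hg : (g : G ⧸ H) = (g' : G ⧸ H)
      · exact ⟨1, one_pos, fun h => absurd hg h⟩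
      · have hd : Disjoint {z : QQ k × Vᗮ | (z ∈ K2 k ×ˢ C ∧ (1 / 2 ≤ f i (PP b x0 z) ∧ ‖al b x0 s1 f i z‖ ≤ 1 / (8 * (k + 1)))) ∧
          sphereAct ρ g (s1 i (PP b x0 z) 1) = s2 i (PP b x0 z) 0}
          {z : QQ k × Vᗮ | (z ∈ K2 k ×ˢ C ∧ (1 / 2 ≤ f i (PP b x0 z) ∧ ‖al b x0 s1 f i z‖ ≤ 1 / (8 * (k + 1)))) ∧
          sphereAct ρ g' (s1 i (PP b x0 z) 1) = s2 i (PP b x0 z) 0} := by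
          rw [Set.disjoint_left]
          rintro z ⟨⟨-, h1, h2⟩, h3⟩ ⟨-, h4⟩
          apply hg
          refine lbl_stab b T hVfix hH hx0 hx0' hxH h1 (fun j => ?_) (h3.trans h4.symm)
          exact lt_of_le_of_lt (norm_le_pi_norm (al b x0 s1 f i z) j) (h2.trans_lt hrr)
        obtain ⟨r, hr, h⟩ := Metric.exists_pos_forall_lt_edist (loc_compact b T hx0 hx0' hC h0 i g _)
          (loc_compact b T hx0 hx0' hC h0 i g' _).isClosed hd
        refine ⟨r, hr, fun _ z hz z' hz' => ?_⟩
        have := h z hz z' hz'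
        rw [edist_nndist] at this
        exact_mod_cast this
    choose e he hk2 using key
    obtain ⟨p0, hp0⟩ := Finite.exists_min e
    refine ⟨e p0, he p0, ?_⟩
    intro z hz z' hz' hd hs hsm hsm'
    obtain ⟨u, hu, hl⟩ := lbl_spec b (x0 := x0) T (H := H) z
    obtain ⟨u', hu', hl'⟩ := lbl_spec b (x0 := x0) T (H := H) z'
    rw [hl, hl']
    by_contra hne
    have hn : ∀ i z, (∀ i j, |al b x0 s1 f i z j| < 1 / (8 * (k + 1) : ℝ)) → ‖al b x0 s1 f i z‖ ≤ 1 / (8 * (k + 1) : ℝ) := by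
      intro i z h
      rw [pi_norm_le_iff_of_nonneg (by positivity)]
      exact fun j => (h i j).le
    rw [← hs] at hu'
    have h3 := hhalf z'
    rw [← hs] at h3
    have := hk2 (stt b x0 f z, u, u') hne z ⟨⟨hz, hhalf z, hn _ _ hsm⟩, hu⟩ z' ⟨⟨hz', h3, hn _ _ hsm'⟩, hu'⟩
    have := hp0 (stt b x0 f z, u, u')
    linarith
  · intro w hw
    obtain ⟨n0, h⟩ := (TD_BD b hx0 hx0' T hVfix hfixV hk hw).2
    exact ⟨n0, fun m hm => degree (α := fun i q => al b x0 s1 f i (q, w)) (h m hm)⟩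

omit T in
theorem no_two [Finite G] (hVfix : ∀ g : G, ∀ v ∈ V, ρ g v = v)
    (hfixV : ∀ x : Sph n, (∀ g : G, sphereAct ρ g x = x) → (x : EE n) ∈ V)
    (hk : 0 < k) (hV : Module.finrank ℝ V = k + 1) (hW : 3 ≤ Module.finrank ℝ Vᗮ)
    (h : invTCcover (sphereAct ρ) 2) : False := by
  obtain ⟨U, s1, s2, f, T⟩ := TD_of ρ h
  let b : OrthonormalBasis (Fin (k + 1)) ℝ V := (stdOrthonormalBasis ℝ V).reindex (finCongr hV)
  have : Nontrivial Vᗮ := Module.nontrivial_of_finrank_pos (R := ℝ) (by omega)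
  obtain ⟨w0, hw0⟩ := exists_ne (0 : Vᗮ)
  obtain ⟨H, hH⟩ := (Set.toFinite {H : Subgroup G | HF ρ V H}).exists_maximal
    ⟨⊥, w0, w0.2, by simpa using hw0, by
      intro h hh; rw [Subgroup.mem_bot.1 hh]; simp⟩
  change Maximal (HF ρ V) H at hH
  obtain ⟨x0, hx0, hx0', hxH⟩ := hH.1
  have hnt : H ≠ ⊤ := by
    rintro rfl
    exact hx0' (fixed_zero hfixV hx0 fun g => hxH g trivial)
  have : Nontrivial (G ⧸ H) := by
    by_contra hc
    rw [not_nontrivial_iff_subsingleton, QuotientGroup.subsingleton_iff] at hc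
    exact hnt hc
  have := Fintype.ofFinite (G ⧸ H)
  exact (TD_Core b T hVfix hfixV hk hH hx0 hx0' hxH).false hW

omit T in
theorem odd_two (hVfix : ∀ g : G, ∀ v ∈ V, ρ g v = v)
    (hfixV : ∀ x : Sph n, (∀ g : G, sphereAct ρ g x = x) → (x : EE n) ∈ V)
    (hk : 0 < k) (hV : Module.finrank ℝ V = k + 1) (hW : 0 < Module.finrank ℝ Vᗮ)
    (h : invTCcover (sphereAct ρ) 2) : Odd k := by
  obtain ⟨U, s1, s2, f, T⟩ := TD_of ρ h
  let b : OrthonormalBasis (Fin (k + 1)) ℝ V := (stdOrthonormalBasis ℝ V).reindex (finCongr hV)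
  have : Nontrivial Vᗮ := Module.nontrivial_of_finrank_pos (R := ℝ) (by omega)
  obtain ⟨w0, hw0⟩ := exists_ne (0 : Vᗮ)
  obtain ⟨n0, h⟩ := (TD_BD b w0.2 (by simpa using hw0) T hVfix hfixV hk hw0).2
  exact parity (h n0 le_rfl)
end fin2
end LC

namespace LC
open List ComplexConjugate

/-- normalised power -/
noncomputable def pM (M : ℕ) (w : ℂ) : ℂ := w ^ M / (‖w‖ : ℂ) ^ (M - 1)
/-- folding -/
noncomputable def FF (z : ℂ) : ℂ := ⟨z.re, |z.im|⟩

lemma pM_norm {M : ℕ} (hM : 0 < M) (w : ℂ) : ‖pM M w‖ = ‖w‖ := by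
  by_cases h : w = 0
  · subst h; simp [pM, hM.ne']
  · have h1 : ‖w‖ ≠ 0 := norm_ne_zero_iff.2 h
    obtain ⟨m, rfl⟩ := Nat.exists_eq_succ_of_ne_zero hM.ne'
    simp [pM, norm_pow, pow_succ]
    field_simp

lemma pM_cont {M : ℕ} (hM : 0 < M) : Continuous (pM M) := by
  rw [continuous_iff_continuousAt]
  intro w
  by_cases h : w = 0
  · subst h
    have h0 : pM M 0 = 0 := by simp [pM, hM.ne']
    unfold ContinuousAt
    rw [h0, tendsto_zero_iff_norm_tendsto_zero]
    simp only [pM_norm hM]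
    simpa using (continuous_norm (E := ℂ)).tendsto 0
  · unfold pM
    have : ((‖w‖ : ℂ)) ^ (M - 1) ≠ 0 := pow_ne_zero _ (by simpa using h)
    fun_prop (disch := assumption)

lemma pM_mul {M : ℕ} (a w : ℂ) (ha : ‖a‖ = 1) : pM M (a * w) = a ^ M * pM M w := by
  simp [pM, ha, mul_pow, mul_div_assoc]

lemma pM_conj (M : ℕ) (w : ℂ) : pM M (conj w) = conj (pM M w) := by
  simp [pM]

lemma pM_eq {M : ℕ} (hM : 0 < M) (w w' : ℂ) : pM M w = pM M w' ↔ ∃ a : ℂ, ‖a‖ = 1 ∧ a ^ M = 1 ∧ a * w = w' := by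
  constructor
  · intro h
    have hn : ‖w‖ = ‖w'‖ := by rw [← pM_norm hM w, h, pM_norm hM]
    by_cases h0 : w = 0
    · refine ⟨1, by simp, by simp, ?_⟩
      subst h0
      have : w' = 0 := by rw [← norm_eq_zero, ← hn]; simp
      simp [this]
    · have h0' : w' ≠ 0 := by rw [← norm_ne_zero_iff, ← hn]; exact norm_ne_zero_iff.2 h0
      refine ⟨w' / w, ?_, ?_, by field_simp⟩
      · rw [norm_div, ← hn, div_self (norm_ne_zero_iff.2 h0)]
      · have hd : ((‖w'‖ : ℂ)) ^ (M - 1) ≠ 0 := pow_ne_zero _ (by simpa using h0')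
        unfold pM at h
        rw [hn, div_left_inj' hd] at h
        rw [div_pow, h, div_self (pow_ne_zero _ h0')]
  · rintro ⟨a, ha, h1, rfl⟩
    rw [pM_mul _ _ ha, h1, one_mul]

lemma pM_surj {M : ℕ} (hM : 0 < M) (z : ℂ) : ∃ w, pM M w = z := by
  by_cases h0 : z = 0
  · exact ⟨0, by simp [pM, hM.ne', h0]⟩
  · obtain ⟨w, hw⟩ := IsAlgClosed.exists_pow_nat_eq (z * (‖z‖ : ℂ) ^ (M - 1)) hM
    have hz : ‖z‖ ≠ 0 := norm_ne_zero_iff.2 h0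
    have hn : ‖w‖ = ‖z‖ := by
      have h1 := congrArg norm hw
      rw [norm_pow, norm_mul, norm_pow, Complex.norm_real, norm_norm] at h1
      obtain ⟨m, rfl⟩ := Nat.exists_eq_succ_of_ne_zero hM.ne'
      simp only [Nat.succ_eq_add_one, Nat.add_sub_cancel] at h1
      rw [← pow_succ'] at h1
      exact (pow_left_inj₀ (norm_nonneg _) (norm_nonneg _) (by omega)).1 h1
    refine ⟨w, ?_⟩
    unfold pM
    rw [hw, hn]
    have : (‖z‖ : ℂ) ≠ 0 := by exact_mod_cast hz
    field_simp

lemma FF_norm (z : ℂ) : ‖FF z‖ = ‖z‖ := by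
  rw [Complex.norm_def, Complex.norm_def]
  simp [FF, Complex.normSq_apply]

lemma FF_cont : Continuous FF := by
  have : FF = fun z : ℂ => (z.re : ℂ) + (|z.im| : ℝ) * Complex.I := by
    ext z
    apply Complex.ext <;> simp [FF]
  rw [this]
  have := Complex.continuous_re
  have := Complex.continuous_im
  fun_prop

lemma FF_eq (z z' : ℂ) : FF z = FF z' ↔ z = z' ∨ z' = conj z := by
  constructor
  · intro h
    have h1 := congrArg Complex.re h
    have h2 := congrArg Complex.im h
    simp only [FF] at h1 h2
    rcases abs_eq_abs.1 h2 with h3 | h3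
    · left; exact Complex.ext h1 h3
    · right; apply Complex.ext <;> simp [h1, h3]
  · rintro (rfl | rfl)
    · rfl
    · simp [FF]

theorem CL (Γ : Subgroup (ℂ ≃ₗᵢ[ℝ] ℂ)) [Finite Γ] : ∃ p : ℂ → ℂ, Continuous p ∧ (∀ w, ‖p w‖ = ‖w‖) ∧
    (∀ w w', p w = p w' ↔ ∃ γ ∈ Γ, γ w = w') ∧
    (Set.range p = Set.univ ∨ ∃ e : ℂ, ‖e‖ = 1 ∧ Set.range p = {w | 0 ≤ inner ℝ e w}) := by
  let R : Subgroup Circle := Γ.comap rotation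
  have hfin : Finite R := by
    refine Finite.of_injective (fun a : R => (⟨rotation a.1, a.2⟩ : Γ)) ?_
    intro a c h
    exact Subtype.ext (rotation_injective (congrArg Subtype.val h))
  set M := Nat.card R with hMdef
  have hM : 0 < M := Nat.card_pos
  have hR : ∀ a : ℂ, (∃ c ∈ R, (c : ℂ) = a) ↔ ‖a‖ = 1 ∧ a ^ M = 1 := by
    have h1 : (fun c : Circle => (c : ℂ)) '' (R : Set Circle) ⊆ (Polynomial.nthRootsFinset M (1 : ℂ) : Set ℂ) := by
      rintro _ ⟨c, hc, rfl⟩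
      simp only [Finset.mem_coe]
      rw [Polynomial.mem_nthRootsFinset hM]
      have : (⟨c, hc⟩ : R) ^ M = 1 := pow_card_eq_one'
      have h2 := congrArg (fun x : R => ((x : Circle) : ℂ)) this
      simpa using h2
    have h2 := Set.eq_of_subset_of_ncard_le h1 (by
      rw [Set.ncard_coe_finset]
      refine le_of_le_of_eq ?_ (Set.ncard_image_of_injective _ Circle.coe_injective).symm
      change _ ≤ Nat.card R
      rw [← hMdef, Polynomial.nthRootsFinset]
      exact (Multiset.toFinset_card_le _).trans (Polynomial.card_nthRoots _ _)) (Finset.finite_toSet _)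
    intro a
    constructor
    · rintro ⟨c, hc, rfl⟩
      refine ⟨Circle.norm_coe c, ?_⟩
      have := h1 ⟨c, hc, rfl⟩
      simp only [Finset.mem_coe] at this
      rwa [Polynomial.mem_nthRootsFinset hM] at this
    · rintro ⟨-, h3⟩
      have : a ∈ (Polynomial.nthRootsFinset M (1 : ℂ) : Set ℂ) := by
        simp only [Finset.mem_coe]
        rw [Polynomial.mem_nthRootsFinset hM]; exact h3
      rw [← h2] at this
      exact this
  have hp : ∀ w w', pM M w = pM M w' ↔ ∃ c ∈ R, (c : ℂ) * w = w' := by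
    intro w w'
    rw [pM_eq hM]
    constructor
    · rintro ⟨a, h1, h2, h3⟩
      obtain ⟨c, hc, rfl⟩ := (hR a).2 ⟨h1, h2⟩
      exact ⟨c, hc, h3⟩
    · rintro ⟨c, hc, h⟩
      obtain ⟨h1, h2⟩ := (hR c).1 ⟨c, hc, rfl⟩
      exact ⟨c, h1, h2, h⟩
  by_cases hrot : ∀ γ ∈ Γ, ∃ a : Circle, γ = rotation a
  · refine ⟨pM M, pM_cont hM, pM_norm hM, ?_, Or.inl (Set.range_eq_univ.2 (pM_surj hM))⟩
    intro w w'
    rw [hp]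
    constructor
    · rintro ⟨c, hc, rfl⟩
      exact ⟨rotation c, hc, rotation_apply c w⟩
    · rintro ⟨γ, hγ, rfl⟩
      obtain ⟨a, rfl⟩ := hrot γ hγ
      exact ⟨a, hγ, (rotation_apply a w).symm⟩
  · push Not at hrot
    obtain ⟨γ0, hγ0, hne⟩ := hrot
    obtain ⟨c, hc⟩ := linear_isometry_complex γ0
    have hc : γ0 = Complex.conjLIE.trans (rotation c) := by
      rcases hc with h | h
      · exact absurd h (hne c)
      · exact h
    have hγ0w : ∀ w, γ0 w = c * conj w := by
      intro w; rw [hc]; simp [rotation_apply]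
    obtain ⟨d, hd⟩ : ∃ d : Circle, d * d = c := by
      refine ⟨Circle.exp (Complex.arg c / 2), ?_⟩
      rw [← Circle.exp_add, add_halves, Circle.exp_arg]
    have hdc : (d : ℂ) * d = c := by rw [← hd]; simp
    have hd0 : (d : ℂ) ≠ 0 := Circle.coe_ne_zero d
    have hdbar : conj (d : ℂ) * d = 1 := by
      rw [mul_comm, Complex.mul_conj, Circle.normSq_coe, Complex.ofReal_one]
    have hnd : ‖conj (d : ℂ)‖ = 1 := by rw [RCLike.norm_conj]; exact Circle.norm_coe d
    refine ⟨fun w => FF (pM M (conj (d : ℂ) * w)), FF_cont.comp ((pM_cont hM).comp (by fun_prop)), ?_, ?_, Or.inr ⟨Complex.I, by simp, ?_⟩⟩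
    · intro w
      rw [FF_norm, pM_norm hM, norm_mul, hnd, one_mul]
    · intro w w'
      rw [FF_eq, ← pM_conj, hp, eq_comm (a := pM M (conj (d : ℂ) * w')), hp]
      constructor
      · rintro (⟨a, ha, h⟩ | ⟨a, ha, h⟩)
        · refine ⟨rotation a, ha, ?_⟩
          rw [rotation_apply]
          have : conj (d : ℂ) * (a * w) = conj (d : ℂ) * w' := by rw [← h]; ring
          calc (a : ℂ) * w = (conj (d : ℂ) * d) * (a * w) := by rw [hdbar, one_mul]
            _ = d * (conj (d : ℂ) * w') := by rw [← this]; ring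
            _ = (conj (d : ℂ) * d) * w' := by ring
            _ = w' := by rw [hdbar, one_mul]
        · refine ⟨rotation a * γ0, Γ.mul_mem ha hγ0, ?_⟩
          rw [LinearIsometryEquiv.coe_mul, Function.comp_apply, rotation_apply, hγ0w, ← hdc]
          rw [map_mul, Complex.conj_conj] at h
          calc (a : ℂ) * (d * d * conj w) = d * (a * (d * conj w)) := by ring
            _ = (conj (d : ℂ) * d) * w' := by rw [h]; ring
            _ = w' := by rw [hdbar, one_mul]
      · rintro ⟨γ, hγ, rfl⟩
        obtain ⟨a, h | h⟩ := linear_isometry_complex γ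
        · left
          refine ⟨a, by rw [h] at hγ; exact hγ, ?_⟩
          rw [h, rotation_apply]; ring
        · right
          have h1 : γ * γ0⁻¹ = rotation (a * c⁻¹) := by
            rw [mul_inv_eq_iff_eq_mul]
            ext w
            rw [LinearIsometryEquiv.coe_mul, Function.comp_apply, rotation_apply, hγ0w, h]
            have hc0 : (c : ℂ) ≠ 0 := Circle.coe_ne_zero c
            simp [rotation_apply]
            field_simp
          refine ⟨a * c⁻¹, ?_, ?_⟩
          · change rotation (a * c⁻¹) ∈ Γ
            rw [← h1]; exact Γ.mul_mem hγ (Γ.inv_mem hγ0)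
          · have : γ w = a * conj w := by rw [h]; simp [rotation_apply]
            rw [this, map_mul, Complex.conj_conj, Circle.coe_mul, Circle.coe_inv, ← hdc]
            have h5 : conj (d : ℂ) = (d : ℂ)⁻¹ := eq_inv_of_mul_eq_one_left hdbar
            rw [h5]; field_simp
    · ext z
      have hin : inner ℝ Complex.I z = z.im := by simp [Complex.inner]
      rw [Set.mem_ofPred_eq, hin]
      constructor
      · rintro ⟨w, rfl⟩
        exact abs_nonneg _
      · intro hz
        obtain ⟨u, hu⟩ := pM_surj hM z
        refine ⟨d * u, ?_⟩
        simp only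
        rw [← mul_assoc, hdbar, one_mul, hu]
        apply Complex.ext <;> simp [FF, abs_of_nonneg hz]
end LC

namespace LC
open List unitInterval PaperTC

lemma hemi_contr {n : ℕ} {e : EE n} (he : ‖e‖ = 1) : ContractibleSpace {x : Sph n | 0 ≤ inner ℝ e (x : EE n)} := by
  rw [contractible_iff_id_nullhomotopic]
  let Z := {x : Sph n | 0 ≤ inner ℝ e (x : EE n)}
  let c : I × Z → EE n := fun q => (1 - (q.1 : ℝ)) • (q.2 : EE n) + (q.1 : ℝ) • e
  have hcin : ∀ q, inner ℝ e (c q) = (1 - (q.1 : ℝ)) * inner ℝ e (q.2 : EE n) + q.1 := by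
    intro q
    simp [c, inner_add_right, inner_smul_right, he]
  have hc0 : ∀ q, c q ≠ 0 := by
    intro q h
    have h1 := hcin q
    rw [h, inner_zero_right] at h1
    have h2 : 0 ≤ (1 - (q.1 : ℝ)) * inner ℝ e (q.2 : EE n) := mul_nonneg (by linarith [q.1.2.2]) q.2.2
    have h3 := q.1.2.1
    have h4 : (q.1 : ℝ) = 0 := by linarith
    simp only [c, h4] at h
    simp at h
    exact Sph_ne _ h
  have hcc : Continuous c := by fun_prop
  have hmem : ∀ q, nrm (c q) ∈ Z := by
    intro q
    change 0 ≤ inner ℝ e (nrm (c q) : EE n)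
    rw [nrm_coe (hc0 q), inner_smul_right, hcin]
    have h2 : 0 ≤ (1 - (q.1 : ℝ)) * inner ℝ e (q.2 : EE n) := mul_nonneg (by linarith [q.1.2.2]) q.2.2
    have h3 := q.1.2.1
    positivity
  refine ⟨⟨⟨e, by simpa using he⟩, by simp⟩, ⟨⟨⟨fun q => ⟨nrm (c q), hmem q⟩, ?_⟩, ?_, ?_⟩⟩⟩
  · exact Continuous.subtype_mk (nrm_cont.comp_continuous hcc hc0) _
  · intro x
    apply Subtype.ext
    apply Subtype.ext
    simp only
    rw [nrm_coe (hc0 _)]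
    simp [c]
  · intro x
    apply Subtype.ext
    apply Subtype.ext
    simp only
    rw [nrm_coe (hc0 _)]
    simp [c, he]

section os
variable {n k : ℕ} {V : Submodule ℝ (EE n)} (b : OrthonormalBasis (Fin (k + 1)) ℝ V)
  {G : Type*} [Group G] {ρ : G →* (EE n ≃ₗᵢ[ℝ] EE n)} (hVfix : ∀ g : G, ∀ v ∈ V, ρ g v = v)

/-- complement part -/
noncomputable def wp (x : EE n) : Vᗮ := ⟨x - iV b (cV b x), sub_perp b x⟩

lemma wp_cont : Continuous (wp b) := by
  have := iV_cont b
  have := cV_cont b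
  unfold wp
  exact Continuous.subtype_mk (by fun_prop) _

lemma split (x : EE n) : iV b (cV b x) + (wp b x : EE n) = x := by simp [wp]

lemma cV_split (v) (w : Vᗮ) : cV b (iV b v + (w : EE n)) = v := by
  rw [cV_add, cV_iV, cV_perp b w.2, add_zero]
lemma wp_split (v) (w : Vᗮ) : wp b (iV b v + (w : EE n)) = w := by
  apply Subtype.ext
  simp only [wp]
  rw [cV_split]; simp

lemma norm_split (v) (w : Vᗮ) : ‖iV b v + (w : EE n)‖ ^ 2 = ‖iV b v‖ ^ 2 + ‖w‖ ^ 2 := by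
  rw [norm_add_sq_real, w.2 _ (iV_mem b v)]; simp

/-- folding map -/
noncomputable def qf (p : Vᗮ → Vᗮ) (x : EE n) : EE n := iV b (cV b x) + (p (wp b x) : EE n)

lemma qf_norm {p : Vᗮ → Vᗮ} (hp : ∀ w, ‖p w‖ = ‖w‖) (x : EE n) : ‖qf b p x‖ = ‖x‖ := by
  rw [← sq_eq_sq₀ (norm_nonneg _) (norm_nonneg _), qf, norm_split, hp, ← norm_split, split]

include b hVfix in
lemma OS {p : Vᗮ → Vᗮ} (hpc : Continuous p) (hp : ∀ w, ‖p w‖ = ‖w‖)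
    (hpe : ∀ w w', p w = p w' ↔ ∃ g, actW hVfix g w = w') :
    (Set.range p = Set.univ → Nonempty (OrbitSpace (sphereAct ρ) ≃ₜ Sph n)) ∧
    (∀ e : Vᗮ, ‖e‖ = 1 → Set.range p = {w | 0 ≤ inner ℝ e w} → ContractibleSpace (OrbitSpace (sphereAct ρ))) := by
  let q : Sph n → Sph n := fun x => ⟨qf b p x, by rw [mem_sphere_zero_iff_norm, qf_norm b hp, Sph_norm]⟩
  have hqc : Continuous q := by
    apply Continuous.subtype_mk
    have h1 := iV_cont b
    have h2 := cV_cont b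
    have h3 := wp_cont b
    unfold qf
    fun_prop
  have hqe : ∀ x y, q x = q y ↔ ∃ g, sphereAct ρ g x = y := by
    intro x y
    constructor
    · intro h
      have h0 : qf b p x = qf b p y := congrArg Subtype.val h
      have h1 := congrArg (cV b) h0
      have h2 := congrArg (wp b) h0
      simp only [qf] at h1 h2
      rw [cV_split, cV_split] at h1
      rw [wp_split, wp_split] at h2
      obtain ⟨g, hg⟩ := (hpe _ _).1 h2
      refine ⟨g, Subtype.ext ?_⟩
      simp only [sphereAct]
      rw [← split b x, map_add, hVfix g _ (iV_mem b _), ← split b (y : EE n), h1, ← hg]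
      rfl
    · rintro ⟨g, rfl⟩
      apply Subtype.ext
      have h1 : ρ g x = iV b (cV b x) + (actW hVfix g (wp b x) : EE n) := by
        conv_lhs => rw [← split b x, map_add, hVfix g _ (iV_mem b _)]
        rfl
      simp only [q, sphereAct, qf]
      rw [h1, cV_split, wp_split, (hpe _ _).2 ⟨g, rfl⟩]
  let q' : OrbitSpace (sphereAct ρ) → Sph n := Quot.lift q fun x y h => (hqe x y).2 h
  have hq' : Continuous q' := continuous_quot_lift _ hqc
  have hqi : Function.Injective q' := by
    rintro ⟨x⟩ ⟨y⟩ h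
    exact Quot.sound ((hqe x y).1 h)
  have hcomp : CompactSpace (Sph n) := isCompact_iff_compactSpace.1 (isCompact_sphere _ _)
  have hemb := (hq'.isClosedEmbedding hqi).isEmbedding
  have hran : Set.range q' = {y : Sph n | wp b y ∈ Set.range p} := by
    ext y
    constructor
    · rintro ⟨⟨x⟩, rfl⟩
      refine ⟨wp b x, ?_⟩
      change _ = wp b (qf b p x)
      rw [qf, wp_split]
    · rintro ⟨w, hw⟩
      have hn : ‖iV b (cV b y) + (w : EE n)‖ = 1 := by
        rw [← Sph_norm y, ← sq_eq_sq₀ (norm_nonneg _) (norm_nonneg _), norm_split, ← hp w, hw, ← norm_split, split]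
      refine ⟨Quot.mk _ ⟨_, mem_sphere_zero_iff_norm.2 hn⟩, Subtype.ext ?_⟩
      change qf b p (iV b (cV b y) + (w : EE n)) = y
      rw [qf, cV_split, wp_split, hw, split]
  constructor
  · intro h
    have h1 : Set.range q' = Set.univ := by
      rw [hran, h]; ext; simp
    exact ⟨hemb.toHomeomorph.trans ((Homeomorph.setCongr h1).trans (Homeomorph.Set.univ _))⟩
  · intro e he h
    have h1 : Set.range q' = {x : Sph n | 0 ≤ inner ℝ (e : EE n) (x : EE n)} := by
      rw [hran, h]
      ext y
      have : inner ℝ (e : EE n) (y : EE n) = inner ℝ e (wp b y) := by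
        rw [← split b (y : EE n), wp_split, inner_add_right, real_inner_comm, e.2 _ (iV_mem b _), zero_add]
        rfl
      rw [Set.mem_ofPred_eq, Set.mem_ofPred_eq, Set.mem_ofPred_eq, this]
    have := hemi_contr (e := (e : EE n)) (by simpa using he)
    exact (hemb.toHomeomorph.trans (Homeomorph.setCongr h1)).contractibleSpace

include b hVfix in
lemma dim1 (hfixV : ∀ x : Sph n, (∀ g : G, sphereAct ρ g x = x) → (x : EE n) ∈ V)
    (hW : Module.finrank ℝ Vᗮ = 1) : ContractibleSpace (OrbitSpace (sphereAct ρ)) := by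
  have : Nontrivial Vᗮ := Module.nontrivial_of_finrank_pos (R := ℝ) (by omega)
  obtain ⟨e, he⟩ := exists_norm_eq (Vᗮ) (zero_le_one (α := ℝ))
  have he0 : e ≠ 0 := by rintro rfl; simp at he
  have hspan : ∀ w : Vᗮ, ∃ c : ℝ, c • e = w := (finrank_eq_one_iff_of_nonzero' e he0).1 hW
  have hact : ∀ g w, ‖actW hVfix g w‖ = ‖w‖ := fun g w => (ρ g).norm_map w
  have hpm : ∀ w w' : Vᗮ, ‖w‖ = ‖w'‖ → w' = w ∨ w' = -w := by
    intro w w' h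
    obtain ⟨c, rfl⟩ := hspan w
    obtain ⟨c', rfl⟩ := hspan w'
    rw [norm_smul, norm_smul, he, mul_one, mul_one, Real.norm_eq_abs, Real.norm_eq_abs, eq_comm, abs_eq_abs] at h
    rcases h with h | h
    · left; rw [h]
    · right; rw [h, neg_smul]
  obtain ⟨g0, hg0⟩ : ∃ g, actW hVfix g e = -e := by
    by_contra hcon
    push Not at hcon
    apply he0
    apply Subtype.ext
    apply fixed_zero hfixV e.2
    intro g
    rcases hpm e (actW hVfix g e) (hact g e).symm with h | h
    · exact congrArg Subtype.val h
    · exact absurd h (hcon g)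
  refine (OS b hVfix (p := fun w => ‖w‖ • e) (by fun_prop) ?_ ?_).2 e he ?_
  · intro w; rw [norm_smul, he]; simp
  · intro w w'
    constructor
    · intro h
      have h1 : ‖w‖ = ‖w'‖ := smul_left_injective ℝ he0 h
      rcases hpm w w' h1 with rfl | rfl
      · refine ⟨1, Subtype.ext ?_⟩; simp [actW]
      · obtain ⟨c, rfl⟩ := hspan w
        exact ⟨g0, by rw [map_smul, hg0, smul_neg]⟩
    · rintro ⟨g, rfl⟩
      simp only [hact]
  · ext w
    rw [Set.mem_ofPred_eq]
    constructor
    · rintro ⟨u, rfl⟩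
      simp only
      rw [inner_smul_right, real_inner_self_eq_norm_sq, he]; simp
    · intro h
      obtain ⟨c, rfl⟩ := hspan w
      rw [inner_smul_right, real_inner_self_eq_norm_sq, he] at h
      refine ⟨c • e, ?_⟩
      simp only
      rw [norm_smul, he, mul_one, Real.norm_eq_abs, abs_of_nonneg (by simpa using h)]

include b hVfix in
lemma dim2 [Finite G] (hW : Module.finrank ℝ Vᗮ = 2) : ContractibleSpace (OrbitSpace (sphereAct ρ)) ∨
    Nonempty (OrbitSpace (sphereAct ρ) ≃ₜ Sph n) := by
  let Φ : Vᗮ ≃ₗᵢ[ℝ] ℂ := ((stdOrthonormalBasis ℝ Vᗮ).reindex (finCongr hW)).repr.trans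
    Complex.orthonormalBasisOneI.repr.symm
  have hact : ∀ g w, ‖actW hVfix g w‖ = ‖w‖ := fun g w => (ρ g).norm_map w
  have hmul : ∀ g h w, actW hVfix (g * h) w = actW hVfix g (actW hVfix h w) := by
    intro g h w; apply Subtype.ext; simp [actW]
  have hone : ∀ w, actW hVfix 1 w = w := by
    intro w; apply Subtype.ext; simp [actW]
  let Γ : Subgroup (ℂ ≃ₗᵢ[ℝ] ℂ) :=
    { carrier := {γ | ∃ g, ∀ w, γ (Φ w) = Φ (actW hVfix g w)}
      mul_mem' := by
        rintro γ γ' ⟨g, hg⟩ ⟨g', hg'⟩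
        exact ⟨g * g', fun w => by rw [LinearIsometryEquiv.coe_mul, Function.comp_apply, hg', hg, hmul]⟩
      one_mem' := ⟨1, fun w => by rw [hone]; rfl⟩
      inv_mem' := by
        rintro γ ⟨g, hg⟩
        refine ⟨g⁻¹, fun w => ?_⟩
        apply γ.injective
        rw [hg, ← hmul, mul_inv_cancel, hone]
        exact γ.apply_symm_apply _ }
  have hfin : Finite Γ := by
    choose F hF using fun γ : Γ => (γ.2 : ∃ g, ∀ w, γ.1 (Φ w) = Φ (actW hVfix g w))
    refine Finite.of_injective F fun γ γ' h => Subtype.ext (LinearIsometryEquiv.ext fun z => ?_)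
    have h1 := hF γ (Φ.symm z)
    have h2 := hF γ' (Φ.symm z)
    rw [← h, ← h1] at h2
    simpa using h2.symm
  obtain ⟨p, hpc, hpn, hpe, hr⟩ := CL Γ
  have hos := OS b hVfix (p := fun w => Φ.symm (p (Φ w))) (by fun_prop) (by intro w; simp [hpn]) (by
    intro w w'
    rw [Φ.symm.injective.eq_iff, hpe]
    constructor
    · rintro ⟨γ, ⟨g, hg⟩, h⟩
      refine ⟨g, Φ.injective ?_⟩
      rw [← hg, h]
    · rintro ⟨g, rfl⟩
      let L : ℂ →ₗᵢ[ℝ] ℂ := ⟨Φ.toLinearEquiv.toLinearMap ∘ₗ actW hVfix g ∘ₗ Φ.symm.toLinearEquiv.toLinearMap, by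
        intro z
        simp [hact]⟩
      refine ⟨L.toLinearIsometryEquiv rfl, ⟨g, fun w => ?_⟩, ?_⟩ <;> simp [L])
  have hran : ∀ w, w ∈ Set.range (fun w => Φ.symm (p (Φ w))) ↔ Φ w ∈ Set.range p := by
    intro w
    constructor
    · rintro ⟨u, rfl⟩; exact ⟨Φ u, by simp⟩
    · rintro ⟨z, hz⟩; exact ⟨Φ.symm z, by simp [hz]⟩
  rcases hr with hr | ⟨e, he, hr⟩
  · right
    apply hos.1
    ext w; rw [hran, hr]; simp
  · left
    apply hos.2 (Φ.symm e) (by simpa using he)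
    ext w
    rw [hran, hr, Set.mem_ofPred_eq, Set.mem_ofPred_eq, ← Φ.inner_map_map, Φ.apply_symm_apply]
end os
end LC

namespace LC
open List unitInterval PaperTC

lemma mkpath {n : ℕ} {A : Set (Sph n)} (y : Sph n × I → EE n) (hy : Continuous y)
    (h0 : ∀ x ∈ A, ∀ t, y (x, t) ≠ 0) :
    ∃ c : Sph n → C(I, Sph n), ContinuousOn c A ∧ ∀ x ∈ A, ∀ t, c x t = nrm (y (x, t)) := by
  classical
  have hc : Continuous fun q : A × I => nrm (y (q.1.1, q.2)) :=
    nrm_cont.comp_continuous (by fun_prop) (fun q => h0 _ q.1.2 _)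
  let F : C(A, C(I, Sph n)) := ContinuousMap.curry ⟨_, hc⟩
  refine ⟨fun x => if h : x ∈ A then F ⟨x, h⟩ else ContinuousMap.const _ x, ?_, ?_⟩
  · rw [continuousOn_iff_continuous_restrict]
    refine F.continuous.congr fun x => ?_
    simp [Set.restrict]
  · intro x hx t
    simp [hx, F]

section ub
variable {n k : ℕ} {V : Submodule ℝ (EE n)}
  {G : Type*} [Group G] {ρ : G →* (EE n ≃ₗᵢ[ℝ] EE n)} (hVfix : ∀ g : G, ∀ v ∈ V, ρ g v = v)

/-- set with motion planner -/
def Gd (ρ : G →* (EE n ≃ₗᵢ[ℝ] EE n)) (O : Set (Sph n × Sph n)) : Prop :=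
  (∀ g₁ g₂ : G, ∀ p, p ∈ O → (sphereAct ρ g₁ p.1, sphereAct ρ g₂ p.2) ∈ O) ∧
      ∃ s₁ s₂ : Sph n × Sph n → C(I, Sph n),
        ContinuousOn s₁ O ∧ ContinuousOn s₂ O ∧
        (∀ p ∈ O, s₁ p 0 = p.1 ∧ s₂ p 1 = p.2 ∧
          PaperTC.orbit (sphereAct ρ) (s₁ p 1) = PaperTC.orbit (sphereAct ρ) (s₂ p 0)) ∧
        (∀ g₁ g₂ : G, ∀ p, p ∈ O → ∀ t : I,
          s₁ (sphereAct ρ g₁ p.1, sphereAct ρ g₂ p.2) t = sphereAct ρ g₁ (s₁ p t) ∧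
          s₂ (sphereAct ρ g₁ p.1, sphereAct ρ g₂ p.2) t = sphereAct ρ g₂ (s₂ p t))

/-- equivariant contraction to N -/
structure Ct (ρ : G →* (EE n ≃ₗᵢ[ℝ] EE n)) (A : Set (Sph n)) (N : Sph n) (c : Sph n → C(I, Sph n)) : Prop where
  op : IsOpen A
  inv : ∀ g : G, ∀ x ∈ A, sphereAct ρ g x ∈ A
  ct : ContinuousOn c A
  c0 : ∀ x ∈ A, c x 0 = x
  c1 : ∀ x ∈ A, c x 1 = N
  eq : ∀ g : G, ∀ x ∈ A, ∀ t, c (sphereAct ρ g x) t = sphereAct ρ g (c x t)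

include hVfix in
lemma Ct_of {A : Set (Sph n)} (hA : IsOpen A) (hi : ∀ g : G, ∀ x ∈ A, sphereAct ρ g x ∈ A) (N : Sph n)
    {u : ℝ → EE n} (huc : Continuous u) (huV : ∀ t, u t ∈ V) (u0 : u 0 = 0) (u1 : u 1 = N)
    (h0 : ∀ x ∈ A, ∀ t : I, (1 - (t : ℝ)) • (x : EE n) + u t ≠ 0) : ∃ c, Ct ρ A N c := by
  obtain ⟨c, hc, hce⟩ := mkpath (A := A) (fun q => (1 - (q.2 : ℝ)) • (q.1 : EE n) + u q.2) (by fun_prop) h0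
  refine ⟨c, hA, hi, hc, ?_, ?_, ?_⟩
  · intro x hx
    rw [hce x hx]
    apply Subtype.ext
    rw [nrm_coe (h0 x hx 0)]
    simp [u0]
  · intro x hx
    rw [hce x hx]
    apply Subtype.ext
    rw [nrm_coe (h0 x hx 1)]
    simp [u1]
  · intro g x hx t
    rw [hce x hx, hce _ (hi g x hx)]
    apply Subtype.ext
    rw [nrm_coe (h0 _ (hi g x hx) t)]
    simp only [sphereAct]
    rw [nrm_coe (h0 _ hx t), map_smul]
    have : (1 - (t : ℝ)) • ρ g (x : EE n) + u t = ρ g ((1 - (t : ℝ)) • (x : EE n) + u t) := by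
      rw [map_add, map_smul, hVfix g _ (huV t)]
    rw [this, (ρ g).norm_map]

/-- reversal -/
noncomputable def rv (γ : C(I, Sph n)) : C(I, Sph n) := γ.comp ⟨σ, continuous_symm⟩

lemma rv_cont : Continuous (rv : C(I, Sph n) → C(I, Sph n)) := ContinuousMap.continuous_precomp _

lemma cover3 {A B : Set (Sph n)} {N : Sph n} {c d : Sph n → C(I, Sph n)} (hA : Ct ρ A N c) (hB : Ct ρ B N d)
    {δ : Sph n → ℝ} (hδ : Continuous δ) (hδi : ∀ (g : G) x, δ (sphereAct ρ g x) = δ x)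
    (hAδ : ∀ x, x ∈ A ↔ 0 < δ x) (hBδ : ∀ x, x ∉ A → x ∈ B ∧ δ x = 0) (hδ0 : ∀ x, 0 ≤ δ x) :
    invTCcover (sphereAct ρ) 3 := by
  classical
  let O0 : Set (Sph n × Sph n) := A ×ˢ A
  let O2 : Set (Sph n × Sph n) := B ×ˢ B
  let Q1 : Set (Sph n × Sph n) := {p | p ∈ A ×ˢ B ∧ δ p.2 < δ p.1}
  let Q2 : Set (Sph n × Sph n) := {p | p ∈ B ×ˢ A ∧ δ p.1 < δ p.2}
  have oQ1 : IsOpen Q1 := (hA.op.prod hB.op).inter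
    (isOpen_lt (hδ.comp continuous_snd) (hδ.comp continuous_fst))
  have oQ2 : IsOpen Q2 := (hB.op.prod hA.op).inter
    (isOpen_lt (hδ.comp continuous_fst) (hδ.comp continuous_snd))
  have cf : ∀ {A : Set (Sph n)} {c} {O : Set (Sph n × Sph n)}, Ct ρ A N c → (∀ p ∈ O, p.1 ∈ A) →
      ContinuousOn (fun p : Sph n × Sph n => c p.1) O := fun h hO =>
    h.ct.comp continuousOn_fst hO
  have cs : ∀ {A : Set (Sph n)} {c} {O : Set (Sph n × Sph n)}, Ct ρ A N c → (∀ p ∈ O, p.2 ∈ A) →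
      ContinuousOn (fun p : Sph n × Sph n => rv (c p.2)) O := fun h hO =>
    rv_cont.comp_continuousOn (h.ct.comp continuousOn_snd hO)
  have r1 : ∀ γ : C(I, Sph n), rv γ 1 = γ 0 := fun γ => by simp [rv]
  have r0 : ∀ γ : C(I, Sph n), rv γ 0 = γ 1 := fun γ => by simp [rv]
  have rt : ∀ (γ : C(I, Sph n)) t, rv γ t = γ (σ t) := fun γ t => rfl
  have gp : ∀ {A : Set (Sph n)} {c}, Ct ρ A N c → Gd ρ (A ×ˢ A) := by
    intro A c h
    refine ⟨fun g1 g2 p hp => ⟨h.inv _ _ hp.1, h.inv _ _ hp.2⟩, fun p => c p.1, fun p => rv (c p.2),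
      cf h fun p hp => hp.1, cs h fun p hp => hp.2, fun p hp => ⟨h.c0 _ hp.1, ?_, ?_⟩, fun g1 g2 p hp t => ⟨?_, ?_⟩⟩
    · rw [r1, h.c0 _ hp.2]
    · rw [r0, h.c1 _ hp.1, h.c1 _ hp.2]
    · exact h.eq _ _ hp.1 t
    · rw [rt, rt]; exact h.eq _ _ hp.2 _
  have g1' : Gd ρ (Q1 ∪ Q2) := by
    have hinv : ∀ g₁ g₂ : G, ∀ p, p ∈ Q1 ∪ Q2 → (sphereAct ρ g₁ p.1, sphereAct ρ g₂ p.2) ∈ Q1 ∪ Q2 := by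
      rintro g1 g2 p (⟨⟨h1, h2⟩, h3⟩ | ⟨⟨h1, h2⟩, h3⟩)
      · left; exact ⟨⟨hA.inv _ _ h1, hB.inv _ _ h2⟩, by simpa [hδi] using h3⟩
      · right; exact ⟨⟨hB.inv _ _ h1, hA.inv _ _ h2⟩, by simpa [hδi] using h3⟩
    refine ⟨hinv, fun p => if δ p.2 < δ p.1 then c p.1 else d p.1, fun p => if δ p.2 < δ p.1 then rv (d p.2) else rv (c p.2), ?_, ?_, ?_, ?_⟩
    · refine ContinuousOn.union_of_isOpen ?_ ?_ oQ1 oQ2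
      · exact (cf hA fun p hp => hp.1.1).congr fun p hp => if_pos hp.2
      · exact (cf hB fun p hp => hp.1.1).congr fun p hp => if_neg hp.2.not_gt
    · refine ContinuousOn.union_of_isOpen ?_ ?_ oQ1 oQ2
      · exact (cs hB fun p hp => hp.1.2).congr fun p hp => if_pos hp.2
      · exact (cs hA fun p hp => hp.1.2).congr fun p hp => if_neg hp.2.not_gt
    · rintro p (⟨⟨h1, h2⟩, h3⟩ | ⟨⟨h1, h2⟩, h3⟩)
      · simp only [if_pos h3]
        rw [r1, r0, hA.c0 _ h1, hB.c0 _ h2, hA.c1 _ h1, hB.c1 _ h2]; simp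
      · simp only [if_neg h3.not_gt]
        rw [r1, r0, hB.c0 _ h1, hA.c0 _ h2, hB.c1 _ h1, hA.c1 _ h2]; simp
    · rintro g1 g2 p (⟨⟨h1, h2⟩, h3⟩ | ⟨⟨h1, h2⟩, h3⟩) t
      · simp only [hδi, if_pos h3]
        exact ⟨hA.eq _ _ h1 t, hB.eq _ _ h2 _⟩
      · simp only [hδi, if_neg h3.not_gt]
        exact ⟨hB.eq _ _ h1 t, hA.eq _ _ h2 _⟩
  refine ⟨![O0, Q1 ∪ Q2, O2], ?_, ?_, ?_⟩
  · intro i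
    fin_cases i
    · exact hA.op.prod hA.op
    · exact oQ1.union oQ2
    · exact hB.op.prod hB.op
  · rw [Set.eq_univ_iff_forall]
    intro p
    rw [Set.mem_iUnion]
    by_cases h1 : p.1 ∈ A <;> by_cases h2 : p.2 ∈ A
    · exact ⟨0, h1, h2⟩
    · refine ⟨1, Or.inl ⟨⟨h1, (hBδ _ h2).1⟩, ?_⟩⟩
      rw [(hBδ _ h2).2]; exact (hAδ _).1 h1
    · refine ⟨1, Or.inr ⟨⟨(hBδ _ h1).1, h2⟩, ?_⟩⟩
      rw [(hBδ _ h1).2]; exact (hAδ _).1 h2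
    · exact ⟨2, (hBδ _ h1).1, (hBδ _ h2).1⟩
  · intro i
    fin_cases i
    · exact gp hA
    · exact g1'
    · exact gp hB

include hVfix in
lemma upper (hV : 2 ≤ Module.finrank ℝ V) : invTCcover (sphereAct ρ) 3 := by
  let b := stdOrthonormalBasis ℝ V
  obtain ⟨i, j, hij⟩ : ∃ i j : Fin (Module.finrank ℝ V), i ≠ j := by
    refine ⟨⟨0, by omega⟩, ⟨1, by omega⟩, by simp [Fin.ext_iff]⟩
  obtain ⟨N, hN⟩ : ∃ N : EE n, N = b i := ⟨_, rfl⟩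
  obtain ⟨P, hP⟩ : ∃ P : EE n, P = b j := ⟨_, rfl⟩
  have hNV : N ∈ V := by rw [hN]; exact (b i).2
  have hPV : P ∈ V := by rw [hP]; exact (b j).2
  have hNn : ‖N‖ = 1 := by rw [hN]; exact b.orthonormal.1 i
  have hPn : ‖P‖ = 1 := by rw [hP]; exact b.orthonormal.1 j
  have hNP : inner ℝ P N = 0 := by rw [hN, hP]; exact b.orthonormal.2 hij.symm
  have hPP : inner ℝ P P = (1 : ℝ) := by rw [real_inner_self_eq_norm_sq, hPn]; norm_num
  let N' : Sph n := ⟨N, by simpa using hNn⟩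
  have inn : ∀ (g : G) (x : EE n) v, v ∈ V → inner ℝ v (ρ g x) = inner ℝ v x := by
    intro g x v hv
    conv_lhs => rw [← hVfix g v hv]
    exact (ρ g).inner_map_map _ _
  have hδi : ∀ (g : G) (x : Sph n), ‖(sphereAct ρ g x : EE n) + N‖ = ‖(x : EE n) + N‖ := by
    intro g x
    have : (sphereAct ρ g x : EE n) + N = ρ g ((x : EE n) + N) := by
      rw [map_add, hVfix g N hNV]; rfl
    rw [this, (ρ g).norm_map]
  have hδc : Continuous fun x : Sph n => ‖(x : EE n) + N‖ := by fun_prop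
  obtain ⟨c, hc⟩ := Ct_of hVfix (A := {x : Sph n | 0 < ‖(x : EE n) + N‖}) (isOpen_lt continuous_const hδc)
    (fun g x hx => by rw [Set.mem_ofPred_eq, hδi]; exact hx) N' (u := fun t => t • N) (by fun_prop)
    (fun t => V.smul_mem _ hNV) (by simp) (by simp [N']) (by
      intro x hx t h
      rw [add_eq_zero_iff_eq_neg] at h
      have h1 := congrArg norm h
      rw [norm_neg, norm_smul, norm_smul, Sph_norm, hNn, Real.norm_eq_abs, Real.norm_eq_abs,
        abs_of_nonneg t.2.1, abs_of_nonneg (by linarith [t.2.2])] at h1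
      have h2 : (t : ℝ) = 1 / 2 := by linarith
      rw [h2, ← smul_neg] at h
      have h3 : (x : EE n) = -N := by
        have := congrArg (fun y => (2 : ℝ) • y) h
        simp only [smul_smul] at this
        norm_num at this
        exact this
      rw [Set.mem_ofPred_eq, h3] at hx
      simp at hx)
  obtain ⟨d, hd⟩ := Ct_of hVfix (A := {x : Sph n | -(1 / 2) < inner ℝ P (x : EE n)})
    (isOpen_lt continuous_const (by fun_prop))
    (fun g x hx => by rw [Set.mem_ofPred_eq]; simp only [sphereAct]; rw [inn g _ P hPV]; exact hx) N'
    (u := fun t => t • N + (2 * t * (1 - t)) • P) (by fun_prop)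
    (fun t => V.add_mem (V.smul_mem _ hNV) (V.smul_mem _ hPV)) (by simp) (by simp [N']) (by
      intro x hx t h
      rw [Set.mem_ofPred_eq] at hx
      have t0 := t.2.1
      have t1 := t.2.2
      set s : ℝ := (t : ℝ)
      have h1 := congrArg (inner ℝ P) h
      simp only [inner_add_right, inner_smul_right, hNP, hPP, inner_zero_right] at h1
      have h2 : s ≠ 1 := by
        intro h2
        rw [h2] at h
        simp at h
        rw [h] at hNn; simp at hNn
      have h3 : (1 - s) * (inner ℝ P (x : EE n) + 2 * s) = 0 := by linarith
      have h4 : inner ℝ P (x : EE n) + 2 * s = 0 := by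
        rcases mul_eq_zero.1 h3 with h | h
        · exact absurd (by linarith) h2
        · exact h
      have h5 : s < 1 / 4 := by linarith
      rw [add_eq_zero_iff_eq_neg] at h
      have h6 := congrArg norm h
      have h7 := norm_add_le (s • N) ((2 * s * (1 - s)) • P)
      rw [norm_neg, norm_smul, Sph_norm, Real.norm_eq_abs, abs_of_nonneg (by linarith : (0:ℝ) ≤ 1 - s)] at h6
      rw [norm_smul, norm_smul, hNn, hPn, Real.norm_eq_abs, Real.norm_eq_abs, abs_of_nonneg t0,
        abs_of_nonneg (mul_nonneg (by linarith) (by linarith))] at h7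
      nlinarith)
  refine cover3 hc hd hδc hδi (fun x => Iff.rfl) ?_ (fun x => norm_nonneg _)
  intro x hx
  rw [Set.mem_ofPred_eq, not_lt] at hx
  have h0 : ‖(x : EE n) + N‖ = 0 := le_antisymm hx (norm_nonneg _)
  refine ⟨?_, h0⟩
  have h1 : (x : EE n) = -N := by
    rw [norm_eq_zero] at h0
    exact eq_neg_of_add_eq_zero_left h0
  rw [Set.mem_ofPred_eq, h1, inner_neg_right, hNP]
  norm_num
end ub
end LC

/-- Let a finite group `G` act linearly on a `G`-connected sphere `S^n`
whose fixed point set is the great `k`-sphere obtained by intersecting `S^n` with a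
pointwise-fixed linear subspace `V` of dimension `k + 1`, where `0 < k < n`.  If the orbit
space `S^n/G` is neither contractible nor homotopy equivalent to an odd-dimensional
sphere, then `TC^G(S^n) = 3`. -/
theorem invTC_linear_sphere_eq_three_of_orbit_space {G : Type*} [Group G] [Finite G]
    (n k : ℕ) (hk : 0 < k) (hkn : k < n)
    (ρ : G →* (EuclideanSpace ℝ (Fin (n + 1)) ≃ₗᵢ[ℝ] EuclideanSpace ℝ (Fin (n + 1))))
    (hconn : ∀ H : Subgroup G, IsPathConnected (fixedSetOf (sphereAct ρ) (H : Set G)))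
    (V : Submodule ℝ (EuclideanSpace ℝ (Fin (n + 1))))
    (hV : Module.finrank ℝ V = k + 1)
    (hVfix : ∀ g : G, ∀ v ∈ V, ρ g v = v)
    (hfixV : ∀ x : ↥(Sph n),
      (∀ g : G, sphereAct ρ g x = x) ↔ (x : EuclideanSpace ℝ (Fin (n + 1))) ∈ V)
    (hnc : ¬ ContractibleSpace (OrbitSpace (sphereAct ρ)))
    (hns : ¬ ∃ m : ℕ, Odd m ∧
      Nonempty (ContinuousMap.HomotopyEquiv (OrbitSpace (sphereAct ρ)) ↥(Sph m))) :
    invTC (sphereAct ρ) = 3 := by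
  have hfix2 : ∀ x : Sph n, (∀ g, sphereAct ρ g x = x) → (x : EuclideanSpace ℝ (Fin (n + 1))) ∈ V :=
    fun x => (hfixV x).1
  have hsum := Submodule.finrank_add_finrank_orthogonal V
  rw [hV, finrank_euclideanSpace_fin] at hsum
  have h2 : ¬ invTCcover (sphereAct ρ) 2 := by
    intro h
    have b : OrthonormalBasis (Fin (k+1)) ℝ V := (stdOrthonormalBasis ℝ V).reindex (finCongr hV)
    rcases Nat.lt_or_ge (Module.finrank ℝ Vᗮ) 3 with hl | hl
    · have h12 : Module.finrank ℝ Vᗮ = 1 ∨ Module.finrank ℝ Vᗮ = 2 := by omega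
      rcases h12 with h1 | h1
      · exact hnc (LC.dim1 b hVfix hfix2 h1)
      · rcases LC.dim2 b hVfix h1 with hc | he
        · exact hnc hc
        · obtain ⟨e⟩ := he
          have ho := LC.odd_two hVfix hfix2 hk hV (by rw [h1]; norm_num) h
          refine hns ⟨n, ?_, ⟨e.toHomotopyEquiv⟩⟩
          have : n = k + 2 := by omega
          rw [this]
          exact ho.add_even even_two
    · exact LC.no_two hVfix hfix2 hk hV hl h
  have h1 : ¬ invTCcover (sphereAct ρ) 1 := by
    rintro ⟨U, hU, hc, hs⟩
    refine h2 ⟨fun _ => U 0, fun _ => hU 0, ?_, fun _ => hs 0⟩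
    rw [← hc]
    ext x
    simp
  have h3 : invTCcover (sphereAct ρ) 3 := LC.upper hVfix (by rw [hV]; omega)
  unfold invTC minCover
  apply le_antisymm
  · exact sInf_le ⟨3, by norm_num, by norm_num, h3⟩
  · refine le_sInf ?_
    rintro _ ⟨m, rfl, hm, hP⟩
    have : m ≠ 1 := by rintro rfl; exact h1 hP
    have : m ≠ 2 := by rintro rfl; exact h2 hP
    have : 3 ≤ m := by omega
    exact_mod_cast this
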